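/- Let k, l ≥ 2 be integers with gcd(k,l) = 1, let H ≤ SU(kl) be the image of the injective Kronecker homomorphism SU(k) × SU(l) → SU(kl), and let Gr_{k,l} := SU(kl) ⧸ H be the coset space with the quotient topology (the matrix Grassmannian). Then for every integer d with 1 ≤ d < 2·min(k,l), the d-th homotopy group of Gr_{k,l} (based at the identity coset) is: isomorphic to ℤ if d is even and d ≥ 4, and trivial if d is odd or d = 2. (This is the paper's claim that in the stable range Gr_{k,l} has the homotopy groups of BSU; in particular π_{2n}(Gr_{k,l}) ≅ ℤ for 2 ≤ n < min(k,l), whose generator classifies the pair (ξ_k, η_l) corresponding to the generating virtual SU-bundle ξ^{(n)} over S^{2n}.) -/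

import Mathlib

/-!
The matrix Grassmannian is studied through the exact sequence of homotopy groups of
`SU(k) × SU(l) → SU(kl) → SU(kl) ⧸ H`.  In the range `d < 2 min(k, l)` the groups `π_d(SU(n))`, for
`n = k, l, kl`, are `ℤ` for odd `d ≥ 3` and trivial for even `d` and for `d = 1`, with generators
compatible under stabilization.  As `A ⊗ 1` and `1 ⊗ B` are block sums of `l` copies of `A` and of
`k` copies of `B`, the Kronecker homomorphism acts on `π_d`, `d ≥ 3` odd, as `(x, y) ↦ l x + k y`
(`kron_pow`).  For coprime `k` and `l` this map is onto `ℤ`, which kills the odd homotopy groups of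
the quotient (`gr_odd`), and its kernel is infinite cyclic, generated by `(k, -l)`, which is the
homotopy group of the quotient one degree higher (`gr_even`).

The homotopy groups of the special unitary groups are computed in three steps, and a fourth makes the exact sequence available.  Homotopy classes of
maps of cubes are taken relative to the boundary (`Htpy`, `Rel`, `Null`), in the general linear
groups `GLm ι` over arbitrary finite index types, and up to enlarging the matrices by an identity
block (`SEq`, `SN`).

* Bott periodicity, in the elementary form of Atiyah and Bott.  A map `h` on `B` extends to a path
  `F` of matrices from `1` to a block diagonal matrix `h ⊕ h'` (`EP`), and the Bott map sends it to
  the commutator `bet F = F ζ F⁻¹ ζ⁻¹` with the diagonal loop `ζ = (z, 1)` on the double suspension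
  of `B`.  Matrix functions on `Y × S¹` are approximated by Laurent polynomials (`approx`), and to a
  matrix polynomial which is invertible on the circle belongs an idempotent matrix `Pm` depending
  continuously on it, obtained from the negative part of Fourier series.  A null-homotopy of `bet F`
  thus becomes a homotopy of idempotents, whence `h` is stably null (`sn_of_bet_null`).  Conversely,
  matrix polynomials are reduced to pencils `1 - A + z A` by the companion trick, and these to
  idempotents by `lin_deform`, so that every loop is stably in the image of the Bott map
  (`bott_surj`).  Hence the stable homotopy is periodic of period two (`zs_even`, `gs_odd`), starting
  from the connectedness of the general linear group and the winding number.
* Stability.  A map of a space of dimension at most `2n` into the nonzero vectors of `ℂ^(n+1)` is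
  null-homotopic by general position (`sphere_null`), so the last column of a matrix function can be
  deformed to the last basis vector.  This compares stable and unstable classes (`SN.null`,
  `stab_surj`, `SEq.htpy`) and gives `GL_even`, `GL_odd` and `GL_one`.
* The polar decomposition, followed by a correction of the determinant, retracts the general linear
  group onto `SU(n)` (`su_retract`), which gives `su_even` and `su_odd`.
* The homotopy lifting property of `SU(kl) → SU(kl) ⧸ H` (`gr_lift`) replaces the local triviality of
  this principal bundle.  For `g` close to `H` the function `h ↦ Re tr (g⁻¹ h)` has a unique maximizer
  on `H`, because it is strictly concave near its maximum along products of square roots; the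
  maximizer is an equivariant local retraction onto `H`, by which nearby cosets are moved to one
  another (`coset_lift`).  The parts of the long exact sequence that are used are `gr_trivial` and
  `gr_cyclic`; in the latter the group structure of the homotopy group is compared with pointwise
  multiplication in `SU(kl)` (`loop_mul`).
-/

open scoped Kronecker Topology

/-- The special unitary group `SU(n)`: the subgroup of the unitary group `U(n)` of
`n×n` complex matrices consisting of the matrices of determinant `1`. -/
noncomputable def SU (n : ℕ) : Subgroup (Matrix.unitaryGroup (Fin n) ℂ) :=
  MonoidHom.ker (Matrix.detMonoidHom.comp (Matrix.unitaryGroup (Fin n) ℂ).subtype)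

/-- The underlying matrix of an element of `SU(n)`. -/
def SU.toMat {n : ℕ} (x : SU n) : Matrix (Fin n) (Fin n) ℂ :=
  ((x : Matrix.unitaryGroup (Fin n) ℂ) : Matrix (Fin n) (Fin n) ℂ)

/-- The Kronecker product of a `k×k` matrix and an `l×l` matrix, viewed as a
`(kl)×(kl)` matrix via the fixed bijection `finProdFinEquiv : Fin k × Fin l ≃ Fin (k*l)`. -/
noncomputable def kron {k l : ℕ} (A : Matrix (Fin k) (Fin k) ℂ)
    (B : Matrix (Fin l) (Fin l) ℂ) : Matrix (Fin (k * l)) (Fin (k * l)) ℂ :=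
  Matrix.reindex finProdFinEquiv finProdFinEquiv (A ⊗ₖ B)

namespace MG

set_option linter.all false

open unitInterval
open scoped Matrix

section

/-! ### Relative homotopies of maps into topological groups -/

section Htpy

variable {Y Y' X X' : Type*} [TopologicalSpace Y'] [TopologicalSpace X'] [TopologicalSpace Y]
  [TopologicalSpace X]

/-- `Htpy Y0 f g`: the maps `f` and `g` are homotopic relative to the subset `Y0`. -/
def Htpy (Y0 : Set Y) (f g : Y → X) : Prop :=
  ∃ H : I × Y → X, Continuous H ∧ (∀ y, H (0, y) = f y) ∧ (∀ y, H (1, y) = g y) ∧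
    ∀ t, ∀ y ∈ Y0, H (t, y) = f y

theorem Htpy.cont_left {Y0 : Set Y} {f g : Y → X} (h : Htpy Y0 f g) : Continuous f := by
  obtain ⟨H, hH, h0, -, -⟩ := h
  have : f = fun y => H (0, y) := by ext y; rw [h0]
  rw [this]; fun_prop

theorem Htpy.cont_right {Y0 : Set Y} {f g : Y → X} (h : Htpy Y0 f g) : Continuous g := by
  obtain ⟨H, hH, -, h1, -⟩ := h
  have : g = fun y => H (1, y) := by ext y; rw [h1]
  rw [this]; fun_prop

theorem Htpy.refl {Y0 : Set Y} {f : Y → X} (h : Continuous f) : Htpy Y0 f f :=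
  ⟨fun p => f p.2, by fun_prop, by simp, by simp, by simp⟩

theorem Htpy.of_eq {Y0 : Set Y} {f g : Y → X} (h : Continuous f) (e : f = g) : Htpy Y0 f g :=
  e ▸ Htpy.refl h

theorem Htpy.eqOn {Y0 : Set Y} {f g : Y → X} (h : Htpy Y0 f g) : ∀ y ∈ Y0, g y = f y := by
  obtain ⟨H, hH, h0, h1, h2⟩ := h
  intro y hy
  rw [← h1, h2 1 y hy]

theorem htpy_iff {Y0 : Set Y} (f g : C(Y, X)) :
    Htpy Y0 f g ↔ ContinuousMap.HomotopicRel f g Y0 := by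
  constructor
  · rintro ⟨H, hH, h0, h1, h2⟩
    exact ⟨{ toFun := H, continuous_toFun := hH, map_zero_left := h0, map_one_left := h1,
             prop' := fun t y hy => h2 t y hy }⟩
  · rintro ⟨H⟩
    exact ⟨H, H.continuous, fun y => by simp, fun y => by simp, fun t y hy => H.prop' t y hy⟩

theorem Htpy.symm {Y0 : Set Y} {f g : Y → X} (h : Htpy Y0 f g) : Htpy Y0 g f :=
  (htpy_iff ⟨g, h.cont_right⟩ ⟨f, h.cont_left⟩).2
    ((htpy_iff ⟨f, h.cont_left⟩ ⟨g, h.cont_right⟩).1 h).symm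

theorem Htpy.trans {Y0 : Set Y} {f g k : Y → X} (h : Htpy Y0 f g) (h' : Htpy Y0 g k) :
    Htpy Y0 f k :=
  (htpy_iff ⟨f, h.cont_left⟩ ⟨k, h'.cont_right⟩).2
    (((htpy_iff ⟨f, h.cont_left⟩ ⟨g, h.cont_right⟩).1 h).trans
      ((htpy_iff ⟨g, h.cont_right⟩ ⟨k, h'.cont_right⟩).1 h'))

theorem Htpy.comp_left {Y0 : Set Y} {f g : Y → X} (h : Htpy Y0 f g) {φ : X → X'}
    (hφ : Continuous φ) : Htpy Y0 (fun y => φ (f y)) (fun y => φ (g y)) := by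
  obtain ⟨H, hH, h0, h1, h2⟩ := h
  exact ⟨fun p => φ (H p), by fun_prop, by simp [h0], by simp [h1],
    fun t y hy => by simp [h2 t y hy]⟩

theorem Htpy.comp_right {Y0 : Set Y} {f g : Y → X} (h : Htpy Y0 f g) {ψ : Y' → Y}
    (hψ : Continuous ψ) {Y0' : Set Y'} (hm : ∀ y ∈ Y0', ψ y ∈ Y0) :
    Htpy Y0' (fun y => f (ψ y)) (fun y => g (ψ y)) := by
  obtain ⟨H, hH, h0, h1, h2⟩ := h
  exact ⟨fun p => H (p.1, ψ p.2), by fun_prop, by simp [h0], by simp [h1],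
    fun t y hy => by simp [h2 t _ (hm y hy)]⟩

theorem Htpy.mono {Y0 Y1 : Set Y} {f g : Y → X} (h : Htpy Y0 f g) (hs : Y1 ⊆ Y0) :
    Htpy Y1 f g := h.comp_right (ψ := id) continuous_id hs

variable {G : Type*} [TopologicalSpace G] [Group G] [IsTopologicalGroup G]

theorem Htpy.mul {Y0 : Set Y} {f g f' g' : Y → G} (h : Htpy Y0 f g) (h' : Htpy Y0 f' g') :
    Htpy Y0 (fun y => f y * f' y) (fun y => g y * g' y) := by
  obtain ⟨H, hH, h0, h1, h2⟩ := h
  obtain ⟨H', hH', h0', h1', h2'⟩ := h'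
  exact ⟨fun p => H p * H' p, by fun_prop, by simp [h0, h0'], by simp [h1, h1'],
    fun t y hy => by simp [h2 t y hy, h2' t y hy]⟩

theorem Htpy.inv {Y0 : Set Y} {f g : Y → G} (h : Htpy Y0 f g) :
    Htpy Y0 (fun y => (f y)⁻¹) (fun y => (g y)⁻¹) := h.comp_left continuous_inv

/-- `f` is null-homotopic relative to `Y0` (in particular it is `1` on `Y0`). -/
abbrev Null (Y0 : Set Y) (f : Y → G) : Prop := Htpy Y0 f (fun _ => 1)

theorem null_one {Y0 : Set Y} : Null Y0 (fun _ : Y => (1 : G)) := Htpy.refl continuous_const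

theorem Null.eq_one {Y0 : Set Y} {f : Y → G} (h : Null Y0 f) : ∀ y ∈ Y0, f y = 1 :=
  fun y hy => (h.eqOn y hy).symm

theorem Null.mul {Y0 : Set Y} {f g : Y → G} (h : Null Y0 f) (h' : Null Y0 g) :
    Null Y0 (fun y => f y * g y) := by simpa using Htpy.mul h h'

theorem Null.inv {Y0 : Set Y} {f : Y → G} (h : Null Y0 f) :
    Null Y0 (fun y => (f y)⁻¹) := by simpa using Htpy.inv h

/-- Homotopy is detected by the null-homotopy of a quotient. -/
theorem htpy_of_null {Y0 : Set Y} {f g : Y → G} (hf : Continuous f)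
    (h : Null Y0 (fun y => (f y)⁻¹ * g y)) : Htpy Y0 f g := by
  have := (Htpy.refl (Y0 := Y0) hf).mul h.symm
  simpa using this

theorem null_of_htpy {Y0 : Set Y} {f g : Y → G} (h : Htpy Y0 f g) :
    Null Y0 (fun y => (f y)⁻¹ * g y) := by
  have h3 := (Htpy.refl (Y0 := Y0) h.cont_left).inv.mul h
  simpa using h3.symm

theorem Htpy.pow {Y0 : Set Y} {f g : Y → G} (h : Htpy Y0 f g) (n : ℕ) :
    Htpy Y0 (fun y => f y ^ n) (fun y => g y ^ n) :=
  h.comp_left (φ := fun x => x ^ n) (by fun_prop)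

theorem Htpy.zpow {Y0 : Set Y} {f g : Y → G} (h : Htpy Y0 f g) (n : ℤ) :
    Htpy Y0 (fun y => f y ^ n) (fun y => g y ^ n) :=
  h.comp_left (φ := fun x => x ^ n) (continuous_zpow n)

/-- Conjugating a relative map by a constant in the path component of `1` does not change its
homotopy class. -/
theorem htpy_conj {Y0 : Set Y} {f : Y → G} (hf : Continuous f) (h1 : ∀ y ∈ Y0, f y = 1)
    {c : G} (hc : Joined 1 c) : Htpy Y0 f (fun y => c * f y * c⁻¹) := by
  obtain ⟨γ⟩ := hc
  exact ⟨fun p => γ p.1 * f p.2 * (γ p.1)⁻¹, by fun_prop, by simp, by simp,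
    fun t y hy => by simp [h1 y hy]⟩

end Htpy

/-! ### Boundaries of products -/

/-- The boundary of `Y × I` relative to a boundary `Y0` of `Y`. -/
def IBd {Y : Type*} (Y0 : Set Y) : Set (Y × I) := {p | p.1 ∈ Y0 ∨ p.2 = 0 ∨ p.2 = 1}

/-- The subset `Y0 × S¹ ∪ Y × {1}` of `Y × S¹`. -/
def LBd {Y : Type*} (Y0 : Set Y) : Set (Y × Circle) := {p | p.1 ∈ Y0 ∨ p.2 = 1}

section Comm
variable {B : Type*} [TopologicalSpace B]
variable {G : Type*} [TopologicalSpace G] [Group G] [IsTopologicalGroup G]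

/-- On `B × I`, conjugation by a map which is `1` on `B × {0}` acts trivially on homotopy
classes: contract the conjugating map along the interval. -/
theorem htpy_conj_I {B0 : Set (B × I)} {f g : B × I → G} (hf : Continuous f)
    (hf0 : ∀ b, f (b, 0) = 1) (hg : Continuous g) (hg1 : ∀ y ∈ B0, g y = 1) :
    Htpy B0 (fun y => f y * g y * (f y)⁻¹) g := by
  refine ⟨fun p => f (p.2.1, σ p.1 * p.2.2) * g p.2 * (f (p.2.1, σ p.1 * p.2.2))⁻¹,
    by fun_prop, by simp, by simp [hf0], fun t y hy => by simp [hg1 y hy]⟩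

theorem htpy_comm {B0 : Set (B × I)} {f g : B × I → G} (hf : Continuous f)
    (hf0 : ∀ b, f (b, 0) = 1) (hg : Continuous g) (hg1 : ∀ y ∈ B0, g y = 1) :
    Htpy B0 (fun y => f y * g y) (fun y => g y * f y) := by
  have := (htpy_conj_I hf hf0 hg hg1).mul (Htpy.refl (Y0 := B0) hf)
  simpa using this

end Comm

/-! ### General linear groups over finite index types -/

/-- The general linear group on a finite index type, with the topology of units. -/
abbrev GLm (ι : Type) [Fintype ι] [DecidableEq ι] := (Matrix ι ι ℂ)ˣ

section LinGroups

variable {ι κ μ : Type} [Fintype ι] [DecidableEq ι] [Fintype κ] [DecidableEq κ]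
  [Fintype μ] [DecidableEq μ]
variable {Y : Type*} [TopologicalSpace Y]

open Classical in
/-- Regard an invertible matrix as an element of the general linear group (junk value `1`). -/
noncomputable def toGL (M : Matrix ι ι ℂ) : GLm ι := if h : IsUnit M then h.unit else 1

theorem toGL_val {M : Matrix ι ι ℂ} (h : IsUnit M) : (toGL M : Matrix ι ι ℂ) = M := by
  simp [toGL, h]

theorem toGL_coe (M : GLm ι) : toGL (M : Matrix ι ι ℂ) = M := by
  ext1; rw [toGL_val M.isUnit]

theorem continuous_GL {f : Y → GLm ι} (h : Continuous (fun y => (f y : Matrix ι ι ℂ))) :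
    Continuous f := by
  rw [Units.continuous_iff]
  refine ⟨h, ?_⟩
  have : (fun y => ((f y)⁻¹ : GLm ι).val)
      = fun y => (Matrix.det (f y : Matrix ι ι ℂ))⁻¹ • Matrix.adjugate (f y : Matrix ι ι ℂ) := by
    ext1 y
    rw [Matrix.coe_units_inv, Matrix.inv_def, Ring.inverse_eq_inv']
  rw [this]
  refine Continuous.smul (Continuous.inv₀ h.matrix_det fun y => ?_) h.matrix_adjugate
  exact ((Matrix.isUnit_iff_isUnit_det _).1 (f y).isUnit).ne_zero

theorem continuous_toGL {f : Y → Matrix ι ι ℂ} (h : Continuous f) (hu : ∀ y, IsUnit (f y)) :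
    Continuous (fun y => toGL (f y)) :=
  continuous_GL (by simpa only [fun y => toGL_val (hu y)] using h)

theorem toGL_mul {M N : Matrix ι ι ℂ} (hM : IsUnit M) (hN : IsUnit N) :
    toGL (M * N) = toGL M * toGL N := by
  ext1; rw [toGL_val (hM.mul hN), Units.val_mul, toGL_val hM, toGL_val hN]

/-- The general linear group is path connected: avoid the finitely many zeros of
`z ↦ det ((1 - z) + z A)` in the complex plane. -/
theorem joined_GL (A : GLm ι) : Joined 1 A := by
  classical
  let q : Polynomial ℂ :=
    Matrix.det ((1 : Matrix ι ι (Polynomial ℂ)) + (Polynomial.X : Polynomial ℂ) •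
      (Polynomial.C.mapMatrix ((A : Matrix ι ι ℂ) - 1)))
  have hq : ∀ z : ℂ, q.eval z = Matrix.det ((1 : Matrix ι ι ℂ) + z • ((A : Matrix ι ι ℂ) - 1)) := by
    intro z
    have := RingHom.map_det (Polynomial.evalRingHom z)
      ((1 : Matrix ι ι (Polynomial ℂ)) + (Polynomial.X : Polynomial ℂ) •
      (Polynomial.C.mapMatrix ((A : Matrix ι ι ℂ) - 1)))
    rw [Polynomial.coe_evalRingHom] at this
    rw [this]
    congr 1
    ext i j
    simp [Matrix.one_apply, Matrix.smul_apply]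
    split_ifs <;> simp
  have hq0 : q ≠ 0 := by
    intro h0
    have := hq 0
    simp [h0] at this
  let s : Set ℂ := {z | q.eval z = 0}
  have hs : s.Finite := by
    refine (q.roots.toFinset.finite_toSet).subset fun z hz => ?_
    simp [hq0]; exact hz
  have hpc := hs.countable.isPathConnected_compl_of_one_lt_rank
    (by rw [Complex.rank_real_complex]; exact Nat.one_lt_ofNat)
  have h0 : (0 : ℂ) ∈ sᶜ := by simp [s, hq]
  have h1 : (1 : ℂ) ∈ sᶜ := by
    simp only [s, Set.mem_compl_iff, Set.mem_ofPred_eq, hq]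
    have : (1 : Matrix ι ι ℂ) + (1 : ℂ) • ((A : Matrix ι ι ℂ) - 1) = A := by simp
    rw [this]
    exact ((Matrix.isUnit_iff_isUnit_det _).1 A.isUnit).ne_zero
  obtain ⟨γ, hγ⟩ := hpc.joinedIn 0 h0 1 h1
  have hu : ∀ t, IsUnit ((1 : Matrix ι ι ℂ) + γ t • ((A : Matrix ι ι ℂ) - 1)) := by
    intro t
    rw [Matrix.isUnit_iff_isUnit_det, isUnit_iff_ne_zero, ← hq]
    exact hγ t
  refine ⟨⟨⟨fun t => toGL ((1 : Matrix ι ι ℂ) + γ t • ((A : Matrix ι ι ℂ) - 1)),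
    continuous_toGL (by fun_prop) hu⟩, ?_, ?_⟩⟩
  · ext1; simp only [ContinuousMap.coe_mk]; rw [toGL_val (hu 0)]; simp
  · ext1; simp only [ContinuousMap.coe_mk]; rw [toGL_val (hu 1)]; simp

/-- The `0/1` matrix of an embedding of index types. -/
def embM (e : ι ↪ κ) : Matrix κ ι ℂ := Matrix.of fun a i => if a = e i then 1 else 0

theorem embM_tr (e : ι ↪ κ) : (embM e).transpose * embM e = 1 := by
  ext i j
  simp [embM, Matrix.mul_apply, Matrix.one_apply, e.injective.eq_iff, eq_comm]

theorem embM_trans (e : ι ↪ κ) (e' : κ ↪ μ) : embM (e.trans e') = embM e' * embM e := by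
  ext a i
  simp [embM, Matrix.mul_apply]

/-- Extension of a matrix along an embedding of index types by the identity. -/
def extM (e : ι ↪ κ) (M : Matrix ι ι ℂ) : Matrix κ κ ℂ :=
  embM e * M * (embM e).transpose + (1 - embM e * (embM e).transpose)

theorem extM_one (e : ι ↪ κ) : extM e (1 : Matrix ι ι ℂ) = 1 := by simp [extM]

theorem extM_mul (e : ι ↪ κ) (M N : Matrix ι ι ℂ) : extM e (M * N) = extM e M * extM e N := by
  have h := embM_tr e
  simp only [extM]
  generalize embM e = E at *
  have h1 : E * M * E.transpose * (E * N * E.transpose) = E * (M * N) * E.transpose := by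
    calc _ = E * M * (E.transpose * E) * N * E.transpose := by simp only [Matrix.mul_assoc]
      _ = _ := by rw [h]; simp only [Matrix.mul_assoc, Matrix.mul_one]
  have h2 : E * M * E.transpose * (E * E.transpose) = E * M * E.transpose := by
    calc _ = E * M * (E.transpose * E) * E.transpose := by simp only [Matrix.mul_assoc]
      _ = _ := by rw [h]; simp only [Matrix.mul_one]
  have h3 : E * E.transpose * (E * N * E.transpose) = E * N * E.transpose := by
    calc _ = E * (E.transpose * E) * N * E.transpose := by simp only [Matrix.mul_assoc]
      _ = _ := by rw [h]; simp only [Matrix.mul_one]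
  have h4 : E * E.transpose * (E * E.transpose) = E * E.transpose := by
    calc _ = E * (E.transpose * E) * E.transpose := by simp only [Matrix.mul_assoc]
      _ = _ := by rw [h]; simp only [Matrix.mul_one]
  simp only [add_mul, mul_add, sub_mul, mul_sub, h1, h2, h3, h4, mul_one, one_mul]
  abel

/-- Extension by the identity as a homomorphism of general linear groups. -/
def ext (e : ι ↪ κ) : GLm ι →* GLm κ :=
  Units.map { toFun := extM e, map_one' := extM_one e, map_mul' := extM_mul e }

@[simp] theorem ext_val (e : ι ↪ κ) (M : GLm ι) : (ext e M : Matrix κ κ ℂ) = extM e M := rfl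

theorem continuous_extM (e : ι ↪ κ) : Continuous (extM e) := by unfold extM; fun_prop

@[fun_prop] theorem continuous_ext (e : ι ↪ κ) : Continuous (ext e) :=
  continuous_GL ((continuous_extM e).comp Units.continuous_val)

theorem ext_trans (e : ι ↪ κ) (e' : κ ↪ μ) (M : GLm ι) :
    ext (e.trans e') M = ext e' (ext e M) := by
  ext1
  simp only [ext_val, extM, embM_trans, Matrix.transpose_mul, mul_add, add_mul, mul_sub, sub_mul,
    Matrix.mul_add, Matrix.add_mul, Matrix.mul_sub, Matrix.sub_mul, Matrix.mul_assoc,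
    Matrix.mul_one, Matrix.one_mul]
  abel

theorem ext_refl (M : GLm ι) : ext (Function.Embedding.refl ι) M = M := by
  ext1
  have : embM (Function.Embedding.refl ι) = (1 : Matrix ι ι ℂ) := by
    ext i j; simp [embM, Matrix.one_apply]
  simp [extM, this]

theorem extM_equiv (e : ι ≃ κ) (M : Matrix ι ι ℂ) (i j : κ) :
    extM e.toEmbedding M i j = M (e.symm i) (e.symm j) := by
  have h : embM e.toEmbedding * (embM e.toEmbedding).transpose = (1 : Matrix κ κ ℂ) := by
    ext i j
    simp only [embM, Matrix.mul_apply, Matrix.of_apply, Matrix.transpose_apply, Matrix.one_apply]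
    rw [Finset.sum_eq_single (e.symm i)]
    · simp [eq_comm]
    · intro b _ hb
      rw [if_neg, zero_mul]
      rintro rfl; simp at hb
    · simp
  rw [extM, h, sub_self, add_zero]
  simp only [Matrix.mul_apply, embM, Matrix.of_apply, Matrix.transpose_apply]
  rw [Finset.sum_eq_single (e.symm j)]
  · rw [Finset.sum_eq_single (e.symm i)]
    · simp
    · intro b _ hb
      rw [if_neg, zero_mul]
      rintro rfl; simp at hb
    · simp
  · intro b _ hb
    rw [if_neg (c := j = _), mul_zero]
    rintro rfl; simp at hb
  · simp

/-- Two extensions along embeddings into the same index type are conjugate. -/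
theorem ext_conj (e e' : ι ↪ κ) : ∃ c : GLm κ, ∀ M, ext e' M = c * ext e M * c⁻¹ := by
  classical
  obtain ⟨s, hs⟩ : ∃ s : Equiv.Perm κ, ∀ i, s (e i) = e' i := by
    let f : {x // x ∈ Set.range e} ≃ {x // x ∈ Set.range e'} :=
      (Equiv.ofInjective e e.injective).symm.trans (Equiv.ofInjective e' e'.injective)
    refine ⟨f.extendSubtype, fun i => ?_⟩
    rw [Equiv.extendSubtype_apply_of_mem f _ ⟨i, rfl⟩]
    have : (⟨e i, ⟨i, rfl⟩⟩ : {x // x ∈ Set.range e}) = Equiv.ofInjective e e.injective i := rfl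
    rw [this]
    simp [f]
  have h1 : (embM s.toEmbedding).transpose * embM s.toEmbedding = (1 : Matrix κ κ ℂ) := embM_tr _
  have h2 : embM s.toEmbedding * (embM s.toEmbedding).transpose = (1 : Matrix κ κ ℂ) := by
    rw [← mul_eq_one_comm]; exact h1
  refine ⟨⟨embM s.toEmbedding, (embM s.toEmbedding).transpose, h2, h1⟩, fun M => ?_⟩
  have h3 : e' = e.trans s.toEmbedding := by ext i; simp [hs]
  rw [h3, ext_trans]
  ext1
  rw [ext_val, extM, h2, sub_self, add_zero]
  rfl

theorem htpy_ext {Y0 : Set Y} {u : Y → GLm ι} (hu : Continuous u) (h1 : ∀ y ∈ Y0, u y = 1)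
    (e e' : ι ↪ κ) : Htpy Y0 (fun y => ext e (u y)) (fun y => ext e' (u y)) := by
  obtain ⟨c, hc⟩ := ext_conj e e'
  simp only [hc]
  exact htpy_conj (by fun_prop) (fun y hy => by simp [h1 y hy]) (joined_GL c)

/-- Block sum of two invertible matrices. -/
def bs (u : GLm ι) (v : GLm κ) : GLm (ι ⊕ κ) :=
  ext Function.Embedding.inl u * ext Function.Embedding.inr v

theorem extM_inl (M : Matrix ι ι ℂ) :
    extM (Function.Embedding.inl : ι ↪ ι ⊕ κ) M = Matrix.fromBlocks M 0 0 1 := by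
  ext i j
  rcases i with i | i <;> rcases j with j | j <;>
    simp [extM, embM, Matrix.mul_apply, Matrix.one_apply, Matrix.transpose_apply]

theorem extM_inr (M : Matrix κ κ ℂ) :
    extM (Function.Embedding.inr : κ ↪ ι ⊕ κ) M = Matrix.fromBlocks 1 0 0 M := by
  ext i j
  rcases i with i | i <;> rcases j with j | j <;>
    simp [extM, embM, Matrix.mul_apply, Matrix.one_apply, Matrix.transpose_apply]

theorem bs_val (u : GLm ι) (v : GLm κ) :
    (bs u v : Matrix (ι ⊕ κ) (ι ⊕ κ) ℂ) = Matrix.fromBlocks (u : Matrix ι ι ℂ) 0 0 v := by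
  rw [bs, Units.val_mul, ext_val, ext_val, extM_inl, extM_inr, Matrix.fromBlocks_multiply]
  simp

theorem bs_mul (u u' : GLm ι) (v v' : GLm κ) : bs (u * u') (v * v') = bs u v * bs u' v' := by
  ext1
  simp [bs_val, Matrix.fromBlocks_multiply]

theorem bs_one : bs (1 : GLm ι) (1 : GLm κ) = 1 := by simp [bs]

theorem bs_inv (u : GLm ι) (v : GLm κ) : bs u⁻¹ v⁻¹ = (bs u v)⁻¹ := by
  rw [eq_inv_iff_mul_eq_one, ← bs_mul]; simp [bs_one]

@[fun_prop] theorem continuous_bs {u : Y → GLm ι} {v : Y → GLm κ} (hu : Continuous u)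
    (hv : Continuous v) : Continuous (fun y => bs (u y) (v y)) := by
  unfold bs; fun_prop

theorem ext_inl_eq (u : GLm ι) : ext (Function.Embedding.inl : ι ↪ ι ⊕ κ) u = bs u 1 := by
  simp [bs]

theorem ext_inr_eq (u : GLm κ) : ext (Function.Embedding.inr : κ ↪ ι ⊕ κ) u = bs 1 u := by
  simp [bs]

theorem bs_inl_inr_comm (u : GLm ι) (v : GLm κ) :
    ext Function.Embedding.inr v * ext Function.Embedding.inl u = bs u v := by
  rw [ext_inl_eq, ext_inr_eq, ← bs_mul]; simp

end LinGroups

end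

section

/-! ### Lifting homotopies through transitive actions -/

section Lift
variable {Y B G : Type*} [TopologicalSpace Y] [TopologicalSpace B] [TopologicalSpace G] [Group G]
  [IsTopologicalGroup G]

/-- A substitute for the homotopy lifting property of `G → G/H`. If the action `act` admits a
continuous choice `T v w` of a group element moving `v` to `w`, for `w` close to `v`, then every
homotopy in the space acted upon is obtained from a homotopy in the group starting at `1`; the
latter is constant along stationary paths. -/
theorem lift_htpy [CompactSpace Y] (act : G → B → B) (act_one : ∀ b, act 1 b = b)
    (act_mul : ∀ g h b, act (g * h) b = act g (act h b)) (S : Set B) (N : Set (B × B))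
    (hN : IsOpen N) (T : B × B → G) (hT : ContinuousOn T N) (hd : ∀ v ∈ S, (v, v) ∈ N)
    (hT1 : ∀ v ∈ S, T (v, v) = 1)
    (hT2 : ∀ v ∈ S, ∀ w ∈ S, (v, w) ∈ N → act (T (v, w)) v = w)
    (K : Y × I → B) (hK : Continuous K) (hKS : ∀ p, K p ∈ S) :
    ∃ g : Y × I → G, Continuous g ∧ (∀ y, g (y, 0) = 1) ∧
      (∀ y t, act (g (y, t)) (K (y, 0)) = K (y, t)) ∧
      ∀ y, (∀ t, K (y, t) = K (y, 0)) → ∀ t, g (y, t) = 1 := by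
  obtain ⟨δ, hδ, hW⟩ : ∃ δ : ℝ, 0 < δ ∧ ∀ y (s s' : I), |(s : ℝ) - s'| < δ →
      (K (y, s), K (y, s')) ∈ N := by
    let C : Set (Y × I × I) := {p | (K (p.1, p.2.1), K (p.1, p.2.2)) ∈ N}ᶜ
    have hC : IsCompact C := by
      apply IsClosed.isCompact
      rw [isClosed_compl_iff]
      exact hN.preimage (by fun_prop)
    by_cases hne : C.Nonempty
    · obtain ⟨p, hp, hmin⟩ := hC.exists_isMinOn hne
        (f := fun p : Y × I × I => |(p.2.1 : ℝ) - p.2.2|) (by fun_prop)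
      refine ⟨|(p.2.1 : ℝ) - p.2.2|, ?_, fun y s s' h => ?_⟩
      · rw [abs_pos, sub_ne_zero]
        intro h
        have h' : p.2.1 = p.2.2 := Subtype.ext h
        apply hp
        simp only [Set.mem_ofPred_eq, h']
        exact hd _ (hKS _)
      · by_contra hn
        have := hmin (a := (y, s, s')) hn
        simp only [Set.mem_ofPred_eq] at this
        linarith
    · refine ⟨1, one_pos, fun y s s' _ => ?_⟩
      by_contra hn
      exact hne ⟨(y, s, s'), hn⟩
  have hclaim : ∀ i : ℕ, ∃ g : Y × I → G, Continuous g ∧ (∀ y, g (y, 0) = 1) ∧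
      (∀ y (t s : I), (s : ℝ) = min (t : ℝ) (i * (δ / 2)) → act (g (y, t)) (K (y, 0)) = K (y, s)) ∧
      ∀ y, (∀ t, K (y, t) = K (y, 0)) → ∀ t, g (y, t) = 1 := by
    intro i
    induction i with
    | zero =>
      refine ⟨fun _ => 1, by fun_prop, by simp, fun y t s hs => ?_, by simp⟩
      have : s = 0 := by
        apply Subtype.ext
        simpa [t.2.1] using hs
      rw [act_one, this]
    | succ i ih =>
      obtain ⟨g, hg, hg0, hg1, hg2⟩ := ih
      let m : ℕ → I → I := fun i t => ⟨min (t : ℝ) (i * (δ / 2)), le_min t.2.1 (by positivity),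
        (min_le_left _ _).trans t.2.2⟩
      have hm : ∀ i, Continuous (m i) := fun i => by
        apply Continuous.subtype_mk
        fun_prop
      have hm0 : ∀ i, m i 0 = 0 := fun i => Subtype.ext (by
        simp only [m, Set.Icc.coe_zero]; apply min_eq_left; positivity)
      have hmN : ∀ y t, (K (y, m i t), K (y, m (i + 1) t)) ∈ N := by
        intro y t
        apply hW
        simp only [m]
        push_cast
        refine lt_of_le_of_lt (b := δ / 2) ?_ (by linarith)
        rw [abs_le]
        have : ((i : ℝ) + 1) * (δ / 2) = i * (δ / 2) + δ / 2 := by ring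
        rw [this]
        rcases le_total (t : ℝ) (i * (δ / 2)) with h | h <;>
        rcases le_total (t : ℝ) (i * (δ / 2) + δ / 2) with h' | h' <;>
        simp only [min_eq_left h, min_eq_right h, min_eq_left h', min_eq_right h'] <;>
        constructor <;> linarith
      refine ⟨fun p => T (K (p.1, m i p.2), K (p.1, m (i + 1) p.2)) * g p, ?_, ?_, ?_, ?_⟩
      · refine Continuous.mul ?_ hg
        have h1 := hm i
        have h2 := hm (i + 1)
        exact hT.comp_continuous (f := fun p : Y × I => (K (p.1, m i p.2), K (p.1, m (i + 1) p.2)))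
          (by fun_prop) fun p => hmN p.1 p.2
      · intro y
        simp only [hm0, hg0, mul_one]
        exact hT1 _ (hKS _)
      · intro y t s hs
        have hs' : s = m (i + 1) t := Subtype.ext (by simpa [m] using hs)
        rw [act_mul, hg1 y t (m i t) rfl, hs']
        exact hT2 _ (hKS _) _ (hKS _) (hmN y t)
      · intro y hy t
        simp only [hy (m _ t), hg2 y hy t, mul_one]
        exact hT1 _ (hKS _)
  obtain ⟨n, hn⟩ := exists_nat_gt (1 / (δ / 2))
  obtain ⟨g, hg, hg0, hg1, hg2⟩ := hclaim n
  refine ⟨g, hg, hg0, fun y t => hg1 y t t ?_, hg2⟩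
  rw [div_lt_iff₀ (by positivity)] at hn
  rw [min_eq_left]
  linarith [t.2.2]

variable {ι : Type} [Fintype ι] [DecidableEq ι]

theorem isOpen_isUnit : IsOpen {M : Matrix ι ι ℂ | IsUnit M} := by
  simp only [Matrix.isUnit_iff_isUnit_det, isUnit_iff_ne_zero]
  exact isOpen_ne_fun (by fun_prop) continuous_const

theorem continuousOn_toGL {X : Type*} [TopologicalSpace X] {f : X → Matrix ι ι ℂ} {s : Set X}
    (h : ContinuousOn f s) (hu : ∀ y ∈ s, IsUnit (f y)) : ContinuousOn (fun y => toGL (f y)) s := by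
  rw [continuousOn_iff_continuous_restrict] at h ⊢
  exact continuous_toGL h fun y => hu y y.2

/-- Homotopies of idempotent matrices are induced by conjugation. -/
theorem lift_idem [CompactSpace Y] (K : Y × I → Matrix ι ι ℂ) (hK : Continuous K)
    (hi : ∀ p, K p * K p = K p) :
    ∃ g : Y × I → GLm ι, Continuous g ∧ (∀ y, g (y, 0) = 1) ∧
      (∀ y t, (g (y, t) : Matrix ι ι ℂ) * (K (y, 0)) * ((g (y, t))⁻¹ : GLm ι) = K (y, t)) ∧
      ∀ y, (∀ t, K (y, t) = K (y, 0)) → ∀ t, g (y, t) = 1 := by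
  let M : Matrix ι ι ℂ × Matrix ι ι ℂ → Matrix ι ι ℂ := fun x => x.2 * x.1 + (1 - x.2) * (1 - x.1)
  have hM : Continuous M := by fun_prop
  refine lift_htpy (G := GLm ι) (fun g p => (g : Matrix ι ι ℂ) * p * (g⁻¹ : GLm ι)) (by simp)
    (fun g h b => by simp [mul_assoc])
    {p | p * p = p} {x | IsUnit (M x)} (isOpen_isUnit.preimage hM) (fun x => toGL (M x))
    (continuousOn_toGL hM.continuousOn fun x hx => hx) ?_ ?_ ?_ K hK hi
  all_goals
    have h1 : ∀ v : Matrix ι ι ℂ, v * v = v → M (v, v) = 1 := by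
      intro v hv
      simp only [M, mul_sub, sub_mul, hv, one_mul, mul_one]
      abel
  · intro v hv
    simp only [Set.mem_ofPred_eq, h1 v hv, isUnit_one]
  · intro v hv
    simp only [h1 v hv]
    exact toGL_coe 1
  · intro v hv w hw h
    have : M (v, w) * v = w * M (v, w) := by
      simp only [Set.mem_ofPred_eq] at hv hw
      simp only [M, mul_sub, sub_mul, one_mul, mul_one, mul_add, add_mul, mul_assoc, hv]
      simp only [← mul_assoc, hw]
      abel
    have h2 := toGL_val h
    nth_rw 1 [h2]
    rw [this, mul_assoc]
    nth_rw 1 [← h2]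
    simp

open Matrix ComplexOrder in
/-- Homotopies of nonzero vectors are induced by homotopies of invertible matrices. -/
theorem lift_vec [CompactSpace Y] (K : Y × I → ι → ℂ) (hK : Continuous K)
    (hi : ∀ p, K p ≠ 0) :
    ∃ g : Y × I → GLm ι, Continuous g ∧ (∀ y, g (y, 0) = 1) ∧
      (∀ y t, (g (y, t) : Matrix ι ι ℂ) *ᵥ (K (y, 0)) = K (y, t)) ∧
      ∀ y, (∀ t, K (y, t) = K (y, 0)) → ∀ t, g (y, t) = 1 := by
  let M : (ι → ℂ) × (ι → ℂ) → Matrix ι ι ℂ := fun x =>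
    1 + (star x.1 ⬝ᵥ x.1)⁻¹ • Matrix.vecMulVec (x.2 - x.1) (star x.1)
  let U : Set ((ι → ℂ) × (ι → ℂ)) := {x | x.1 ≠ 0}
  have hU : IsOpen U := isOpen_ne_fun continuous_fst continuous_const
  have hM : ContinuousOn M U := by
    refine continuousOn_const.add (ContinuousOn.fun_smul (ContinuousOn.fun_inv₀ ?_ ?_) ?_)
    · apply Continuous.continuousOn
      simp only [dotProduct]
      fun_prop
    · intro x hx
      exact fun h => hx (dotProduct_star_self_eq_zero.1 h)
    · apply Continuous.continuousOn
      refine continuous_matrix fun i j => ?_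
      simp only [vecMulVec_apply]
      fun_prop
  refine lift_htpy (G := GLm ι) (fun g p => (g : Matrix ι ι ℂ) *ᵥ p) (by simp)
    (fun g h b => by simp)
    {p | p ≠ 0} (U ∩ M ⁻¹' {x | IsUnit x}) (hM.isOpen_inter_preimage hU isOpen_isUnit)
    (fun x => toGL (M x))
    (continuousOn_toGL (hM.mono Set.inter_subset_left) fun x hx => hx.2) ?_ ?_ ?_ K hK hi
  · intro v hv
    refine ⟨hv, ?_⟩
    simp [M]
  · intro v hv
    simp only [M, sub_self]
    simpa using toGL_coe (1 : GLm ι)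
  · intro v hv w hw h
    rw [toGL_val h.2]
    simp only [M]
    have : star v ⬝ᵥ v ≠ 0 := fun h => hv (dotProduct_star_self_eq_zero.1 h)
    rw [add_mulVec, smul_mulVec, vecMulVec_mulVec, one_mulVec]
    ext i
    simp
    field_simp
    ring

/-- Homotopies of nonzero complex numbers have logarithms. -/
theorem lift_log [CompactSpace Y] (K : Y × I → ℂ) (hK : Continuous K) (hi : ∀ p, K p ≠ 0) :
    ∃ g : Y × I → ℂ, Continuous g ∧ (∀ y, g (y, 0) = 0) ∧
      (∀ y t, Complex.exp (g (y, t)) * (K (y, 0)) = K (y, t)) ∧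
      ∀ y, (∀ t, K (y, t) = K (y, 0)) → ∀ t, g (y, t) = 0 := by
  have hc : ContinuousOn (fun x : ℂ × ℂ => x.2 / x.1) {x | x.1 ≠ 0} :=
    continuousOn_snd.div continuousOn_fst fun x hx => hx
  have := lift_htpy (G := Multiplicative ℂ) (fun g p => Complex.exp g.toAdd * p) (by simp)
    (fun g h b => by simp [Complex.exp_add, mul_assoc])
    {p | p ≠ 0} ({x | x.1 ≠ 0} ∩ (fun x : ℂ × ℂ => x.2 / x.1) ⁻¹' Complex.slitPlane)
    (hc.isOpen_inter_preimage (isOpen_ne_fun continuous_fst continuous_const)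
      Complex.isOpen_slitPlane)
    (fun x => Multiplicative.ofAdd (Complex.log (x.2 / x.1)))
    (continuous_ofAdd.comp_continuousOn
      (ContinuousOn.clog (hc.mono Set.inter_subset_left) fun x hx => hx.2)) ?_ ?_ ?_ K hK hi
  · exact this
  · intro v hv
    refine ⟨hv, ?_⟩
    have : v / v = 1 := div_self hv
    simp [this]
  · intro v hv
    have : v / v = 1 := div_self hv
    simp [this]
  · intro v hv w hw h
    have hv' : v ≠ 0 := hv
    have hw' : w ≠ 0 := hw
    simp only [toAdd_ofAdd]
    rw [Complex.exp_log (div_ne_zero hw hv)]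
    field_simp

end Lift

end

section

/-! ### The projection attached to a matrix polynomial -/

section Proj
open Matrix
variable {ι : Type} [Fintype ι] [DecidableEq ι]

/-- The matrix polynomial `∑_{l ≤ D} a_l z^l`. -/
noncomputable def qv (a : ℕ → Matrix ι ι ℂ) (D : ℕ) (z : ℂ) : Matrix ι ι ℂ :=
  ∑ l ∈ Finset.range (D + 1), z ^ l • a l

/-- The action of a matrix polynomial on bilateral sequences of vectors (Fourier coefficients). -/
noncomputable def Qs (a : ℕ → Matrix ι ι ℂ) (D : ℕ) (b : ℤ → ι → ℂ) : ℤ → ι → ℂ :=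
  fun k => ∑ l ∈ Finset.range (D + 1), a l *ᵥ b (k - l)

/-- Bounded bilateral sequences. -/
def BddS (b : ℤ → ι → ℂ) : Prop := ∃ C : ℝ, ∀ k i, ‖b k i‖ ≤ C

theorem Qs_add (a : ℕ → Matrix ι ι ℂ) (D : ℕ) (b c : ℤ → ι → ℂ) :
    Qs a D (b + c) = Qs a D b + Qs a D c := by
  ext k i
  simp [Qs, mulVec_add, Finset.sum_add_distrib]

theorem Qs_sub (a : ℕ → Matrix ι ι ℂ) (D : ℕ) (b c : ℤ → ι → ℂ) :
    Qs a D (b - c) = Qs a D b - Qs a D c := by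
  ext k i
  simp [Qs, mulVec_sub, Finset.sum_sub_distrib]

theorem Qs_zero (a : ℕ → Matrix ι ι ℂ) (D : ℕ) : Qs a D 0 = 0 := by
  ext k i
  simp [Qs]

/-- The right shift of scalar bilateral sequences. -/
def Sh : Module.End ℂ (ℤ → ℂ) where
  toFun b := fun k => b (k - 1)
  map_add' _ _ := rfl
  map_smul' _ _ := rfl

theorem Sh_pow (l : ℕ) (b : ℤ → ℂ) (k : ℤ) : (Sh ^ l) b k = b (k - l) := by
  induction l generalizing b k with
  | zero => simp
  | succ l ih =>
    rw [pow_succ, Module.End.mul_apply, ih]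
    show b (k - l - 1) = _
    congr 1
    push_cast
    ring

theorem Sh_sub_inj {lam : ℂ} (h : ‖lam‖ ≠ 1) {b : ℤ → ℂ} (hb : ∃ C : ℝ, ∀ k, ‖b k‖ ≤ C)
    (h0 : (Sh - algebraMap ℂ _ lam) b = 0) : b = 0 := by
  have h1 : ∀ k, b (k - 1) = lam * b k := by
    intro k
    have := congrFun h0 k
    simp only [LinearMap.sub_apply, Module.algebraMap_end_apply, Pi.sub_apply, Pi.smul_apply,
      smul_eq_mul, Pi.zero_apply] at this
    exact sub_eq_zero.1 this
  have h2 : ∀ (n : ℕ) k, b (k - n) = lam ^ n * b k := by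
    intro n
    induction n with
    | zero => simp
    | succ n ih =>
      intro k
      rw [pow_succ', mul_assoc, ← ih, ← h1]
      congr 1; push_cast; ring
  obtain ⟨C, hC⟩ := hb
  have hC0 : 0 ≤ C := (norm_nonneg _).trans (hC 0)
  ext k
  show b k = 0
  by_contra hk
  have hk' : 0 < ‖b k‖ := norm_pos_iff.2 hk
  rcases lt_or_gt_of_ne h with hl | hl
  · -- `b k = lam ^ n * b (k + n)` tends to `0`
    obtain ⟨n, hn⟩ := exists_pow_lt_of_lt_one (div_pos hk' (by positivity : 0 < C + 1)) hl
    have h3 := h2 n (k + n)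
    rw [add_sub_cancel_right] at h3
    have h4 : ‖b k‖ ≤ ‖lam‖ ^ n * C := by
      rw [h3, norm_mul, norm_pow]
      exact mul_le_mul_of_nonneg_left (hC _) (by positivity)
    rw [lt_div_iff₀ (by positivity)] at hn
    nlinarith [pow_nonneg (norm_nonneg lam) n]
  · obtain ⟨n, hn⟩ := pow_unbounded_of_one_lt (C / ‖b k‖) hl
    rw [div_lt_iff₀ hk'] at hn
    have h3 := hC (k - n)
    rw [h2, norm_mul, norm_pow] at h3
    linarith

theorem aeval_Sh_inj (p : Polynomial ℂ) (hp : p ≠ 0) (hr : ∀ z ∈ p.roots, ‖z‖ ≠ 1) {b : ℤ → ℂ}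
    (hb : ∃ C : ℝ, ∀ k, ‖b k‖ ≤ C) (h0 : Polynomial.aeval Sh p b = 0) : b = 0 := by
  have hs := (IsAlgClosed.splits p).eq_prod_roots
  have hc : p.leadingCoeff ≠ 0 := by simpa using hp
  rw [hs, map_mul, Polynomial.aeval_C, Module.End.mul_apply] at h0
  have h1 : Polynomial.aeval Sh (p.roots.map fun z => Polynomial.X - Polynomial.C z).prod b = 0 := by
    simpa [Module.algebraMap_end_apply, hc] using h0
  clear h0 hs
  revert h1 hb b
  generalize p.roots = R at hr ⊢
  induction R using Multiset.induction_on with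
  | empty => intro b hb h; simpa using h
  | cons z R ih =>
    intro b hb h
    have hz := hr z (by simp)
    apply ih (fun w hw => hr w (by simp [hw])) hb
    rw [Multiset.map_cons, Multiset.prod_cons, map_mul, Module.End.mul_apply] at h
    refine Sh_sub_inj hz ?_ (by simpa using h)
    -- polynomials in the shift preserve boundedness
    generalize (R.map fun z => Polynomial.X - Polynomial.C z).prod = r
    obtain ⟨C, hC⟩ := hb
    refine ⟨∑ i ∈ r.support, ‖r.coeff i‖ * C, fun k => ?_⟩
    rw [Polynomial.aeval_eq_sum_range' (n := r.natDegree + 1) (by simp)]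
    rw [show ∑ i ∈ r.support, ‖r.coeff i‖ * C = ∑ i ∈ Finset.range (r.natDegree + 1), ‖r.coeff i‖ * C
      from Finset.sum_subset Polynomial.supp_subset_range_natDegree_succ (by
        intro i _ hi; simp [Polynomial.notMem_support_iff.1 hi])]
    simp only [LinearMap.sum_apply, Finset.sum_apply, LinearMap.smul_apply, Pi.smul_apply, Sh_pow]
    refine norm_sum_le_of_le _ fun i _ => ?_
    rw [norm_smul]
    exact mul_le_mul_of_nonneg_left (hC _) (norm_nonneg _)

/-- A matrix polynomial invertible on the unit circle acts injectively on bounded sequences. -/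
theorem Qs_inj {a : ℕ → Matrix ι ι ℂ} {D : ℕ} (h : ∀ z : ℂ, ‖z‖ = 1 → IsUnit (qv a D z))
    {b : ℤ → ι → ℂ} (hb : BddS b) (h0 : Qs a D b = 0) : b = 0 := by
  let q : Matrix ι ι (Polynomial ℂ) :=
    ∑ l ∈ Finset.range (D + 1), (Polynomial.X ^ l : Polynomial ℂ) • Polynomial.C.mapMatrix (a l)
  have hqe : ∀ i j, q i j = ∑ l ∈ Finset.range (D + 1), Polynomial.X ^ l * Polynomial.C (a l i j) := by
    intro i j
    simp [q, Matrix.sum_apply]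
  have hqz : ∀ z, (Polynomial.evalRingHom z).mapMatrix q = qv a D z := by
    intro z
    ext i j
    simp [hqe, qv, Matrix.sum_apply, Polynomial.eval_finset_sum]
    exact Finset.sum_congr rfl fun l _ => mul_comm _ _
  have hdet : ∀ z, q.det.eval z = (qv a D z).det := by
    intro z
    rw [← hqz, ← RingHom.map_det]; rfl
  have hne : ∀ z : ℂ, ‖z‖ = 1 → q.det.eval z ≠ 0 := by
    intro z hz
    rw [hdet]
    exact ((Matrix.isUnit_iff_isUnit_det _).1 (h z hz)).ne_zero
  have hd0 : q.det ≠ 0 := by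
    intro hh
    exact hne 1 (by simp) (by simp [hh])
  have hQ : ∀ i, ∑ j, Polynomial.aeval Sh (q i j) (fun k => b k j) = 0 := by
    intro i
    ext k
    have := congrFun (congrFun h0 k) i
    simp only [Qs, Finset.sum_apply, mulVec, dotProduct, Pi.zero_apply] at this
    rw [Finset.sum_comm] at this
    rw [Finset.sum_apply, Pi.zero_apply, ← this]
    refine Finset.sum_congr rfl fun j _ => ?_
    rw [hqe, map_sum]
    simp only [map_mul, map_pow, Polynomial.aeval_X, Polynomial.aeval_C, LinearMap.sum_apply,
      Finset.sum_apply, Module.End.mul_apply, Sh_pow, Module.algebraMap_end_apply, Pi.smul_apply,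
      smul_eq_mul]
  have key : ∀ m, Polynomial.aeval Sh q.det (fun k => b k m) = 0 := by
    intro m
    have hadj := fun j => congrFun (congrFun (adjugate_mul q) m) j
    have h1 : ∑ i, Polynomial.aeval Sh (q.adjugate m i)
        (∑ j, Polynomial.aeval Sh (q i j) (fun k => b k j)) = 0 := by
      simp [hQ]
    simp only [map_sum, ← Module.End.mul_apply, ← map_mul] at h1
    rw [Finset.sum_comm] at h1
    simp only [← LinearMap.sum_apply, ← map_sum] at h1
    simp only [Matrix.mul_apply] at hadj
    simp only [hadj, Matrix.smul_apply, one_apply] at h1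
    rw [Finset.sum_eq_single m] at h1
    · simpa using h1
    · intro j _ hj
      simp [hj.symm]
    · simp
  obtain ⟨C, hC⟩ := hb
  ext k m
  have := aeval_Sh_inj q.det hd0 (fun z hz h1 => hne z h1 (Polynomial.isRoot_of_mem_roots hz))
    ⟨C, fun k => hC k m⟩ (key m)
  exact congrFun this k

/-- The point `exp (2πiθ)` of the unit circle. -/
noncomputable def ce (θ : ℝ) : ℂ := Complex.exp (2 * Real.pi * Complex.I * θ)

theorem continuous_ce : Continuous ce := by unfold ce; fun_prop

theorem norm_ce (θ : ℝ) : ‖ce θ‖ = 1 := by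
  have : (2 * Real.pi * Complex.I * θ : ℂ) = ((2 * Real.pi * θ : ℝ) : ℂ) * Complex.I := by
    push_cast; ring
  rw [ce, this, Complex.norm_exp_ofReal_mul_I]

theorem ce_ne (θ : ℝ) : ce θ ≠ 0 := Complex.exp_ne_zero _

theorem continuous_ce_zpow (k : ℤ) : Continuous (fun θ => ce θ ^ k) :=
  continuous_ce.zpow₀ k fun θ => Or.inl (ce_ne θ)

theorem integral_ce (k : ℤ) : ∫ θ in (0 : ℝ)..1, ce θ ^ k = if k = 0 then 1 else 0 := by
  split_ifs with h
  · simp [h]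
  · have : ∀ θ : ℝ, ce θ ^ k = Complex.exp ((2 * Real.pi * Complex.I * k) * θ) := by
      intro θ
      rw [ce, ← Complex.exp_int_mul]
      congr 1; ring
    simp_rw [this]
    have hc : (2 * Real.pi * Complex.I * k : ℂ) ≠ 0 := by
      simp [h, Real.pi_ne_zero]
    rw [integral_exp_mul_complex hc]
    simp only [Complex.ofReal_one, mul_one, Complex.ofReal_zero, mul_zero, Complex.exp_zero]
    have : Complex.exp (2 * Real.pi * Complex.I * k) = 1 := by
      rw [mul_comm]; exact Complex.exp_int_mul_two_pi_mul_I k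
    rw [this]; simp

/-- The Fourier coefficients of the inverse of a matrix polynomial on the unit circle. -/
noncomputable def Fc (a : ℕ → Matrix ι ι ℂ) (D : ℕ) (k : ℤ) : Matrix ι ι ℂ :=
  Matrix.of fun x y => ∫ θ in (0 : ℝ)..1, (qv a D (ce θ))⁻¹ x y * ce θ ^ (-k)

theorem continuous_nonsing_inv {X : Type*} [TopologicalSpace X] {f : X → Matrix ι ι ℂ}
    (hf : Continuous f) (hu : ∀ x, IsUnit (f x)) : Continuous fun x => (f x)⁻¹ := by
  have := Units.continuous_val.comp (continuous_toGL hf hu).inv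
  convert this using 2 with x
  simp [Matrix.coe_units_inv, toGL_val (hu x)]

theorem continuous_qv {X : Type*} [TopologicalSpace X] {a : X → ℕ → Matrix ι ι ℂ} {D : ℕ}
    (ha : ∀ l, Continuous fun x => a x l) {z : X → ℂ} (hz : Continuous z) :
    Continuous fun x => qv (a x) D (z x) := by
  unfold qv
  exact continuous_finset_sum _ fun l _ => (hz.pow l).smul (ha l)

theorem continuous_Fc {X : Type*} [TopologicalSpace X] {a : X → ℕ → Matrix ι ι ℂ} {D : ℕ}
    (ha : ∀ l, Continuous fun x => a x l) (h : ∀ x, ∀ z : ℂ, ‖z‖ = 1 → IsUnit (qv (a x) D z))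
    (k : ℤ) : Continuous fun x => Fc (a x) D k := by
  refine continuous_matrix fun i j => ?_
  simp only [Fc, Matrix.of_apply]
  apply intervalIntegral.continuous_parametric_intervalIntegral_of_continuous' (f := fun x θ =>
    (qv (a x) D (ce θ))⁻¹ i j * ce θ ^ (-k))
  have h1 : Continuous fun p : X × ℝ => (qv (a p.1) D (ce p.2))⁻¹ :=
    continuous_nonsing_inv (continuous_qv (fun l => (ha l).comp continuous_fst)
      (continuous_ce.comp continuous_snd)) fun p => h _ _ (norm_ce _)
  exact (h1.matrix_elem i j).mul ((continuous_ce_zpow _).comp continuous_snd)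

section Fixed
variable {a : ℕ → Matrix ι ι ℂ} {D : ℕ}

theorem continuous_qv_inv (h : ∀ z : ℂ, ‖z‖ = 1 → IsUnit (qv a D z))
    (i j : ι) : Continuous fun θ => (qv a D (ce θ))⁻¹ i j :=
  (continuous_nonsing_inv (continuous_qv (a := fun _ => a) (fun l => continuous_const)
    continuous_ce) fun p => h _ (norm_ce _)).matrix_elem i j

theorem Fc_bdd (h : ∀ z : ℂ, ‖z‖ = 1 → IsUnit (qv a D z)) :
    ∃ C : ℝ, ∀ k x y, ‖Fc a D k x y‖ ≤ C := by
  have h1 : ∀ x y, ∃ C : ℝ, ∀ k, ‖Fc a D k x y‖ ≤ C := by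
    intro x y
    obtain ⟨C, hC⟩ := (isCompact_Icc (a := (0 : ℝ)) (b := 1)).exists_bound_of_continuousOn
      (continuous_qv_inv h x y).continuousOn
    refine ⟨C, fun k => ?_⟩
    have := intervalIntegral.norm_integral_le_of_norm_le_const (a := 0) (b := 1) (C := C)
      (f := fun θ => (qv a D (ce θ))⁻¹ x y * ce θ ^ (-k)) (fun θ hθ => ?_)
    · simpa [Fc] using this
    · rw [norm_mul, norm_zpow, norm_ce, _root_.one_zpow, mul_one]
      apply hC
      rw [Set.uIoc_of_le zero_le_one] at hθ
      exact ⟨hθ.1.le, hθ.2⟩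
  choose C hC using h1
  refine ⟨∑ x, ∑ y, |C x y|, fun k x y => (hC x y k).trans ((le_abs_self _).trans ?_)⟩
  refine (Finset.single_le_sum (f := fun y => |C x y|) (fun _ _ => abs_nonneg _)
    (Finset.mem_univ y)).trans ?_
  exact Finset.single_le_sum (f := fun x => ∑ y, |C x y|)
    (fun _ _ => Finset.sum_nonneg fun _ _ => abs_nonneg _) (Finset.mem_univ x)

theorem Fc_inv (h : ∀ z : ℂ, ‖z‖ = 1 → IsUnit (qv a D z)) (k : ℤ) :
    ∑ l ∈ Finset.range (D + 1), a l * Fc a D (k - l) = if k = 0 then 1 else 0 := by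
  ext x y
  simp only [Matrix.sum_apply, Matrix.mul_apply, Fc, Matrix.of_apply]
  have hcont : ∀ i j k, Continuous fun θ => (qv a D (ce θ))⁻¹ i j * ce θ ^ (k : ℤ) :=
    fun i j k => (continuous_qv_inv h i j).mul (continuous_ce_zpow _)
  simp_rw [← intervalIntegral.integral_const_mul]
  simp_rw [fun l => (intervalIntegral.integral_finset_sum (μ := MeasureTheory.volume) (a := 0)
    (b := 1) (s := Finset.univ) (f := fun j θ => a l x j * ((qv a D (ce θ))⁻¹ j y *
    ce θ ^ (-(k - (l : ℤ))))) (fun i _ => ((hcont i y _).const_mul _).intervalIntegrable _ _)).symm]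
  rw [← intervalIntegral.integral_finset_sum (fun l _ => Continuous.intervalIntegrable
    (continuous_finset_sum _ fun i _ => (hcont i y _).const_mul _) _ _)]
  have : ∀ θ, (∑ l ∈ Finset.range (D + 1), ∑ j, a l x j * ((qv a D (ce θ))⁻¹ j y *
      ce θ ^ (-(k - (l : ℤ))))) = ce θ ^ (-k) * (1 : Matrix ι ι ℂ) x y := by
    intro θ
    rw [← Matrix.mul_nonsing_inv _ ((Matrix.isUnit_iff_isUnit_det _).1 (h _ (norm_ce θ)))]
    rw [Matrix.mul_apply, Finset.sum_comm, Finset.mul_sum]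
    refine Finset.sum_congr rfl fun j _ => ?_
    rw [show qv a D (ce θ) x j = ∑ l ∈ Finset.range (D + 1), ce θ ^ l * a l x j by
      simp [qv, Matrix.sum_apply], Finset.sum_mul, Finset.mul_sum]
    refine Finset.sum_congr rfl fun l _ => ?_
    have : ce θ ^ (-(k - (l : ℤ))) = ce θ ^ (-k) * ce θ ^ l := by
      rw [← zpow_natCast, ← zpow_add₀ (ce_ne θ)]; congr 1; ring
    rw [this]
    ring
  simp_rw [this, intervalIntegral.integral_mul_const, integral_ce]
  simp only [neg_eq_zero]
  split_ifs <;> simp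

end Fixed

/-- Vectors with `D` blocks, as bilateral sequences. -/
def sq {D : ℕ} (r : Fin D × ι → ℂ) : ℤ → ι → ℂ :=
  fun k x => ∑ j : Fin D, if k = (j : ℕ) then r (j, x) else 0

theorem sq_coe {D : ℕ} (r : Fin D × ι → ℂ) (i : Fin D) (x : ι) : sq r (i : ℕ) x = r (i, x) := by
  simp [sq, Fin.val_inj]

theorem sq_out {D : ℕ} (r : Fin D × ι → ℂ) {k : ℤ} (h : k < 0 ∨ D ≤ k) : sq r k = 0 := by
  ext x
  refine Finset.sum_eq_zero fun j _ => if_neg ?_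
  have := j.2
  omega

theorem sq_ext {D : ℕ} {r : Fin D × ι → ℂ} {b : ℤ → ι → ℂ}
    (h1 : ∀ (i : Fin D) x, b (i : ℕ) x = r (i, x)) (h2 : ∀ k : ℤ, k < 0 ∨ D ≤ k → b k = 0) :
    b = sq r := by
  ext k x
  by_cases h : k < 0 ∨ D ≤ k
  · rw [h2 k h, sq_out r h]
  · push Not at h
    have hk : k = ((⟨k.toNat, by omega⟩ : Fin D) : ℕ) := by simp; omega
    rw [hk, sq_coe, h1]

theorem sq_inj {D : ℕ} {r r' : Fin D × ι → ℂ} (h : sq r = sq r') : r = r' := by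
  ext ⟨i, x⟩
  rw [← sq_coe r, h, sq_coe]

/-- The projection attached to a matrix polynomial invertible on the circle: it acts on vector
polynomials `r` of degree `< D` by `r ↦ q · (q⁻¹ r)₋`, where `( )₋` is the negative part of a
Fourier series. -/
noncomputable def Pm (a : ℕ → Matrix ι ι ℂ) (D : ℕ) : Matrix (Fin D × ι) (Fin D × ι) ℂ :=
  Matrix.of fun i j => ∑ l ∈ Finset.range (D + 1),
    if ((i.1 : ℕ) : ℤ) - l < 0 then (a l * Fc a D ((i.1 : ℕ) - l - (j.1 : ℕ))) i.2 j.2 else 0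

theorem continuous_Pm {X : Type*} [TopologicalSpace X] {a : X → ℕ → Matrix ι ι ℂ} {D : ℕ}
    (ha : ∀ l, Continuous fun x => a x l) (h : ∀ x, ∀ z : ℂ, ‖z‖ = 1 → IsUnit (qv (a x) D z)) :
    Continuous fun x => Pm (a x) D := by
  refine continuous_matrix fun i j => ?_
  simp only [Pm, Matrix.of_apply]
  refine continuous_finset_sum _ fun l _ => ?_
  split_ifs
  · exact ((ha l).mul (continuous_Fc ha h _)).matrix_elem _ _
  · exact continuous_const

/-- The sequence of Fourier coefficients of `q⁻¹ r`. -/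
noncomputable def Fs (a : ℕ → Matrix ι ι ℂ) (D : ℕ) (r : Fin D × ι → ℂ) : ℤ → ι → ℂ :=
  fun k => ∑ j : Fin D, Fc a D (k - (j : ℕ)) *ᵥ fun x => r (j, x)

/-- The negative part of a bilateral sequence. -/
def ngp (b : ℤ → ι → ℂ) : ℤ → ι → ℂ := fun k => if k < 0 then b k else 0

section Fixed
variable {a : ℕ → Matrix ι ι ℂ} {D : ℕ}

theorem Fs_bdd (h : ∀ z : ℂ, ‖z‖ = 1 → IsUnit (qv a D z))
    (r : Fin D × ι → ℂ) : BddS (Fs a D r) := by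
  obtain ⟨C, hC⟩ := Fc_bdd h
  refine ⟨∑ j : Fin D, ∑ x, C * ‖r (j, x)‖, fun k i => ?_⟩
  simp only [Fs, Finset.sum_apply, mulVec, dotProduct]
  refine norm_sum_le_of_le _ fun j _ => norm_sum_le_of_le _ fun x _ => ?_
  rw [norm_mul]
  exact mul_le_mul_of_nonneg_right (hC _ _ _) (norm_nonneg _)

theorem Qs_Fs (h : ∀ z : ℂ, ‖z‖ = 1 → IsUnit (qv a D z))
    (r : Fin D × ι → ℂ) : Qs a D (Fs a D r) = sq r := by
  ext k x
  simp only [Qs, Fs, mulVec_sum, mulVec_mulVec]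
  rw [Finset.sum_comm]
  simp only [← sum_mulVec]
  have : ∀ j : Fin D, ∑ l ∈ Finset.range (D + 1), a l * Fc a D (k - l - (j : ℕ))
      = if k - (j : ℕ) = 0 then 1 else 0 := by
    intro j
    rw [← Fc_inv h]
    refine Finset.sum_congr rfl fun l _ => ?_
    congr 2; ring
  simp only [this, sq, Finset.sum_apply, sub_eq_zero]
  refine Finset.sum_congr rfl fun j _ => ?_
  split_ifs <;> simp

theorem ngp_bdd {b : ℤ → ι → ℂ} (hb : BddS b) : BddS (ngp b) := by
  obtain ⟨C, hC⟩ := hb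
  refine ⟨C, fun k i => ?_⟩
  unfold ngp
  split_ifs
  · exact hC k i
  · simpa using (norm_nonneg _).trans (hC k i)

theorem Qs_ngp (h : ∀ z : ℂ, ‖z‖ = 1 → IsUnit (qv a D z))
    (r : Fin D × ι → ℂ) : Qs a D (ngp (Fs a D r)) = sq (Pm a D *ᵥ r) := by
  apply sq_ext
  · intro i x
    have R : (Pm a D *ᵥ r) (i, x) = ∑ j : Fin D, ∑ y, ∑ l ∈ Finset.range (D + 1),
        (if ((i : ℕ) : ℤ) - l < 0 then (a l * Fc a D ((i : ℕ) - l - (j : ℕ))) x y else 0)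
          * r (j, y) := by
      simp only [mulVec, dotProduct, Pm, of_apply, Fintype.sum_prod_type, Finset.sum_mul]
    rw [R, Qs, Finset.sum_apply]
    trans ∑ l ∈ Finset.range (D + 1), ∑ j : Fin D, ∑ y,
        (if ((i : ℕ) : ℤ) - l < 0 then (a l * Fc a D ((i : ℕ) - l - (j : ℕ))) x y else 0)
          * r (j, y)
    · refine Finset.sum_congr rfl fun l _ => ?_
      by_cases hl : ((i : ℕ) : ℤ) - l < 0
      · simp only [ngp, Fs, if_pos hl, mulVec_sum, mulVec_mulVec, Finset.sum_apply]
        rfl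
      · simp only [ngp, if_neg hl]; simp
    · rw [Finset.sum_comm]
      refine Finset.sum_congr rfl fun j _ => ?_
      rw [Finset.sum_comm]
  · intro k hk
    rcases hk with hk | hk
    · have := congrFun (Qs_Fs h r) k
      rw [sq_out r (Or.inl hk)] at this
      rw [← this]
      refine Finset.sum_congr rfl fun l _ => ?_
      rw [ngp, if_pos (by omega)]
    · refine Finset.sum_eq_zero fun l hl => ?_
      rw [Finset.mem_range] at hl
      rw [ngp, if_neg (by omega), mulVec_zero]

/-- Characterization of the projection by a splitting of `q⁻¹ r` into negative and nonnegative
parts. -/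
theorem Pm_char (h : ∀ z : ℂ, ‖z‖ = 1 → IsUnit (qv a D z))
    {r r' : Fin D × ι → ℂ} {g g' : ℤ → ι → ℂ} (hg : BddS g) (hg' : BddS g')
    (hgn : ∀ k, 0 ≤ k → g k = 0) (hgp : ∀ k, k < 0 → g' k = 0) (h1 : Qs a D g = sq r')
    (h2 : Qs a D g' = sq r - sq r') : Pm a D *ᵥ r = r' := by
  have h3 : Fs a D r - (g + g') = 0 := by
    apply Qs_inj h
    · obtain ⟨C, hC⟩ := hg
      obtain ⟨C', hC'⟩ := hg'
      obtain ⟨C2, hC2⟩ := Fs_bdd h r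
      refine ⟨C2 + (C + C'), fun k i => ?_⟩
      exact (norm_sub_le _ _).trans (add_le_add (hC2 _ _)
        ((norm_add_le _ _).trans (add_le_add (hC _ _) (hC' _ _))))
    · rw [Qs_sub, Qs_add, Qs_Fs h, h1, h2]; abel
  have h4 : ngp (Fs a D r) = g := by
    rw [sub_eq_zero.1 h3]
    ext k x
    rw [ngp]
    split_ifs with hk
    · simp [hgp k hk]
    · simp [hgn k (not_lt.1 hk)]
  apply sq_inj
  rw [← Qs_ngp h, h4, h1]

theorem Pm_idem (h : ∀ z : ℂ, ‖z‖ = 1 → IsUnit (qv a D z)) : Pm a D * Pm a D = Pm a D := by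
  apply Matrix.toLin'.injective
  ext1 r
  ext1
  simp only [LinearMap.comp_apply, toLin'_apply, ← mulVec_mulVec]
  refine Pm_char h (ngp_bdd (Fs_bdd h _)) (g' := 0) ⟨0, by simp⟩ ?_ (by simp) (Qs_ngp h _) ?_
  · intro k hk
    rw [ngp, if_neg (not_lt.2 hk)]
  · rw [Qs_zero]; simp

end Fixed

end Proj

end

section

section Proj2
open Matrix
variable {ι : Type} [Fintype ι] [DecidableEq ι]

/-- The bilateral sequence supported at one place. -/
def del (k0 : ℤ) (v : ι → ℂ) : ℤ → ι → ℂ := fun k => if k = k0 then v else 0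

theorem del_bdd (k0 : ℤ) (v : ι → ℂ) : BddS (del k0 v) := by
  refine ⟨∑ i, ‖v i‖, fun k i => ?_⟩
  unfold del
  split_ifs
  · exact Finset.single_le_sum (f := fun i => ‖v i‖) (fun _ _ => norm_nonneg _) (Finset.mem_univ i)
  · simpa using Finset.sum_nonneg fun _ _ => norm_nonneg _

theorem del_add (k0 : ℤ) (v w : ι → ℂ) : del k0 (v + w) = del k0 v + del k0 w := by
  ext k i; simp only [del, Pi.add_apply]; split_ifs <;> simp

theorem del_zero (k0 : ℤ) : del k0 (0 : ι → ℂ) = 0 := by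
  ext k i; simp [del]

theorem BddS.add {b c : ℤ → ι → ℂ} (hb : BddS b) (hc : BddS c) : BddS (b + c) := by
  obtain ⟨C, hC⟩ := hb
  obtain ⟨C', hC'⟩ := hc
  exact ⟨C + C', fun k i => (norm_add_le _ _).trans (add_le_add (hC _ _) (hC' _ _))⟩

theorem BddS.mulVec {b : ℤ → ι → ℂ} (hb : BddS b) (A : Matrix ι ι ℂ) :
    BddS fun k => A *ᵥ b k := by
  obtain ⟨C, hC⟩ := hb
  refine ⟨∑ i, ∑ j, ‖A i j‖ * C, fun k i => ?_⟩
  have hC0 : 0 ≤ C := (norm_nonneg _).trans (hC 0 i)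
  refine le_trans ?_ (Finset.single_le_sum (f := fun i => ∑ j, ‖A i j‖ * C)
    (fun _ _ => Finset.sum_nonneg fun _ _ => by positivity) (Finset.mem_univ i))
  simp only [Matrix.mulVec, dotProduct]
  refine norm_sum_le_of_le _ fun j _ => ?_
  rw [norm_mul]
  exact mul_le_mul_of_nonneg_left (hC _ _) (norm_nonneg _)

/-- The coefficients of `z^m (1 - p + p z)`. -/
def stdA (m : ℕ) (p : Matrix ι ι ℂ) (l : ℕ) : Matrix ι ι ℂ :=
  if l = m then 1 - p else if l = m + 1 then p else 0

/-- The projection `1_m ⊕ p ⊕ 0`. -/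
def stdP (m D : ℕ) (p : Matrix ι ι ℂ) : Matrix (Fin D × ι) (Fin D × ι) ℂ :=
  Matrix.of fun i j => if i.1 = j.1 then
    (if (i.1 : ℕ) < m then (1 : Matrix ι ι ℂ) i.2 j.2 else
      if (i.1 : ℕ) = m then p i.2 j.2 else 0) else 0

theorem Qs_stdA (m D : ℕ) (hD : m + 1 ≤ D) (p : Matrix ι ι ℂ) (k0 : ℤ) (v : ι → ℂ) :
    Qs (stdA m p) D (del k0 v) = del (k0 + m) ((1 - p) *ᵥ v) + del (k0 + m + 1) (p *ᵥ v) := by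
  ext1 k
  have : ∀ l ∈ Finset.range (D + 1), stdA m p l *ᵥ del k0 v (k - l) =
      (if l = m then (1 - p) *ᵥ del k0 v (k - l) else 0) +
        (if l = m + 1 then p *ᵥ del k0 v (k - l) else 0) := by
    intro l _
    unfold stdA
    split_ifs with h1 h2 h2
    · omega
    · simp
    · simp
    · simp
  rw [Qs, Finset.sum_congr rfl this, Finset.sum_add_distrib, Finset.sum_ite_eq',
    Finset.sum_ite_eq', if_pos (by simp; omega), if_pos (by simp; omega)]
  simp only [del, Pi.add_apply]
  congr 1
  · split_ifs <;> first | omega | simp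
  · split_ifs <;> first | (push_cast at *; omega) | simp

theorem sq_eq_del {D : ℕ} (j : Fin D) (v : ι → ℂ) :
    del (j : ℕ) v = sq (fun i : Fin D × ι => if i.1 = j then v i.2 else 0) := by
  apply sq_ext
  · intro i x
    simp only [del, Nat.cast_inj, Fin.val_inj]
    split_ifs <;> rfl
  · intro k hk
    have := j.2
    rw [del, if_neg (by omega)]

theorem Pm_std {m D : ℕ} (hD : m + 1 ≤ D) {p : Matrix ι ι ℂ} (hp : p * p = p)
    (h : ∀ z : ℂ, ‖z‖ = 1 → IsUnit (qv (stdA m p) D z)) : Pm (stdA m p) D = stdP m D p := by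
  have hp1 : (1 - p) * (1 - p) = 1 - p := by simp [mul_sub, sub_mul, hp]
  have hp2 : (1 - p) * p = 0 := by simp [sub_mul, hp]
  have hp3 : p * (1 - p) = 0 := by simp [mul_sub, hp]
  ext ⟨i, x⟩ ⟨j, y⟩
  have key : Pm (stdA m p) D *ᵥ (fun i : Fin D × ι => if i.1 = j then (Pi.single y 1 : ι → ℂ) i.2
      else 0) = fun i => stdP m D p i (j, y) := by
    have hv1 : ∀ v : ι → ℂ, (1 - p) *ᵥ v + p *ᵥ v = v := by
      intro v; rw [← add_mulVec]; simp
    rcases lt_trichotomy (j : ℕ) m with hj | hj | hj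
    · have hr : (fun i => stdP m D p i (j, y)) =
          fun i : Fin D × ι => if i.1 = j then (Pi.single y 1 : ι → ℂ) i.2 else 0 := by
        ext ⟨i, x⟩
        simp only [stdP, of_apply]
        split_ifs with h1 h2 h2
        · simp [one_apply, Pi.single_apply]
        · omega
        · subst h1; omega
        · rfl
      rw [hr]
      refine Pm_char h (g := del (j - m) ((1 - p) *ᵥ (Pi.single y 1 : ι → ℂ)) +
        del (j - m - 1) (p *ᵥ (Pi.single y 1 : ι → ℂ)))
        (g' := 0) ((del_bdd _ _).add (del_bdd _ _)) ⟨0, by simp⟩ ?_ (by simp) ?_ ?_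
      · intro k hk
        simp only [Pi.add_apply, del]
        rw [if_neg (by omega), if_neg (by omega), add_zero]
      · rw [Qs_add, Qs_stdA _ _ hD, Qs_stdA _ _ hD]
        simp only [mulVec_mulVec, hp, hp1, hp2, hp3, zero_mulVec, del_zero, add_zero, zero_add]
        rw [show ((j : ℕ) : ℤ) - m - 1 + m + 1 = ((j : ℕ) : ℤ) by ring,
          show ((j : ℕ) : ℤ) - m + m = ((j : ℕ) : ℤ) by ring, ← del_add, hv1, sq_eq_del]
      · rw [Qs_zero, sub_self]
    · have hr : (fun i => stdP m D p i (j, y)) =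
          fun i : Fin D × ι => if i.1 = j then (p *ᵥ (Pi.single y 1 : ι → ℂ)) i.2 else 0 := by
        ext ⟨i, x⟩
        simp only [stdP, of_apply]
        split_ifs with h1 h2 h2
        · subst h1; omega
        · simp
        · subst h1; omega
        · rfl
      rw [hr]
      refine Pm_char h (g := del (-1) (p *ᵥ (Pi.single y 1 : ι → ℂ)))
        (g' := del 0 ((1 - p) *ᵥ (Pi.single y 1 : ι → ℂ))) (del_bdd _ _) (del_bdd _ _) ?_ ?_ ?_ ?_
      · intro k hk
        rw [del, if_neg (by omega)]
      · intro k hk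
        rw [del, if_neg (by omega)]
      · rw [Qs_stdA _ _ hD]
        simp only [mulVec_mulVec, hp, hp1, hp2, hp3, zero_mulVec, del_zero, add_zero, zero_add]
        rw [show (-1 : ℤ) + m + 1 = ((j : ℕ) : ℤ) by omega, sq_eq_del]
      · rw [Qs_stdA _ _ hD]
        simp only [mulVec_mulVec, hp, hp1, hp2, hp3, zero_mulVec, del_zero, add_zero, zero_add]
        rw [← hj, eq_sub_iff_add_eq, ← sq_eq_del, ← sq_eq_del, ← del_add, hv1]
    · have hr : (fun i => stdP m D p i (j, y)) = fun i : Fin D × ι => 0 := by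
        ext ⟨i, x⟩
        simp only [stdP, of_apply]
        split_ifs with h1 h2 h2
        · subst h1; omega
        · subst h1; omega
        · rfl
        · rfl
      rw [hr]
      have h0 : sq (fun i : Fin D × ι => 0) = 0 := by ext k x; simp [sq]
      refine Pm_char h (g' := del (j - m) ((1 - p) *ᵥ (Pi.single y 1 : ι → ℂ)) +
        del (j - m - 1) (p *ᵥ (Pi.single y 1 : ι → ℂ)))
        (g := 0) ⟨0, by simp⟩ ((del_bdd _ _).add (del_bdd _ _)) (by simp) ?_ ?_ ?_
      · intro k hk
        simp only [Pi.add_apply, del]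
        rw [if_neg (by omega), if_neg (by omega), add_zero]
      · rw [Qs_zero, h0]
      · rw [Qs_add, Qs_stdA _ _ hD, Qs_stdA _ _ hD]
        simp only [mulVec_mulVec, hp, hp1, hp2, hp3, zero_mulVec, del_zero, add_zero, zero_add]
        rw [show ((j : ℕ) : ℤ) - m - 1 + m + 1 = ((j : ℕ) : ℤ) by ring,
          show ((j : ℕ) : ℤ) - m + m = ((j : ℕ) : ℤ) by ring, ← del_add, hv1, sq_eq_del, h0, sub_zero]
  have := congrFun key (i, x)
  rw [← this]
  have hs : (fun i : Fin D × ι => if i.1 = j then (Pi.single y 1 : ι → ℂ) i.2 else 0)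
      = Pi.single (j, y) 1 := by
    ext ⟨i, x⟩
    simp only [Pi.single_apply, Prod.mk.injEq]
    split_ifs <;> simp_all
  rw [hs]; simp

/-- The coefficients of `1 - A + A z`. -/
def linA (A : Matrix ι ι ℂ) (l : ℕ) : Matrix ι ι ℂ := if l = 0 then 1 - A else A

theorem qv_linA (A : Matrix ι ι ℂ) (z : ℂ) : qv (linA A) 1 z = 1 - A + z • A := by
  simp [qv, linA, Finset.sum_range_succ]

theorem Qs_linA (A : Matrix ι ι ℂ) (b : ℤ → ι → ℂ) (k : ℤ) :
    Qs (linA A) 1 b k = (1 - A) *ᵥ b k + A *ᵥ b (k - 1) := by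
  simp [Qs, linA, Finset.sum_range_succ]

/-- The spectral projection of the linear pencil `1 - A + A z` (inside the unit circle). -/
noncomputable def lp (A : Matrix ι ι ℂ) : Matrix ι ι ℂ :=
  Matrix.of fun x y => Pm (linA A) 1 (0, x) (0, y)

theorem continuous_lp {X : Type*} [TopologicalSpace X] {A : X → Matrix ι ι ℂ}
    (hA : Continuous A) (h : ∀ x, ∀ z : ℂ, ‖z‖ = 1 → IsUnit (1 - A x + z • A x)) :
    Continuous fun x => lp (A x) := by
  have : Continuous fun x => Pm (linA (A x)) 1 := continuous_Pm (fun l => by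
    unfold linA; split_ifs <;> fun_prop) (by simpa only [qv_linA] using h)
  exact continuous_matrix fun i j => this.matrix_elem _ _

theorem lp_mulVec (A : Matrix ι ι ℂ) (v : ι → ℂ) :
    (fun i : Fin 1 × ι => (lp A *ᵥ v) i.2) = Pm (linA A) 1 *ᵥ fun i => v i.2 := by
  ext ⟨i, x⟩
  fin_cases i
  simp [lp, mulVec, dotProduct, Fintype.sum_prod_type]

theorem sq_one (v : ι → ℂ) : sq (fun i : Fin 1 × ι => v i.2) = del 0 v := by
  ext k x
  simp [sq, del, apply_ite (fun f : ι → ℂ => f x)]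

section
variable {A : Matrix ι ι ℂ}

theorem lp_char (h : ∀ z : ℂ, ‖z‖ = 1 → IsUnit (1 - A + z • A))
    {r r' : ι → ℂ} {g g' : ℤ → ι → ℂ} (hg : BddS g) (hg' : BddS g')
    (hgn : ∀ k, 0 ≤ k → g k = 0) (hgp : ∀ k, k < 0 → g' k = 0)
    (h1 : Qs (linA A) 1 g = del 0 r') (h2 : Qs (linA A) 1 g' = del 0 r - del 0 r') :
    lp A *ᵥ r = r' := by
  have := lp_mulVec A r
  rw [Pm_char (r' := fun i : Fin 1 × ι => r' i.2) (by simpa only [qv_linA] using h) hg hg' hgn hgp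
    (by rw [h1, sq_one]) (by rw [h2, sq_one, sq_one])] at this
  ext x
  exact congrFun this (0, x)

theorem lp_split (h : ∀ z : ℂ, ‖z‖ = 1 → IsUnit (1 - A + z • A))
    (r : ι → ℂ) : ∃ g g' : ℤ → ι → ℂ, BddS g ∧ BddS g' ∧
    (∀ k, 0 ≤ k → g k = 0) ∧ (∀ k, k < 0 → g' k = 0) ∧
    Qs (linA A) 1 g = del 0 (lp A *ᵥ r) ∧ Qs (linA A) 1 g' = del 0 r - del 0 (lp A *ᵥ r) := by
  have h' : ∀ z : ℂ, ‖z‖ = 1 → IsUnit (qv (linA A) 1 z) := by simpa only [qv_linA] using h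
  have h1 := Fs_bdd h' fun i => r i.2
  have h2 := Qs_ngp h' fun i => r i.2
  rw [← lp_mulVec, sq_one] at h2
  refine ⟨_, Fs (linA A) 1 (fun i => r i.2) - ngp (Fs (linA A) 1 (fun i => r i.2)),
    ngp_bdd h1, ?_, ?_, ?_, h2, ?_⟩
  · obtain ⟨C', hC'⟩ := ngp_bdd h1
    obtain ⟨C, hC⟩ := h1
    exact ⟨C + C', fun k i => (norm_sub_le _ _).trans (add_le_add (hC _ _) (hC' _ _))⟩
  · intro k hk; rw [ngp, if_neg (not_lt.2 hk)]
  · intro k hk; simp [ngp, if_pos hk]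
  · rw [Qs_sub, h2, Qs_Fs h', sq_one]

theorem lp_idem (h : ∀ z : ℂ, ‖z‖ = 1 → IsUnit (1 - A + z • A)) : lp A * lp A = lp A := by
  apply Matrix.toLin'.injective
  ext1 r
  ext1
  simp only [LinearMap.comp_apply, toLin'_apply, ← mulVec_mulVec]
  obtain ⟨g, g', hg, hg', h1, h2, h3, h4⟩ := lp_split h (Pi.single r 1)
  refine lp_char h (g' := 0) hg ⟨0, by simp⟩ h1 (by simp) ?_ ?_
  · simpa using h3
  · rw [Qs_zero]; simp

theorem lp_comm (h : ∀ z : ℂ, ‖z‖ = 1 → IsUnit (1 - A + z • A)) : lp A * A = A * lp A := by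
  have hc : (1 - A) * A = A * (1 - A) := by simp [sub_mul, mul_sub]
  have hQ : ∀ b, Qs (linA A) 1 (fun k => A *ᵥ b k) = fun k => A *ᵥ Qs (linA A) 1 b k := by
    intro b
    ext1 k
    rw [Qs_linA, Qs_linA, mulVec_add]
    simp only [mulVec_mulVec, hc]
  have hdel : ∀ v : ι → ℂ, (fun k => A *ᵥ del 0 v k) = del 0 (A *ᵥ v) := by
    intro v
    ext1 k
    simp only [del]
    split_ifs <;> simp
  have key : ∀ v : ι → ℂ, lp A *ᵥ (A *ᵥ v) = A *ᵥ (lp A *ᵥ v) := by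
    intro v
    obtain ⟨g, g', hg, hg', h1, h2, h3, h4⟩ := lp_split h v
    refine lp_char h (hg.mulVec A) (hg'.mulVec A) (fun k hk => by simp [h1 k hk])
      (fun k hk => by simp [h2 k hk]) ?_ ?_
    · rw [hQ, h3, hdel]
    · rw [hQ, h4, ← hdel, ← hdel (lp A *ᵥ v)]
      ext1 k
      simp [mulVec_sub]
  apply Matrix.toLin'.injective
  ext1 r
  ext1
  simp only [LinearMap.comp_apply, toLin'_apply, ← mulVec_mulVec, key]

theorem geo_bdd {ζ : ℂ} (hζ : ‖ζ‖ ≤ 1) (f : ℤ → ℕ) (P : ℤ → Prop) [DecidablePred P] (w : ι → ℂ) :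
    BddS fun k => if P k then ζ ^ (f k) • w else 0 := by
  refine ⟨∑ i, ‖w i‖, fun k i => ?_⟩
  have hw := Finset.single_le_sum (f := fun i => ‖w i‖) (fun _ _ => norm_nonneg _)
    (Finset.mem_univ i)
  dsimp only
  split_ifs
  · rw [Pi.smul_apply, smul_eq_mul, norm_mul, norm_pow]
    refine le_trans ?_ hw
    exact mul_le_of_le_one_left (norm_nonneg _) (pow_le_one₀ (norm_nonneg _) hζ)
  · simpa using (norm_nonneg _).trans hw

/-- Deformation of the pencil `1 - A + A z` to one determined by its spectral projection. -/
theorem lin_deform (h : ∀ z : ℂ, ‖z‖ = 1 → IsUnit (1 - A + z • A))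
    (s : ℝ) (hs0 : 0 ≤ s) (hs1 : s ≤ 1) (z : ℂ) (hz : ‖z‖ = 1) :
    IsUnit ((1 - lp A) * (1 - A + (s * z) • A) + lp A * ((s : ℂ) • (1 - A) + z • A)) := by
  have hz0 : z ≠ 0 := by rintro rfl; simp at hz
  have hpp := lp_idem h
  have hpc := lp_comm h
  rw [← Matrix.mulVec_injective_iff_isUnit]
  rw [← Matrix.coe_mulVecLin, ← LinearMap.ker_eq_bot, LinearMap.ker_eq_bot']
  intro w hw
  rw [mulVecLin_apply] at hw
  set p := lp A with hp
  have c1 : p * (1 - A + (s * z) • A) = (1 - A + (s * z) • A) * p := by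
    simp [mul_add, add_mul, mul_sub, sub_mul, hpc]
  have c2 : p * ((s : ℂ) • (1 - A) + z • A) = ((s : ℂ) • (1 - A) + z • A) * p := by
    simp [mul_add, add_mul, mul_sub, sub_mul, hpc]
  have e1 : p * ((1 - p) * (1 - A + (s * z) • A) + p * ((s : ℂ) • (1 - A) + z • A))
      = ((s : ℂ) • (1 - A) + z • A) * p := by
    rw [mul_add, ← mul_assoc, ← mul_assoc, mul_sub, mul_one, hpp, sub_self, zero_mul, zero_add, c2]
  have e2 : (1 - p) * ((1 - p) * (1 - A + (s * z) • A) + p * ((s : ℂ) • (1 - A) + z • A))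
      = (1 - A + (s * z) • A) * (1 - p) := by
    have h1 : (1 - p) * (1 - p) = 1 - p := by simp [mul_sub, sub_mul, hpp]
    have h2 : (1 - p) * p = 0 := by simp [sub_mul, hpp]
    rw [mul_add, ← mul_assoc, ← mul_assoc, h1, h2, zero_mul, add_zero, mul_sub, sub_mul, c1, one_mul,
      mul_one]
  have f1 : ((s : ℂ) • (1 - A) + z • A) *ᵥ (p *ᵥ w) = 0 := by
    rw [mulVec_mulVec, ← e1, ← mulVec_mulVec, hw, mulVec_zero]
  have f2 : (1 - A + (s * z) • A) *ᵥ ((1 - p) *ᵥ w) = 0 := by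
    rw [mulVec_mulVec, ← e2, ← mulVec_mulVec, hw, mulVec_zero]
  have g2 : (1 - p) *ᵥ w = 0 := by
    set w' := (1 - p) *ᵥ w with hw'
    have hpw : p *ᵥ w' = 0 := by
      rw [hw', mulVec_mulVec, mul_sub, hpp, mul_one, sub_self, zero_mulVec]
    have hζ : ‖(s * z : ℂ)‖ ≤ 1 := by
      rw [norm_mul, hz, mul_one, Complex.norm_real, Real.norm_of_nonneg hs0]; exact hs1
    have f2' : (1 - A) *ᵥ w' = -((s * z : ℂ) • (A *ᵥ w')) := by
      rw [add_mulVec, smul_mulVec] at f2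
      exact eq_neg_of_add_eq_zero_left f2
    have key : p *ᵥ (A *ᵥ w') = A *ᵥ w' := by
      refine lp_char h (g := fun k => if k < 0 then (s * z : ℂ) ^ (-k - 1).toNat • w' else 0) (g' := 0)
        (geo_bdd hζ _ _ _) ⟨0, by simp⟩ (fun k hk => if_neg (not_lt.2 hk)) (by simp) ?_
        (by rw [Qs_zero, sub_self])
      ext1 k
      rw [Qs_linA]
      simp only [del]
      rcases lt_trichotomy k 0 with hk | hk | hk
      · rw [if_pos hk, if_pos (by omega), if_neg (by omega), mulVec_smul, mulVec_smul, f2',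
          show (-(k - 1) - 1).toNat = (-k - 1).toNat + 1 by omega, pow_succ, smul_neg, smul_smul]
        simp
      · subst hk; simp
      · rw [if_neg (by omega), if_neg (by omega), if_neg (by omega)]; simp
    have hA0 : A *ᵥ w' = 0 := by
      rw [← key, mulVec_mulVec, hpc, ← mulVec_mulVec, hpw, mulVec_zero]
    have : w' = (1 - A) *ᵥ w' + A *ᵥ w' := by rw [← add_mulVec]; simp
    rw [this, f2', hA0]; simp
  have g1 : p *ᵥ w = 0 := by
    set w' := p *ᵥ w with hw'
    have hpw : p *ᵥ w' = w' := by
      rw [hw', mulVec_mulVec, hpp]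
    clear_value w'
    have hζ : ‖(s / z : ℂ)‖ ≤ 1 := by
      rw [norm_div, hz, div_one, Complex.norm_real, Real.norm_of_nonneg hs0]; exact hs1
    have f1' : A *ᵥ w' = -((s / z : ℂ) • ((1 - A) *ᵥ w')) := by
      rw [add_mulVec, smul_mulVec, smul_mulVec] at f1
      have := eq_neg_of_add_eq_zero_right f1
      have h3 : A *ᵥ w' = z⁻¹ • (z • (A *ᵥ w')) := by rw [smul_smul, inv_mul_cancel₀ hz0, one_smul]
      rw [h3, this, smul_neg, smul_smul]
      congr 2
      field_simp
    have key : p *ᵥ ((1 - A) *ᵥ w') = 0 := by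
      refine lp_char h (g' := fun k => if 0 ≤ k then (s / z : ℂ) ^ k.toNat • w' else 0) (g := 0)
        ⟨0, by simp⟩ (geo_bdd hζ _ _ _) (by simp) (fun k hk => if_neg (not_le.2 hk))
        (by rw [Qs_zero, del_zero]) ?_
      ext1 k
      rw [Qs_linA, del_zero, sub_zero]
      simp only [del]
      rcases lt_trichotomy k 0 with hk | hk | hk
      · rw [if_neg (by omega), if_neg (by omega), if_neg (by omega)]; simp
      · subst hk; simp
      · rw [if_pos (by omega), if_pos (by omega), if_neg (by omega), mulVec_smul, mulVec_smul, f1',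
          show k.toNat = (k - 1).toNat + 1 by omega, pow_succ, smul_neg, smul_smul]
        simp
    have hA0 : (1 - A) *ᵥ w' = 0 := by
      have hc : (1 - A) * p = p * (1 - A) := by rw [sub_mul, mul_sub, one_mul, mul_one, hpc]
      calc (1 - A) *ᵥ w' = (1 - A) *ᵥ (p *ᵥ w') := by rw [hpw]
        _ = p *ᵥ ((1 - A) *ᵥ w') := by rw [mulVec_mulVec, mulVec_mulVec, hc]
        _ = 0 := key
    have : w' = (1 - A) *ᵥ w' + A *ᵥ w' := by rw [← add_mulVec]; simp
    rw [this, f1', hA0]; simp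
  have : w = (1 - p) *ᵥ w + p *ᵥ w := by rw [← add_mulVec]; simp
  rw [this, g1, g2, add_zero]

end

end Proj2

end

section

/-! ### Approximation by Laurent polynomials -/

section Approx
variable {Y : Type*} [TopologicalSpace Y]

/-- Monomials `h(y) z^k` on `Y × S¹`. -/
noncomputable def mono (h : C(Y, ℂ)) (k : ℤ) : C(Y × Circle, ℂ) where
  toFun p := h p.1 * ((p.2 ^ k : Circle) : ℂ)
  continuous_toFun := by
    have : Continuous fun p : Y × Circle => p.2 ^ k := continuous_snd.zpow k
    exact (h.continuous.comp continuous_fst).mul (continuous_subtype_val.comp this)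

theorem mono_mul (h h' : C(Y, ℂ)) (k k' : ℤ) : mono h k * mono h' k' = mono (h * h') (k + k') := by
  ext p
  simp [mono, zpow_add]
  ring

theorem mono_star (h : C(Y, ℂ)) (k : ℤ) : star (mono h k) = mono (star h) (-k) := by
  ext p
  simp only [mono, ContinuousMap.star_apply, ContinuousMap.coe_mk, zpow_neg, star_mul',
    Circle.coe_inv_eq_conj]
  rfl

/-- The algebra of Laurent polynomials in `z` with coefficients continuous functions on `Y`. -/
noncomputable def laurentAlg (Y : Type*) [TopologicalSpace Y] : StarSubalgebra ℂ C(Y × Circle, ℂ) where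
  carrier := Submodule.span ℂ {f | ∃ (h : C(Y, ℂ)) (k : ℤ), f = mono h k}
  mul_mem' := by
    intro a b ha hb
    have := Submodule.mul_mem_mul ha hb
    rw [Submodule.span_mul_span] at this
    refine Submodule.span_mono ?_ this
    rintro _ ⟨_, ⟨h, k, rfl⟩, _, ⟨h', k', rfl⟩, rfl⟩
    exact ⟨_, _, mono_mul h h' k k'⟩
  add_mem' := fun ha hb => Submodule.add_mem _ ha hb
  algebraMap_mem' := fun r => Submodule.subset_span
    ⟨algebraMap ℂ _ r, 0, by ext p; simp [mono]⟩
  star_mem' := by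
    intro a ha
    refine Submodule.span_induction ?_ ?_ ?_ ?_ ha
    · rintro _ ⟨h, k, rfl⟩
      exact Submodule.subset_span ⟨_, _, mono_star h k⟩
    · rw [star_zero]; exact Submodule.zero_mem _
    · intro x y _ _ hx hy
      rw [star_add]; exact Submodule.add_mem _ hx hy
    · intro r x _ hx
      rw [star_smul]; exact Submodule.smul_mem _ _ hx

theorem laurentAlg_sep [CompactSpace Y] [T2Space Y] : (laurentAlg Y).SeparatesPoints := by
  rintro ⟨y, z⟩ ⟨y', z'⟩ hne
  by_cases hz : z = z'
  · have hy : y ≠ y' := fun h => hne (by rw [h, hz])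
    obtain ⟨f, hf0, hf1, -⟩ := exists_continuous_zero_one_of_isClosed (isClosed_singleton (x := y))
      (isClosed_singleton (x := y')) (by simpa using hy)
    refine ⟨_, ⟨mono ⟨fun y => (f y : ℂ), by fun_prop⟩ 0, Submodule.subset_span ⟨_, _, rfl⟩, rfl⟩, ?_⟩
    simp [mono, hf0 (Set.mem_singleton y), hf1 (Set.mem_singleton y')]
  · refine ⟨_, ⟨mono 1 1, Submodule.subset_span ⟨_, _, rfl⟩, rfl⟩, ?_⟩
    intro h
    exact hz (Subtype.ext (by simpa [mono] using h))

theorem laurentAlg_form {f : C(Y × Circle, ℂ)} (hf : f ∈ laurentAlg Y) :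
    ∃ M : ℕ, ∀ m ≥ M, ∃ b : ℕ → Y → ℂ, (∀ l, Continuous (b l)) ∧ ∀ y (z : Circle),
      (z : ℂ) ^ m * f (y, z) = ∑ l ∈ Finset.range (2 * m + 1), (z : ℂ) ^ l * b l y := by
  refine Submodule.span_induction ?_ ?_ ?_ ?_ hf
  · rintro _ ⟨h, k, rfl⟩
    refine ⟨k.natAbs, fun m hm => ⟨fun l y => if (l : ℤ) = m + k then h y else 0, fun l => ?_,
      fun y z => ?_⟩⟩
    · dsimp only
      split_ifs <;> fun_prop
    · have hl : ∀ l : ℕ, ((l : ℤ) = m + k) ↔ l = (m + k).toNat := fun l => by omega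
      simp only [hl, mul_ite, mul_zero]
      rw [Finset.sum_ite_eq', if_pos (by simp; omega)]
      simp only [mono, ContinuousMap.coe_mk]
      have : (z : ℂ) ^ (m + k).toNat = (z : ℂ) ^ m * ((z ^ k : Circle) : ℂ) := by
        rw [← Circle.coe_pow, ← Circle.coe_pow, ← Circle.coe_mul, ← zpow_natCast z m,
          ← zpow_natCast z (m + k).toNat, ← zpow_add]
        congr 2
        omega
      rw [this]; ring
  · exact ⟨0, fun m _ => ⟨fun _ _ => 0, by fun_prop, by simp⟩⟩
  · rintro x y _ _ ⟨M, hM⟩ ⟨M', hM'⟩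
    refine ⟨max M M', fun m hm => ?_⟩
    obtain ⟨b, hb, h1⟩ := hM m (le_of_max_le_left hm)
    obtain ⟨b', hb', h1'⟩ := hM' m (le_of_max_le_right hm)
    refine ⟨fun l y => b l y + b' l y, fun l => (hb l).add (hb' l), fun y z => ?_⟩
    simp only [ContinuousMap.add_apply, mul_add, Finset.sum_add_distrib, h1, h1']
  · rintro r x _ ⟨M, hM⟩
    refine ⟨M, fun m hm => ?_⟩
    obtain ⟨b, hb, h1⟩ := hM m hm
    refine ⟨fun l y => r * b l y, fun l => (hb l).const_mul r, fun y z => ?_⟩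
    rw [ContinuousMap.smul_apply, smul_eq_mul, mul_left_comm, h1, Finset.mul_sum]
    exact Finset.sum_congr rfl fun l _ => by ring

open scoped Matrix.Norms.Elementwise

variable {ι : Type} [Fintype ι] [DecidableEq ι]

theorem approx_mat [CompactSpace Y] [T2Space Y] (W : C(Y × Circle, Matrix ι ι ℂ)) {ε : ℝ}
    (hε : 0 < ε) : ∃ m : ℕ, 1 ≤ m ∧ ∃ b : Y → ℕ → Matrix ι ι ℂ, (∀ l, Continuous fun y => b y l) ∧
      ∀ y (z : Circle), ‖qv (b y) (2 * m) z - (z : ℂ) ^ m • W (y, z)‖ < ε := by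
  have hW : ∀ i j, ∃ f ∈ laurentAlg Y, ∀ p, ‖f p - W p i j‖ < ε := by
    intro i j
    let w : C(Y × Circle, ℂ) := ⟨fun p => W p i j, W.continuous.matrix_elem i j⟩
    have : w ∈ (laurentAlg Y).topologicalClosure := by
      rw [ContinuousMap.starSubalgebra_topologicalClosure_eq_top_of_separatesPoints _ laurentAlg_sep]
      trivial
    obtain ⟨f, hf, hd⟩ := Metric.mem_closure_iff.1 this ε hε
    refine ⟨f, hf, fun p => ?_⟩
    have h1 := ContinuousMap.dist_apply_le_dist (f := w) (g := f) p
    rw [dist_comm, dist_eq_norm] at h1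
    exact h1.trans_lt hd
  choose f hf hfW using hW
  choose M hM using fun i j => laurentAlg_form (hf i j)
  let m := 1 + ∑ i, ∑ j, M i j
  have hm : ∀ i j, M i j ≤ m := fun i j => by
    have h1 := Finset.single_le_sum (f := fun j => M i j) (fun _ _ => Nat.zero_le _)
      (Finset.mem_univ j)
    have h2 := Finset.single_le_sum (f := fun i => ∑ j, M i j) (fun _ _ => Nat.zero_le _)
      (Finset.mem_univ i)
    exact (h1.trans h2).trans (Nat.le_add_left _ _)
  choose b hb hbf using fun i j => hM i j m (hm i j)
  refine ⟨m, by omega, fun y l => Matrix.of fun i j => b i j l y,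
    fun l => continuous_matrix fun i j => hb i j l, fun y z => ?_⟩
  rw [Matrix.norm_lt_iff hε]
  intro i j
  have h1 : qv (fun l => Matrix.of fun i j => b i j l y) (2 * m) (z : ℂ) i j
      = (z : ℂ) ^ m * f i j (y, z) := by
    rw [hbf]; simp [qv, Matrix.sum_apply]
  rw [Matrix.sub_apply, Matrix.smul_apply, h1, smul_eq_mul, ← mul_sub, norm_mul, norm_pow]
  rw [Circle.norm_coe, one_pow, one_mul]
  exact hfW i j (y, z)

theorem qv_stdA (m D : ℕ) (hD : m + 1 ≤ D) (p : Matrix ι ι ℂ) (z : ℂ) :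
    qv (stdA m p) D z = z ^ m • (1 - p + z • p) := by
  have : ∀ l ∈ Finset.range (D + 1), z ^ l • stdA m p l =
      (if l = m then z ^ l • (1 - p) else 0) + (if l = m + 1 then z ^ l • p else 0) := by
    intro l _
    unfold stdA
    split_ifs with h1 h2 h2
    · omega
    · simp
    · simp
    · simp
  rw [qv, Finset.sum_congr rfl this, Finset.sum_add_distrib, Finset.sum_ite_eq',
    Finset.sum_ite_eq', if_pos (by simp; omega), if_pos (by simp; omega), smul_add, smul_smul,
    pow_succ]

/-- Approximation of an invertible matrix function on `Y × S¹` by a Laurent polynomial, exact over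
the points of `Y` where the function is already the linear polynomial `1 - r + r z`. -/
theorem approx [CompactSpace Y] [T2Space Y] (V : Y × Circle → Matrix ι ι ℂ) (hV : Continuous V)
    (hu : ∀ p, IsUnit (V p)) (r : Y → Matrix ι ι ℂ) (hr : Continuous r) :
    ∃ m D : ℕ, m + 1 ≤ D ∧ ∃ c : Y → ℕ → Matrix ι ι ℂ, (∀ l, Continuous fun y => c y l) ∧
      (∀ y, (∀ z : Circle, V (y, z) = 1 - r y + (z : ℂ) • r y) → ∀ l, c y l = stdA m (r y) l) ∧
      ∀ y (z : Circle) (t : I), IsUnit ((1 - (t : ℝ) : ℂ) • ((z : ℂ) ^ m • V (y, z)) +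
        ((t : ℝ) : ℂ) • qv (c y) D z) := by
  obtain ⟨δ, hδ, hδ'⟩ := (isCompact_range hV).exists_thickening_subset_open
    (isOpen_isUnit (ι := ι)) (by rintro _ ⟨p, rfl⟩; exact hu p)
  have hunit : ∀ (A : Matrix ι ι ℂ) p, ‖A - V p‖ < δ → IsUnit A := by
    intro A p hA
    apply hδ'
    rw [Metric.mem_thickening_iff]
    exact ⟨V p, ⟨p, rfl⟩, by rwa [dist_eq_norm]⟩
  let W : C(Y × Circle, Matrix ι ι ℂ) :=
    ⟨fun p => V p - (1 - r p.1 + (p.2 : ℂ) • r p.1), by fun_prop⟩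
  let W' : C(Y × Circle, ℝ) := ⟨fun p => ‖W p‖, W.continuous.norm⟩
  let n : Y → ℝ := fun y => ‖W'.curry y‖
  have hn : Continuous n := W'.curry.continuous.norm
  have hnW : ∀ y z, ‖W (y, z)‖ ≤ n y := fun y z =>
    (le_abs_self _).trans ((W'.curry y).norm_coe_le_norm z)
  have hn0 : ∀ y, 0 ≤ n y := fun y => norm_nonneg _
  have hε : 0 < δ / 2 := by positivity
  obtain ⟨m, hm, b, hb, hbW⟩ := approx_mat W hε
  let χ : Y → ℝ := fun y => n y / (n y + δ / 2)
  have hpos : ∀ y, 0 < n y + δ / 2 := fun y => by linarith [hn0 y]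
  have hχ : Continuous χ := hn.div (by fun_prop) fun y => (hpos y).ne'
  have hχ0 : ∀ y, 0 ≤ χ y := fun y => div_nonneg (hn0 y) (hpos y).le
  have hχ1 : ∀ y, χ y ≤ 1 := fun y => by
    rw [div_le_one (hpos y)]; linarith
  have hχn : ∀ y, (1 - χ y) * n y < δ / 2 := fun y => by
    have : 1 - χ y = (δ / 2) / (n y + δ / 2) := by
      simp only [χ]; rw [eq_div_iff (hpos y).ne', sub_mul, div_mul_cancel₀ _ (hpos y).ne']; ring
    rw [this, div_mul_eq_mul_div, div_lt_iff₀ (hpos y)]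
    nlinarith [hn0 y]
  refine ⟨m, 2 * m, by omega, fun y l => stdA m (r y) l + (χ y : ℂ) • b y l, fun l => ?_, ?_, ?_⟩
  · have h1 : Continuous fun y => stdA m (r y) l := by
      unfold stdA; split_ifs <;> fun_prop
    have h2 := hb l
    fun_prop
  · intro y hy l
    have : n y = 0 := by
      simp only [n]
      rw [norm_eq_zero]
      ext1 z
      simp [W', W, hy z]
    simp [χ, this]
  · intro y z t
    have hz : ‖(z : ℂ) ^ m‖ = 1 := by rw [norm_pow, Circle.norm_coe, one_pow]
    have hz0 : (z : ℂ) ^ m ≠ 0 := by simp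
    have hq : qv (fun l => stdA m (r y) l + (χ y : ℂ) • b y l) (2 * m) z
        = (z : ℂ) ^ m • (1 - r y + (z : ℂ) • r y) + (χ y : ℂ) • qv (b y) (2 * m) z := by
      rw [← qv_stdA m (2 * m) (by omega)]
      simp only [qv, smul_add, Finset.sum_add_distrib, Finset.smul_sum]
      congr 1
      refine Finset.sum_congr rfl fun l _ => ?_
      rw [smul_comm]
    rw [hq]
    have hfac : (1 - (t : ℝ) : ℂ) • ((z : ℂ) ^ m • V (y, z)) +
        ((t : ℝ) : ℂ) • ((z : ℂ) ^ m • (1 - r y + (z : ℂ) • r y) + (χ y : ℂ) • qv (b y) (2 * m) z)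
        = (z : ℂ) ^ m • (V (y, z) + ((t : ℝ) : ℂ) • (((z : ℂ) ^ m)⁻¹ •
          ((χ y : ℂ) • (qv (b y) (2 * m) z - (z : ℂ) ^ m • W (y, z))
            - ((1 - χ y : ℝ) : ℂ) • ((z : ℂ) ^ m • W (y, z))))) := by
      have hWd : W (y, z) = V (y, z) - (1 - r y + (z : ℂ) • r y) := rfl
      rw [hWd]
      ext i j
      simp only [Matrix.add_apply, Matrix.smul_apply, Matrix.sub_apply, smul_eq_mul]
      push_cast
      field_simp
      ring
    rw [hfac]
    refine IsUnit.smul (Units.mk0 _ hz0) ?_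
    apply hunit _ (y, z)
    rw [add_sub_cancel_left, norm_smul, norm_smul, norm_inv, hz, inv_one, one_mul,
      Complex.norm_real, Real.norm_of_nonneg t.2.1]
    refine lt_of_le_of_lt (mul_le_of_le_one_left (norm_nonneg _) t.2.2) ?_
    refine (norm_sub_le _ _).trans_lt ?_
    rw [norm_smul, norm_smul, norm_smul, hz, one_mul, Complex.norm_real, Complex.norm_real,
      Real.norm_of_nonneg (hχ0 y), Real.norm_of_nonneg (by linarith [hχ1 y] : 0 ≤ 1 - χ y)]
    have h1 := mul_le_of_le_one_left (norm_nonneg _) (hχ1 y)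
      (b := ‖qv (b y) (2 * m) z - (z : ℂ) ^ m • W (y, z)‖)
    have h2 := mul_le_mul_of_nonneg_left (hnW y z) (by linarith [hχ1 y] : 0 ≤ 1 - χ y)
    linarith [hbW y z, hχn y]

end Approx

end

section

/-! ### Stable equivalence -/

section Stable
variable {Y : Type*} [TopologicalSpace Y] {Y0 : Set Y}
variable {ι κ μ : Type} [Fintype ι] [DecidableEq ι] [Fintype κ] [DecidableEq κ] [Fintype μ]
  [DecidableEq μ]

/-- Continuous maps which are trivial on `Y0`. -/
structure Rel {G : Type*} [TopologicalSpace G] [Group G] (Y0 : Set Y) (u : Y → G) : Prop where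
  cont : Continuous u
  bd : ∀ y ∈ Y0, u y = 1

theorem Rel.mul {G : Type*} [TopologicalSpace G] [Group G] [IsTopologicalGroup G] {u v : Y → G}
    (hu : Rel Y0 u) (hv : Rel Y0 v) : Rel Y0 (fun y => u y * v y) :=
  ⟨hu.cont.mul hv.cont, fun y hy => by simp [hu.bd y hy, hv.bd y hy]⟩

theorem Rel.inv {G : Type*} [TopologicalSpace G] [Group G] [IsTopologicalGroup G] {u : Y → G}
    (hu : Rel Y0 u) : Rel Y0 (fun y => (u y)⁻¹) :=
  ⟨hu.cont.inv, fun y hy => by simp [hu.bd y hy]⟩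

theorem Rel.zpow {G : Type*} [TopologicalSpace G] [Group G] [IsTopologicalGroup G] {u : Y → G}
    (hu : Rel Y0 u) (j : ℤ) : Rel Y0 (fun y => u y ^ j) :=
  ⟨hu.cont.zpow j, fun y hy => by simp [hu.bd y hy]⟩

theorem Rel.one {G : Type*} [TopologicalSpace G] [Group G] : Rel Y0 (fun _ => (1 : G)) :=
  ⟨continuous_const, fun _ _ => rfl⟩

theorem Rel.ext {u : Y → GLm ι} (hu : Rel Y0 u) (e : ι ↪ κ) : Rel Y0 (fun y => ext e (u y)) :=
  ⟨by have := hu.cont; fun_prop, fun y hy => by simp [hu.bd y hy]⟩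

/-- Stable homotopy of maps to general linear groups, possibly of different sizes. -/
def SEq (Y0 : Set Y) (u : Y → GLm ι) (v : Y → GLm κ) : Prop :=
  ∃ (μ : Type) (_ : Fintype μ) (_ : DecidableEq μ) (e : ι ↪ μ) (f : κ ↪ μ),
    Htpy Y0 (fun y => ext e (u y)) (fun y => ext f (v y))

/-- Stably null-homotopic maps. -/
def SN (Y0 : Set Y) (u : Y → GLm ι) : Prop :=
  ∃ (μ : Type) (_ : Fintype μ) (_ : DecidableEq μ) (e : ι ↪ μ), Null Y0 (fun y => ext e (u y))

theorem Htpy.ext {u v : Y → GLm ι} (h : Htpy Y0 u v) (e : ι ↪ κ) :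
    Htpy Y0 (fun y => MG.ext e (u y)) (fun y => MG.ext e (v y)) :=
  h.comp_left (continuous_ext e)

theorem Htpy.seq {u v : Y → GLm ι} (h : Htpy Y0 u v) : SEq Y0 u v :=
  ⟨ι, inferInstance, inferInstance, Function.Embedding.refl ι, Function.Embedding.refl ι, by simpa only [ext_refl] using h⟩

theorem SEq.symm {u : Y → GLm ι} {v : Y → GLm κ} : SEq Y0 u v → SEq Y0 v u := by
  rintro ⟨μ, _, _, e, f, h⟩
  exact ⟨μ, inferInstance, inferInstance, f, e, h.symm⟩

/-- Stable homotopies do not depend on the embeddings of the index types. -/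
theorem SEq.to_emb {u : Y → GLm ι} {v : Y → GLm κ} (h : SEq Y0 u v) (hu : Rel Y0 u)
    (hv : Rel Y0 v) (e : ι ↪ μ) (f : κ ↪ μ) : ∃ (ν : Type) (_ : Fintype ν) (_ : DecidableEq ν)
      (g : μ ↪ ν), Htpy Y0 (fun y => MG.ext g (MG.ext e (u y))) (fun y => MG.ext g (MG.ext f (v y))) := by
  obtain ⟨ρ, _, _, e', f', h⟩ := h
  refine ⟨ρ ⊕ μ, inferInstance, inferInstance, Function.Embedding.inr, ?_⟩
  simp only [← ext_trans]
  refine (htpy_ext hu.cont hu.bd _ (e'.trans Function.Embedding.inl)).trans ?_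
  refine Htpy.trans ?_ (htpy_ext hv.cont hv.bd (f'.trans Function.Embedding.inl) _)
  simp only [ext_trans]
  exact h.ext _

theorem SEq.trans {u : Y → GLm ι} {v : Y → GLm κ} {w : Y → GLm μ} (h : SEq Y0 u v)
    (h' : SEq Y0 v w) (hu : Rel Y0 u) (hv : Rel Y0 v) : SEq Y0 u w := by
  obtain ⟨ρ, _, _, e', f', h'⟩ := h'
  obtain ⟨ν, _, _, g, h⟩ := h.to_emb hu hv (Function.Embedding.inl : ι ↪ ι ⊕ ρ)
    (e'.trans Function.Embedding.inr)
  refine ⟨ν, inferInstance, inferInstance, Function.Embedding.inl.trans g,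
    f'.trans (Function.Embedding.inr.trans g), ?_⟩
  simp only [ext_trans] at h ⊢
  exact h.trans ((h'.ext Function.Embedding.inr).ext g)

theorem seq_ext {u : Y → GLm ι} (hu : Rel Y0 u) (e : ι ↪ κ) : SEq Y0 u (fun y => ext e (u y)) :=
  ⟨κ, inferInstance, inferInstance, e, Function.Embedding.refl _, by
    simpa only [ext_refl] using Htpy.refl (hu.ext e).cont⟩

theorem SN.seq {u : Y → GLm ι} (h : SN Y0 u) : SEq Y0 u (fun _ => (1 : GLm κ)) := by
  obtain ⟨μ, _, _, e, h⟩ := h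
  refine ⟨μ ⊕ κ, inferInstance, inferInstance, e.trans Function.Embedding.inl,
    Function.Embedding.inr, ?_⟩
  simp only [ext_trans, map_one]
  simpa using h.ext (Function.Embedding.inl : μ ↪ μ ⊕ κ)

theorem SEq.sn {u : Y → GLm ι} (h : SEq Y0 u (fun _ => (1 : GLm κ))) : SN Y0 u := by
  obtain ⟨μ, _, _, e, f, h⟩ := h
  exact ⟨μ, inferInstance, inferInstance, e, by simpa using h⟩

theorem SEq.sn_iff {u : Y → GLm ι} {v : Y → GLm κ} (h : SEq Y0 u v) (hu : Rel Y0 u)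
    (hv : Rel Y0 v) : SN Y0 u ↔ SN Y0 v :=
  ⟨fun k => (h.symm.trans (k.seq (κ := κ)) hv hu).sn, fun k => (h.trans (k.seq (κ := κ)) hu hv).sn⟩

/-- If `u` and `v` are stably equivalent, then any juxtaposition of `u` and `v⁻¹` is stably null. -/
theorem SEq.sn_mul_inv {u : Y → GLm ι} {v : Y → GLm κ} (h : SEq Y0 u v) (hu : Rel Y0 u)
    (hv : Rel Y0 v) (e : ι ↪ μ) (f : κ ↪ μ) : SN Y0 (fun y => MG.ext e (u y) * MG.ext f (v y)⁻¹) := by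
  obtain ⟨ν, _, _, g, h⟩ := h.to_emb hu hv e f
  refine ⟨ν, inferInstance, inferInstance, g, ?_⟩
  simpa [map_mul, map_inv] using h.mul ((Htpy.refl (Y0 := Y0) ((hv.ext f).ext g).cont).inv)

theorem SN.seq_of_mul_inv {u : Y → GLm ι} {v : Y → GLm κ} {e : ι ↪ μ} {f : κ ↪ μ}
    (hv : Rel Y0 v)
    (h : SN Y0 (fun y => MG.ext e (u y) * (MG.ext f (v y))⁻¹)) : SEq Y0 u v := by
  obtain ⟨ν, _, _, g, h⟩ := h
  refine ⟨ν, inferInstance, inferInstance, e.trans g, f.trans g, ?_⟩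
  have := Htpy.mul h (Htpy.refl (Y0 := Y0) ((hv.ext f).ext g).cont)
  simp only [ext_trans]
  simpa [map_mul, map_inv] using this

end Stable

/-! ### The Bott map -/

section Bott

variable {α β α' β' : Type} [Fintype α'] [DecidableEq α'] [Fintype β'] [DecidableEq β']
  [Fintype α] [DecidableEq α] [Fintype β] [DecidableEq β]

/-- The central matrix `z • 1`. -/
noncomputable def zl (z : Circle) : GLm α :=
  ⟨(z : ℂ) • 1, ((z⁻¹ : Circle) : ℂ) • 1, by
    rw [smul_mul_smul_comm, ← Circle.coe_mul]; simp, by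
    rw [smul_mul_smul_comm, ← Circle.coe_mul]; simp⟩

/-- The clutching function `z ⊕ 1`. -/
noncomputable def zt (z : Circle) : GLm (α ⊕ β) := bs (zl z) 1

theorem zl_one : (zl 1 : GLm α) = 1 := by ext1; simp [zl]

theorem zt_one : (zt 1 : GLm (α ⊕ β)) = 1 := by rw [zt, zl_one, bs_one]

theorem zl_comm (z : Circle) (u : GLm α) : zl z * u = u * zl z := by
  ext1; simp [zl]

theorem zt_comm_bs (z : Circle) (u : GLm α) (v : GLm β) : zt z * bs u v = bs u v * zt z := by
  rw [zt, ← bs_mul, ← bs_mul, zl_comm, mul_one, one_mul]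

@[fun_prop] theorem continuous_zt {X : Type*} [TopologicalSpace X] {f : X → Circle}
    (hf : Continuous f) : Continuous (fun x => (zt (f x) : GLm (α ⊕ β))) := by
  have : Continuous (fun x => (zl (f x) : GLm α)) := by
    apply continuous_GL
    have : Continuous fun x => ((f x : Circle) : ℂ) := continuous_subtype_val.comp hf
    simp only [zl]
    fun_prop
  unfold zt
  fun_prop

theorem zt_val (z : Circle) :
    ((zt z : GLm (α ⊕ β)) : Matrix (α ⊕ β) (α ⊕ β) ℂ) = Matrix.diagonal (Sum.elim (fun _ => (z : ℂ)) fun _ => 1) := by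
  rw [zt, bs_val]
  ext i j
  rcases i with i | i <;> rcases j with j | j <;>
    simp [zl, Matrix.diagonal_apply, Matrix.one_apply]

theorem zt_embM (z : Circle) (e : α ↪ α') (f : β ↪ β') :
    (zt z : GLm (α' ⊕ β')).val * embM (e.sumMap f) =
      embM (e.sumMap f) * (zt z : GLm (α ⊕ β)).val := by
  rw [zt_val, zt_val]
  ext i j
  rw [Matrix.diagonal_mul, Matrix.mul_diagonal]
  rcases i with i | i <;> rcases j with j | j <;> simp [embM]

theorem embM_zt (z : Circle) (e : α ↪ α') (f : β ↪ β') :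
    (embM (e.sumMap f)).transpose * (zt z : GLm (α' ⊕ β')).val =
      (zt z : GLm (α ⊕ β)).val * (embM (e.sumMap f)).transpose := by
  rw [zt_val, zt_val]
  ext i j
  rw [Matrix.diagonal_mul, Matrix.mul_diagonal]
  rcases i with i | i <;> rcases j with j | j <;> simp [embM]

/-- Conjugation by the clutching function commutes with stabilization of both blocks. -/
theorem zt_ext (z : Circle) (e : α ↪ α') (f : β ↪ β') (M : GLm (α ⊕ β)) :
    zt z * ext (e.sumMap f) M * (zt z)⁻¹ = ext (e.sumMap f) (zt z * M * (zt z)⁻¹) := by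
  rw [mul_inv_eq_iff_eq_mul]
  ext1
  have h1 := zt_embM z e f
  have h2 := embM_zt z e f
  simp only [Units.val_mul, ext_val, extM]
  generalize embM (e.sumMap f) = J at *
  rw [mul_add, add_mul, mul_sub, sub_mul, mul_one, one_mul]
  have e1 : (zt z : GLm (α' ⊕ β')).val * (J * M.val * J.transpose)
      = J * ((zt z : GLm (α ⊕ β)).val * M.val) * J.transpose := by
    rw [← Matrix.mul_assoc, ← Matrix.mul_assoc, h1]; simp only [Matrix.mul_assoc]
  have e2 : J * ((zt z : GLm (α ⊕ β)).val * M.val * ((zt z : GLm (α ⊕ β))⁻¹).val)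
      * J.transpose * (zt z : GLm (α' ⊕ β')).val
      = J * ((zt z : GLm (α ⊕ β)).val * M.val) * J.transpose := by
    have h4 : ((zt z : GLm (α ⊕ β))⁻¹).val * (zt z : GLm (α ⊕ β)).val = 1 := by
      rw [← Units.val_mul]; simp
    rw [Matrix.mul_assoc _ J.transpose, h2]
    simp only [Matrix.mul_assoc]
    rw [← Matrix.mul_assoc _ _ J.transpose, h4, Matrix.one_mul]
  have e3 : (zt z : GLm (α' ⊕ β')).val * (J * J.transpose)
      = J * J.transpose * (zt z : GLm (α' ⊕ β')).val := by
    rw [← Matrix.mul_assoc, h1, Matrix.mul_assoc, Matrix.mul_assoc, h2]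
  rw [e1, e2, e3]

theorem ext_sumMap_bs (e : α ↪ α') (f : β ↪ β') (u : GLm α) (v : GLm β) :
    ext (e.sumMap f) (bs u v) = bs (ext e u) (ext f v) := by
  rw [bs, bs, map_mul, ← ext_trans, ← ext_trans, ← ext_trans, ← ext_trans]
  rfl

theorem bs_inj {u u' : GLm α} {v v' : GLm β} (h : bs u v = bs u' v') : u = u' ∧ v = v' := by
  have := congrArg (fun x : GLm (α ⊕ β) => x.val) h
  simp only [bs_val, Matrix.fromBlocks_inj] at this
  exact ⟨Units.ext this.1, Units.ext this.2.2.2⟩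

variable {B : Type*} [TopologicalSpace B] {B0 : Set B}

/-- The Bott map `F ↦ F ζ F⁻¹ ζ⁻¹`. -/
noncomputable def bet {Y : Type*} (F : Y → GLm (α ⊕ β)) (p : Y × Circle) : GLm (α ⊕ β) :=
  F p.1 * (zt p.2 * (F p.1)⁻¹ * (zt p.2)⁻¹)

/-- `F` is a path of maps from `1` to a block diagonal map `h ⊕ h'`. -/
structure EP (B0 : Set B) (F : B × I → GLm (α ⊕ β)) (h : B → GLm α) (h' : B → GLm β) : Prop where
  cont : Continuous F
  ch : Continuous h
  ch' : Continuous h'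
  bd : ∀ b ∈ B0, ∀ t, F (b, t) = 1
  zero : ∀ b, F (b, 0) = 1
  one : ∀ b, F (b, 1) = bs (h b) (h' b)

variable {F F' : B × I → GLm (α ⊕ β)} {h k : B → GLm α} {h' k' : B → GLm β}

theorem EP.rel (H : EP B0 F h h') : Rel B0 h := ⟨H.ch, fun b hb => by
  have := (H.one b).symm.trans (H.bd b hb 1)
  rw [← bs_one] at this
  exact (bs_inj this).1⟩

theorem EP.rel' (H : EP B0 F h h') : Rel B0 h' := ⟨H.ch', fun b hb => by
  have := (H.one b).symm.trans (H.bd b hb 1)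
  rw [← bs_one] at this
  exact (bs_inj this).2⟩

theorem EP.bet_rel (H : EP B0 F h h') : Rel (LBd (IBd B0)) (bet F) := by
  have := H.cont
  refine ⟨by unfold bet; fun_prop, ?_⟩
  rintro ⟨⟨b, t⟩, z⟩ ((hb | ht | ht) | hz)
  · simp [bet, H.bd b hb]
  · simp only at ht; simp [bet, ht, H.zero]
  · simp only at ht
    simp only [bet, ht, H.one]
    rw [← bs_inv, zt_comm_bs]
    rw [mul_inv_cancel_right, ← bs_mul]; simp [bs_one]
  · simp only at hz; simp [bet, hz, zt_one]

theorem EP.mul (H : EP B0 F h h') (K : EP B0 F' k k') :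
    EP B0 (fun y => F y * F' y) (fun b => h b * k b) (fun b => h' b * k' b) where
  cont := H.cont.mul K.cont
  ch := H.ch.mul K.ch
  ch' := H.ch'.mul K.ch'
  bd b hb t := by simp [H.bd b hb, K.bd b hb]
  zero b := by simp [H.zero, K.zero]
  one b := by simp [H.one, K.one, bs_mul]

theorem EP.inv (H : EP B0 F h h') :
    EP B0 (fun y => (F y)⁻¹) (fun b => (h b)⁻¹) (fun b => (h' b)⁻¹) where
  cont := H.cont.inv
  ch := H.ch.inv
  ch' := H.ch'.inv
  bd b hb t := by simp [H.bd b hb]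
  zero b := by simp [H.zero]
  one b := by simp [H.one, bs_inv]

theorem EP.ext (H : EP B0 F h h') (e : α ↪ α') (f : β ↪ β') :
    EP B0 (fun y => MG.ext (e.sumMap f) (F y)) (fun b => MG.ext e (h b)) (fun b => MG.ext f (h' b)) where
  cont := by have := H.cont; fun_prop
  ch := by have := H.ch; fun_prop
  ch' := by have := H.ch'; fun_prop
  bd b hb t := by simp [H.bd b hb]
  zero b := by simp [H.zero]
  one b := by simp [H.one, ext_sumMap_bs]

theorem bet_ext {Y : Type*} (F : Y → GLm (α ⊕ β)) (e : α ↪ α') (f : β ↪ β') :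
    bet (fun y => ext (e.sumMap f) (F y)) = fun p => ext (e.sumMap f) (bet F p) := by
  ext1 p
  rw [bet, bet, ← map_inv, zt_ext, ← map_mul]

/-- The Bott map is multiplicative up to homotopy. -/
theorem bet_mul (H : EP B0 F h h') (K : EP B0 F' k k') :
    Htpy (LBd (IBd B0)) (bet (fun y => F y * F' y)) (fun p => bet F' p * bet F p) := by
  have hF := H.cont
  have hK := K.bet_rel
  have hK1 := hK.cont
  have : Htpy (LBd (IBd B0)) (fun p => F p.1 * bet F' p * (F p.1)⁻¹) (bet F') :=
    ⟨fun q => F (q.2.1.1, σ q.1 * q.2.1.2) * bet F' q.2 * (F (q.2.1.1, σ q.1 * q.2.1.2))⁻¹,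
      by fun_prop, by simp, by simp [H.zero], fun t p hp => by simp [hK.bd p hp]⟩
  have := this.mul (Htpy.refl (Y0 := LBd (IBd B0)) H.bet_rel.cont)
  refine Htpy.trans (Htpy.of_eq (H.mul K).bet_rel.cont ?_) this
  ext1 p
  simp only [bet]
  group

theorem bet_one {Y : Type*} : bet (fun _ : Y => (1 : GLm (α ⊕ β))) = fun _ => 1 := by
  ext1 p; simp [bet]

theorem EP.one' : EP B0 (fun _ => (1 : GLm (α ⊕ β))) (fun _ => 1) (fun _ => 1) where
  cont := continuous_const
  ch := continuous_const
  ch' := continuous_const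
  bd _ _ _ := rfl
  zero _ := rfl
  one _ := bs_one.symm

theorem bet_inv (H : EP B0 F h h') :
    Htpy (LBd (IBd B0)) (bet (fun y => (F y)⁻¹)) (fun p => (bet F p)⁻¹) := by
  have h1 := bet_mul H H.inv
  simp only [mul_inv_cancel, bet_one] at h1
  have h2 := h1.symm.mul (Htpy.refl (Y0 := LBd (IBd B0)) H.bet_rel.inv.cont)
  simpa using h2

theorem EP.pow (H : EP B0 F h h') (n : ℕ) :
    EP B0 (fun y => F y ^ n) (fun b => h b ^ n) (fun b => h' b ^ n) := by
  induction n with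
  | zero => simpa using EP.one'
  | succ n ih => simpa only [pow_succ] using ih.mul H

theorem bet_pow (H : EP B0 F h h') (n : ℕ) :
    Htpy (LBd (IBd B0)) (bet (fun y => F y ^ n)) (fun p => bet F p ^ n) := by
  induction n with
  | zero => simpa [bet_one] using null_one
  | succ n ih =>
    simp only [pow_succ]
    refine (bet_mul (H.pow n) H).trans ?_
    have := (Htpy.refl (Y0 := LBd (IBd B0)) H.bet_rel.cont).mul ih
    refine this.trans (Htpy.of_eq this.cont_right ?_)
    ext1 p; rw [← pow_succ', pow_succ]

theorem EP.zpow (H : EP B0 F h h') (j : ℤ) :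
    EP B0 (fun y => F y ^ j) (fun b => h b ^ j) (fun b => h' b ^ j) := by
  rcases j with n | n
  · simpa using H.pow n
  · simpa only [zpow_negSucc] using (H.pow (n + 1)).inv

theorem bet_zpow (H : EP B0 F h h') (j : ℤ) :
    Htpy (LBd (IBd B0)) (bet (fun y => F y ^ j)) (fun p => bet F p ^ j) := by
  rcases j with n | n
  · simpa using bet_pow H n
  · simp only [zpow_negSucc]
    exact (bet_inv (H.pow (n + 1))).trans (bet_pow H (n + 1)).inv

/-- Multiplying `F` by a block diagonal map does not change the Bott map. -/
theorem bet_mul_bs {Y : Type*} (F : Y → GLm (α ⊕ β)) (u : Y → GLm α) (v : Y → GLm β) :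
    bet (fun y => F y * bs (u y) (v y)) = bet F := by
  ext1 p
  simp only [bet, mul_inv_rev]
  have := zt_comm_bs p.2 (u p.1) (v p.1)
  rw [← mul_assoc (zt p.2), ← bs_inv, zt_comm_bs, bs_inv]
  group

/-- The commutator of a loop and the clutching function is stably trivial, because the two can be
moved into complementary blocks. -/
theorem sn_bet_loop {Y : Type*} [TopologicalSpace Y] {Y0 : Set Y} {F : Y → GLm (α ⊕ β)}
    (hF : Rel Y0 F) : SN (LBd Y0) (bet F) := by
  obtain ⟨c, hc⟩ := ext_conj (Function.Embedding.inl : α ⊕ β ↪ (α ⊕ β) ⊕ (α ⊕ β))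
    Function.Embedding.inr
  obtain ⟨γ⟩ := joined_GL c
  have hF1 := hF.cont
  refine ⟨_, inferInstance, inferInstance, (Function.Embedding.inl : α ⊕ β ↪ (α ⊕ β) ⊕ (α ⊕ β)),
    fun q => ext Function.Embedding.inl (F q.2.1) *
      ((γ q.1 * ext Function.Embedding.inl (zt q.2.2) * (γ q.1)⁻¹) *
      (ext Function.Embedding.inl (F q.2.1))⁻¹ *
      (γ q.1 * ext Function.Embedding.inl (zt q.2.2) * (γ q.1)⁻¹)⁻¹), by fun_prop, ?_, ?_, ?_⟩
  · intro y; simp [bet]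
  · intro y
    simp only [γ.target, ← hc]
    rw [← map_inv, bs_inl_inr_comm, ext_inl_eq, ext_inr_eq, ← bs_inv, ← bs_mul, ← bs_mul]
    simp [bs_one]
  · rintro t ⟨y, z⟩ (hy | hz)
    · simp [bet, hF.bd y hy]
    · simp only at hz; simp [bet, hz, zt_one]

/-- If `h = ∂F` is stably null, so is the Bott map of `F`. -/
theorem sn_bet (H : EP B0 F h h') (hs : SN B0 h) : SN (LBd (IBd B0)) (bet F) := by
  obtain ⟨α₁, _, _, e, W, hW, hW0, hW1, hWb⟩ := hs
  have H1 := H.ext e (Function.Embedding.refl β)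
  set F1 : B × I → GLm (α₁ ⊕ β) := fun y => MG.ext (e.sumMap (Function.Embedding.refl β)) (F y) *
    bs ((W (σ y.2, y.1))⁻¹) 1 with hF1
  have hF1c : Continuous F1 := by have := H1.cont; fun_prop
  have hW0' : ∀ b, W (0, b) = MG.ext e (h b) := hW0
  have hF1one : ∀ b, F1 (b, 1) = bs 1 (h' b) := fun b => by
    simp only [hF1, H1.one, symm_one, hW0', ← bs_mul, ext_refl]; simp
  have hF1zero : ∀ b, F1 (b, 0) = 1 := fun b => by
    simp [hF1, H1.zero, hW1, bs_one, H.zero]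
  have hF1b : ∀ b ∈ B0, ∀ t, F1 (b, t) = 1 := fun b hb t => by
    simp [hF1, H.bd b hb, hWb _ b hb, H.rel.bd b hb, bs_one]
  let j : α₁ ⊕ β ↪ α₁ ⊕ (α₁ ⊕ β) := (Function.Embedding.refl α₁).sumMap Function.Embedding.inr
  let F2 : B × I → GLm (α₁ ⊕ (α₁ ⊕ β)) := fun y => MG.ext j (F1 y) * bs 1 ((F1 y)⁻¹)
  have hF2 : Rel (IBd B0) F2 := by
    refine ⟨by fun_prop, ?_⟩
    rintro ⟨b, t⟩ (hb | ht | ht)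
    · simp [F2, hF1b b hb, bs_one]
    · simp only at ht; simp [F2, ht, hF1zero, bs_one]
    · simp only at ht
      simp only [F2, ht, hF1one, j, ext_sumMap_bs, ext_inr_eq, ← bs_mul]
      simp [bs_one]
  have h3 := sn_bet_loop hF2
  have h4 : bet F2 = fun p => MG.ext ((e.sumMap (Function.Embedding.refl β)).trans j) (bet F p) := by
    simp only [F2]
    rw [bet_mul_bs, bet_ext, hF1, bet_mul_bs, bet_ext]
    funext p
    exact (ext_trans _ _ _).symm
  rw [h4] at h3
  exact ((seq_ext H.bet_rel _).sn_iff H.bet_rel (H.bet_rel.ext _)).2 h3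

/-- The stable class of the Bott map of `F` depends only on the stable class of `∂F`. -/
theorem bet_seq {G : B × I → GLm (α' ⊕ β')} {g : B → GLm α'} {g' : B → GLm β'}
    (H : EP B0 F h h') (K : EP B0 G g g') (hs : SEq B0 h g) :
    SEq (LBd (IBd B0)) (bet F) (bet G) := by
  have H1 := H.ext (Function.Embedding.inl : α ↪ α ⊕ α') (Function.Embedding.inl : β ↪ β ⊕ β')
  have K1 := K.ext (Function.Embedding.inr : α' ↪ α ⊕ α') (Function.Embedding.inr : β' ↪ β ⊕ β')
  have h1 := K1.inv.mul H1
  have h2 : SN B0 (fun b => (MG.ext (Function.Embedding.inr : α' ↪ α ⊕ α') (g b))⁻¹ *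
      MG.ext (Function.Embedding.inl : α ↪ α ⊕ α') (h b)) := by
    have := hs.sn_mul_inv H.rel K.rel (Function.Embedding.inl : α ↪ α ⊕ α')
      (Function.Embedding.inr : α' ↪ α ⊕ α')
    convert this using 2 with b
    rw [← map_inv, bs_inl_inr_comm]; rfl
  have h3 := sn_bet h1 h2
  have h4 := (bet_mul K1.inv H1).trans
    ((Htpy.refl (Y0 := LBd (IBd B0)) H1.bet_rel.cont).mul (bet_inv K1))
  have h5 := (h4.seq.sn_iff h1.bet_rel (H1.bet_rel.mul K1.bet_rel.inv)).1 h3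
  rw [bet_ext, bet_ext] at h5
  exact SN.seq_of_mul_inv K.bet_rel h5

/-- Every map is the boundary value of a path of maps, by the rotation null-homotopy of
`h ⊕ h⁻¹`. -/
theorem exists_EP {h : B → GLm α} (hh : Rel B0 h) :
    ∃ F : B × I → GLm (α ⊕ α), EP B0 F h (fun b => (h b)⁻¹) := by
  obtain ⟨c, hc⟩ := ext_conj (Function.Embedding.inl : α ↪ α ⊕ α) Function.Embedding.inr
  obtain ⟨γ⟩ := joined_GL c
  have h1 := hh.cont
  refine ⟨fun y => MG.ext Function.Embedding.inl (h y.1) *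
    (γ y.2 * MG.ext Function.Embedding.inl ((h y.1)⁻¹) * (γ y.2)⁻¹), by fun_prop, h1, h1.inv, ?_, ?_, ?_⟩
  · intro b hb t; simp [hh.bd b hb]
  · intro b; simp
  · intro b
    simp only [γ.target, ← hc]
    rfl

end Bott

end

section

/-! ### Injectivity of the Bott map -/

section Inj

variable {ι : Type} [Fintype ι] [DecidableEq ι]

theorem isUnit_cut {P : Matrix ι ι ℂ} (hP : P * P = P) (X : GLm ι)
    (hX : P * X.val = X.val * P) : IsUnit (P * X.val + (1 - P)) := by
  have hX' : P * (X⁻¹).val = (X⁻¹).val * P := by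
    have : (X⁻¹).val * (P * X.val) * (X⁻¹).val = (X⁻¹).val * (X.val * P) * (X⁻¹).val := by rw [hX]
    simp only [mul_assoc, Units.mul_inv, mul_one] at this
    rw [← this.symm]
    simp [← mul_assoc]
  refine IsUnit.of_mul_eq_one (P * (X⁻¹).val + (1 - P)) ?_
  have e1 : P * X.val * (P * (X⁻¹).val) = P := by
    rw [hX, mul_assoc, ← mul_assoc P P, hP, hX', ← mul_assoc]; simp
  have e2 : P * X.val * (1 - P) = 0 := by rw [hX, mul_assoc, mul_sub, mul_one, hP]; simp
  have e3 : (1 - P) * (P * (X⁻¹).val) = 0 := by rw [← mul_assoc, sub_mul, one_mul, hP]; simp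
  have e4 : (1 - P) * (1 - P) = 1 - P := by simp [sub_mul, mul_sub, hP]
  rw [add_mul, mul_add, mul_add, e1, e2, e3, e4]; simp

/-- The embedding of `ι` as the `m`-th block of `Fin D × ι`. -/
def blk (ι : Type) {m D : ℕ} (hD : m + 1 ≤ D) : ι ↪ Fin D × ι where
  toFun i := (⟨m, hD⟩, i)
  inj' _ _ h := (Prod.ext_iff.1 h).2

variable {m D : ℕ} (hD : m + 1 ≤ D)

theorem embM_blk (x : Fin D × ι) (i : ι) : embM (blk ι hD) x i =
    if (x.1 : ℕ) = m then (if x.2 = i then 1 else 0) else 0 := by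
  have : x = (blk ι hD) i ↔ (x.1 : ℕ) = m ∧ x.2 = i := by
    rw [Prod.ext_iff, Fin.ext_iff]; rfl
  rw [embM, Matrix.of_apply]
  simp only [this, ite_and]

theorem stdP_eq (p : Matrix ι ι ℂ) : stdP m D p =
    stdP m D 0 + embM (blk ι hD) * p * (embM (blk ι hD)).transpose := by
  have key : ∀ (i j : Fin D × ι), (embM (blk ι hD) * p * (embM (blk ι hD)).transpose) i j =
      if (i.1 : ℕ) = m ∧ (j.1 : ℕ) = m then p i.2 j.2 else 0 := by
    rintro ⟨a, i⟩ ⟨b, j⟩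
    simp only [Matrix.mul_apply, Matrix.transpose_apply, embM_blk]
    by_cases ha : (a : ℕ) = m <;> by_cases hb : (b : ℕ) = m <;> simp [ha, hb, eq_comm]
  ext i j
  rw [Matrix.add_apply, key]
  simp only [stdP, Matrix.of_apply, Fin.ext_iff]
  split_ifs <;> first | omega | simp_all

theorem stdP_blk : stdP m D (0 : Matrix ι ι ℂ) * embM (blk ι hD) = 0 := by
  ext i j
  rw [Matrix.mul_apply, Matrix.zero_apply]
  refine Finset.sum_eq_zero fun x _ => ?_
  rw [embM_blk]
  simp only [stdP, Matrix.of_apply, Fin.ext_iff]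
  split_ifs <;> first | omega | simp

theorem blk_stdP : (embM (blk ι hD)).transpose * stdP m D (0 : Matrix ι ι ℂ) = 0 := by
  ext i j
  rw [Matrix.mul_apply, Matrix.zero_apply]
  refine Finset.sum_eq_zero fun x _ => ?_
  rw [Matrix.transpose_apply, embM_blk]
  simp only [stdP, Matrix.of_apply, Fin.ext_iff]
  split_ifs <;> first | omega | simp

theorem extM_stdP (X p : Matrix ι ι ℂ) : extM (blk ι hD) X * stdP m D p =
    stdP m D 0 + embM (blk ι hD) * (X * p) * (embM (blk ι hD)).transpose := by
  have h1 := stdP_blk (ι := ι) hD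
  have h2 := blk_stdP (ι := ι) hD
  have h3 := embM_tr (blk ι hD)
  rw [stdP_eq hD, extM]
  generalize embM (blk ι hD) = J at *
  generalize stdP m D (0 : Matrix ι ι ℂ) = L at *
  have e1 : J * X * J.transpose * L = 0 := by rw [Matrix.mul_assoc, h2, Matrix.mul_zero]
  have e2 : J * J.transpose * L = 0 := by rw [Matrix.mul_assoc, h2, Matrix.mul_zero]
  have e3 : J * X * J.transpose * (J * p * J.transpose) = J * (X * p) * J.transpose := by
    simp only [Matrix.mul_assoc]
    rw [← Matrix.mul_assoc J.transpose J, h3, Matrix.one_mul]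
  have e4 : J * J.transpose * (J * p * J.transpose) = J * p * J.transpose := by
    simp only [Matrix.mul_assoc]
    rw [← Matrix.mul_assoc J.transpose J, h3, Matrix.one_mul]
  rw [mul_add, add_mul, add_mul, sub_mul, sub_mul, e1, e2, e3, e4, one_mul, one_mul]
  simp

theorem stdP_extM (X p : Matrix ι ι ℂ) : stdP m D p * extM (blk ι hD) X =
    stdP m D 0 + embM (blk ι hD) * (p * X) * (embM (blk ι hD)).transpose := by
  have h1 := stdP_blk (ι := ι) hD
  have h3 := embM_tr (blk ι hD)
  rw [stdP_eq hD, extM]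
  generalize embM (blk ι hD) = J at *
  generalize stdP m D (0 : Matrix ι ι ℂ) = L at *
  have e1 : L * (J * X * J.transpose) = 0 := by
    rw [← Matrix.mul_assoc, ← Matrix.mul_assoc, h1, Matrix.zero_mul, Matrix.zero_mul]
  have e2 : L * (J * J.transpose) = 0 := by rw [← Matrix.mul_assoc, h1, Matrix.zero_mul]
  have e3 : J * p * J.transpose * (J * X * J.transpose) = J * (p * X) * J.transpose := by
    simp only [Matrix.mul_assoc]
    rw [← Matrix.mul_assoc J.transpose J, h3, Matrix.one_mul]
  have e4 : J * p * J.transpose * (J * J.transpose) = J * p * J.transpose := by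
    simp only [Matrix.mul_assoc]
    rw [← Matrix.mul_assoc J.transpose J, h3, Matrix.one_mul]
  rw [mul_add, add_mul, add_mul, mul_sub, mul_sub, e1, e2, e3, e4, mul_one, mul_one]
  simp [add_comm]

variable {α β : Type} [Fintype α] [DecidableEq α] [Fintype β] [DecidableEq β]

/-- The projection onto the first block. -/
def p0 (α β : Type) [DecidableEq α] : Matrix (α ⊕ β) (α ⊕ β) ℂ := Matrix.fromBlocks 1 0 0 0

theorem p0_idem : p0 α β * p0 α β = p0 α β := by simp [p0, Matrix.fromBlocks_multiply]

theorem zt_p0 (z : Circle) : (zt z : GLm (α ⊕ β)).val = 1 - p0 α β + (z : ℂ) • p0 α β := by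
  rw [zt_val]
  ext i j
  rcases i with i | i <;> rcases j with j | j <;>
    simp [p0, Matrix.diagonal_apply, Matrix.one_apply, Matrix.smul_apply]

theorem p0_bs (u : GLm α) (v : GLm β) : p0 α β * (bs u v).val = (bs u v).val * p0 α β := by
  simp [p0, bs_val, Matrix.fromBlocks_multiply]

theorem cut_bs (u : GLm α) (v : GLm β) :
    stdP m D (p0 α β) * (ext (blk (α ⊕ β) hD) (bs u v)).val + (1 - stdP m D (p0 α β)) =
      (ext (blk (α ⊕ β) hD) (ext Function.Embedding.inl u)).val := by
  rw [ext_val, ext_val, ext_val, stdP_extM, stdP_eq hD (p0 α β), extM, extM_inl]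
  have : p0 α β * (bs u v).val = Matrix.fromBlocks u.val 0 0 1 - 1 + p0 α β := by
    rw [p0, bs_val, Matrix.fromBlocks_multiply]
    ext i j
    rcases i with i | i <;> rcases j with j | j <;> simp [Matrix.one_apply]
  rw [this, Matrix.mul_add, Matrix.mul_sub, Matrix.add_mul, Matrix.sub_mul, Matrix.mul_one]
  abel

variable {B : Type*} [TopologicalSpace B] {B0 : Set B} [CompactSpace B] [T2Space B]
variable {F : B × I → GLm (α ⊕ β)} {h : B → GLm α} {h' : B → GLm β}

/-- If the Bott map of `F` is null-homotopic, then `∂F` is stably null: the null-homotopy is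
approximated by matrix polynomials, and the spectral projections of these give a homotopy of
idempotents, hence a deformation of `F` into the centralizer of the constant idempotent. -/
theorem sn_of_bet_null (H : EP B0 F h h') (hn : Null (LBd (IBd B0)) (bet F)) : SN B0 h := by
  obtain ⟨U, hU, hU0, hU1, hUb⟩ := hn
  have hF := H.cont
  have hFi : Continuous fun y => ((F y)⁻¹).val := Units.continuous_val.comp hF.inv
  have hFv : Continuous fun y => (F y).val := Units.continuous_val.comp hF
  let p : B × I → Matrix (α ⊕ β) (α ⊕ β) ℂ := fun y => (F y).val * p0 α β * ((F y)⁻¹).val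
  have hp : Continuous p := (hFv.mul continuous_const).mul hFi
  have hpi : ∀ y, p y * p y = p y := fun y => by
    simp only [p, mul_assoc]
    rw [← mul_assoc ((F y)⁻¹).val (F y).val, Units.inv_mul, one_mul, ← mul_assoc (p0 α β) (p0 α β),
      p0_idem]
  have hpb : ∀ y ∈ IBd B0, p y = p0 α β := by
    rintro ⟨b, t⟩ (hb | ht | ht)
    · simp [p, H.bd b hb]
    · simp only at ht; simp [p, ht, H.zero]
    · simp only at ht
      simp only [p, ht, H.one, ← p0_bs]
      rw [mul_assoc, Units.mul_inv, mul_one]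
  have hpF : ∀ y (z : Circle), (bet F (y, z) * zt z).val = 1 - p y + (z : ℂ) • p y := fun y z => by
    have : bet F (y, z) * zt z = F y * zt z * (F y)⁻¹ := by simp only [bet]; group
    rw [this, Units.val_mul, Units.val_mul, zt_p0]
    simp only [p, mul_add, add_mul, mul_sub, sub_mul, mul_one, Units.mul_inv, Matrix.mul_smul,
      Matrix.smul_mul]
  let V : (I × (B × I)) × Circle → Matrix (α ⊕ β) (α ⊕ β) ℂ := fun q =>
    (U (q.1.1, (q.1.2, q.2)) * zt q.2).val
  have hV : Continuous V := by
    apply Units.continuous_val.comp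
    fun_prop
  let r : I × (B × I) → Matrix (α ⊕ β) (α ⊕ β) ℂ := fun x =>
    ((1 - (x.1 : ℝ) : ℝ) : ℂ) • p x.2 + ((x.1 : ℝ) : ℂ) • p0 α β
  have hr : Continuous r := by fun_prop
  obtain ⟨m, D, hD, c, hc, hcs, hu⟩ := approx V hV (fun q => Units.isUnit _) r hr
  have hunit : ∀ x, ∀ z : ℂ, ‖z‖ = 1 → IsUnit (qv (c x) D z) := fun x z hz => by
    have := hu x ⟨z, by simpa [Submonoid.unitSphere] using hz⟩ 1
    simpa using this
  have hc0 : ∀ y, c (0, y) = stdA m (p y) := fun y => by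
    have hr0 : r (0, y) = p y := by simp [r]
    funext l
    rw [hcs (0, y) (fun z => ?_) l, hr0]
    rw [hr0, ← hpF]
    simp only [V, hU0]
  have hc1 : ∀ y, c (1, y) = stdA m (p0 α β) := fun y => by
    have hr0 : r (1, y) = p0 α β := by simp [r]
    funext l
    rw [hcs (1, y) (fun z => ?_) l, hr0]
    rw [hr0, ← zt_p0]
    simp only [V, hU1, one_mul]
  have hcb : ∀ s, ∀ y ∈ IBd B0, c (s, y) = stdA m (p0 α β) := fun s y hy => by
    have hr0 : r (s, y) = p0 α β := by
      simp only [r, hpb y hy]; rw [← add_smul]; simp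
    funext l
    rw [hcs (s, y) (fun z => ?_) l, hr0]
    rw [hr0, ← zt_p0]
    simp only [V]
    rw [hUb s (y, z) (Or.inl hy), H.bet_rel.bd (y, z) (Or.inl hy), one_mul]
  let K : (B × I) × I → Matrix (Fin D × (α ⊕ β)) (Fin D × (α ⊕ β)) ℂ := fun q => Pm (c (q.2, q.1)) D
  have hK : Continuous K := (continuous_Pm hc hunit).comp continuous_swap
  obtain ⟨g, hg, hg0, hgK, hgb⟩ := lift_idem K hK fun q => Pm_idem (hunit _)
  set P := stdP m D (p0 α β) with hP
  have hK0 : ∀ y, K (y, 0) = stdP m D (p y) := fun y => by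
    have := hunit (0, y)
    simp only [K]
    rw [hc0] at this ⊢
    exact Pm_std hD (hpi y) this
  have hstd : ∀ y s, c (s, y) = stdA m (p0 α β) → K (y, s) = P := fun y s hs => by
    have := hunit (s, y)
    simp only [K]
    rw [hs] at this ⊢
    exact Pm_std hD p0_idem this
  have hPP : ∀ b : B, P * P = P := fun b => by
    have := hstd (b, 0) 1 (hc1 _)
    rw [← this]; exact Pm_idem (hunit _)
  let X : B × I → GLm (Fin D × (α ⊕ β)) := fun y => g (y, 1) * ext (blk (α ⊕ β) hD) (F y)
  have hX : Continuous X := by fun_prop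
  have hXP : ∀ y, P * (X y).val = (X y).val * P := fun y => by
    have h1 := hgK y 1
    rw [hstd y 1 (hc1 y), hK0] at h1
    have h2 : (ext (blk (α ⊕ β) hD) (F y)).val * P = stdP m D (p y) * (ext (blk (α ⊕ β) hD) (F y)).val := by
      rw [hP, ext_val, extM_stdP, stdP_extM]
      simp only [p]
      rw [mul_assoc, Units.inv_mul, mul_one]
    simp only [X, Units.val_mul]
    rw [mul_assoc, h2, ← h1]
    simp only [mul_assoc]
    rw [← mul_assoc ((g (y, 1))⁻¹).val (g (y, 1)).val, Units.inv_mul, one_mul]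
  have hXb : ∀ y ∈ IBd B0, X y = ext (blk (α ⊕ β) hD) (F y) := fun y hy => by
    simp only [X]
    rw [hgb y (fun t => (hstd y t (hcb t y hy)).trans (hstd y 0 (hcb 0 y hy)).symm), one_mul]
  have hcu : ∀ y : B × I, IsUnit (P * (X y).val + (1 - P)) := fun y => isUnit_cut (hPP y.1) _ (hXP y)
  refine ⟨_, inferInstance, inferInstance, Function.Embedding.inl.trans (blk (α ⊕ β) hD),
    fun q => toGL (P * (X (q.2, σ q.1)).val + (1 - P)), ?_, ?_, ?_, ?_⟩
  · refine continuous_toGL ?_ fun q => hcu _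
    have : Continuous fun q : I × B => (X (q.2, σ q.1)).val := Units.continuous_val.comp (by fun_prop)
    exact (continuous_const.mul this).add continuous_const
  · intro b
    simp only [symm_zero]
    rw [hXb (b, 1) (Or.inr (Or.inr rfl)), H.one, cut_bs, toGL_coe, ext_trans]
  · intro b
    simp only [symm_one]
    rw [hXb (b, 0) (Or.inr (Or.inl rfl)), H.zero, map_one, Units.val_one, mul_one,
      add_sub_cancel, ← Units.val_one, toGL_coe]
  · intro t b hb
    simp only
    rw [hXb (b, σ t) (Or.inl hb), H.bd b hb, map_one, Units.val_one, mul_one,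
      add_sub_cancel, ← Units.val_one, toGL_coe, H.rel.bd b hb, map_one]

theorem sn_of_sn_bet (H : EP B0 F h h') (hn : SN (LBd (IBd B0)) (bet F)) : SN B0 h := by
  obtain ⟨μ, _, _, e, hn⟩ := hn
  let f : α ⊕ β ↪ α ⊕ (β ⊕ μ) := (Function.Embedding.refl α).sumMap Function.Embedding.inl
  have h1 : Null (LBd (IBd B0)) (fun p => MG.ext f (bet F p)) := by
    refine (htpy_ext H.bet_rel.cont H.bet_rel.bd f
      (e.trans (Function.Embedding.inr.trans Function.Embedding.inr))).trans ?_
    have := hn.ext (Function.Embedding.inr.trans Function.Embedding.inr : μ ↪ α ⊕ (β ⊕ μ))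
    simpa only [ext_trans, map_one] using this
  rw [← bet_ext] at h1
  have := sn_of_bet_null (H.ext _ _) h1
  simpa only [ext_refl] using this

end Inj

end

section

/-! ### Surjectivity of the Bott map -/

section Norm

variable {ι κ : Type} [Fintype ι] [DecidableEq ι] [Fintype κ] [DecidableEq κ]
variable {Y : Type*} [TopologicalSpace Y] {Y0 : Set Y} {y0 : Y}

/-- Normalization of a family of loops `Q`, so that the result is `1` at `z = 1` and over `y0`. -/
noncomputable def Nm {G : Type*} [Group G] (y0 : Y) (Q : Y × Circle → G) (p : Y × Circle) : G :=
  Q p * (Q (p.1, 1))⁻¹ * (Q (y0, p.2) * (Q (y0, 1))⁻¹)⁻¹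

theorem Nm_mul {G : Type*} [Group G] (Q : Y × Circle → G) (R : Y → G) :
    Nm y0 (fun p => Q p * R p.1) = Nm y0 Q := by
  ext1 p
  simp only [Nm]
  group

theorem Nm_map {G H : Type*} [Group G] [Group H] (φ : G →* H) (Q : Y × Circle → G) :
    Nm y0 (fun p => φ (Q p)) = fun p => φ (Nm y0 Q p) := by
  ext1 p
  simp only [Nm, map_mul, map_inv]

variable {G : Type*} [TopologicalSpace G] [Group G] [IsTopologicalGroup G]

theorem Nm_rel {Q : Y × Circle → G} (hQ : Continuous Q)
    (hb : ∀ y ∈ Y0, ∀ z, Q (y, z) = Q (y0, z)) : Rel (LBd Y0) (Nm y0 Q) := by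
  refine ⟨by unfold Nm; fun_prop, ?_⟩
  rintro ⟨y, z⟩ (hy | hz)
  · simp [Nm, hb y hy]
  · simp only at hz; simp [Nm, hz]

theorem Nm_htpy {Q : I × (Y × Circle) → G} (hQ : Continuous Q)
    (hb : ∀ t, ∀ y ∈ Y0, ∀ z, Q (t, (y, z)) = Q (t, (y0, z))) :
    Htpy (LBd Y0) (Nm y0 fun p => Q (0, p)) (Nm y0 fun p => Q (1, p)) := by
  refine ⟨fun q => Nm y0 (fun p => Q (q.1, p)) q.2, by unfold Nm; fun_prop, fun _ => rfl,
    fun _ => rfl, fun t p hp => ?_⟩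
  simp only
  rw [(Nm_rel (Q := fun p => Q (t, p)) (by fun_prop) (hb t)).bd p hp,
    (Nm_rel (Q := fun p => Q (0, p)) (by fun_prop) (hb 0)).bd p hp]

/-- Matrix version of the homotopy invariance of the normalization. -/
theorem Nm_htpyM {M : I × (Y × Circle) → Matrix ι ι ℂ} (hM : Continuous M)
    (hu : ∀ q, IsUnit (M q)) (hb : ∀ t, ∀ y ∈ Y0, ∀ z, M (t, (y, z)) = M (t, (y0, z))) :
    Htpy (LBd Y0) (Nm y0 fun p => toGL (M (0, p))) (Nm y0 fun p => toGL (M (1, p))) :=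
  Nm_htpy (Q := fun q => toGL (M q)) (continuous_toGL hM hu) fun t y hy z => by
    simp only [hb t y hy z]

end Norm

section Surj

variable {ι : Type} [Fintype ι] [DecidableEq ι]
variable {B : Type*} [TopologicalSpace B] {B0 : Set B} {y0 : B × I}

/-- Loops which are stably in the image of the Bott map. -/
def Good (B0 : Set B) (f : (B × I) × Circle → GLm ι) : Prop :=
  ∃ (α β : Type) (_ : Fintype α) (_ : DecidableEq α) (_ : Fintype β) (_ : DecidableEq β)
    (F : B × I → GLm (α ⊕ β)) (h : B → GLm α) (h' : B → GLm β),
    EP B0 F h h' ∧ SEq (LBd (IBd B0)) f (bet F)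

theorem Good.of_seq {κ : Type} [Fintype κ] [DecidableEq κ] {f : (B × I) × Circle → GLm ι}
    {g : (B × I) × Circle → GLm κ} (hg : Good B0 g) (h : SEq (LBd (IBd B0)) f g)
    (hf : Rel (LBd (IBd B0)) f) (hg' : Rel (LBd (IBd B0)) g) : Good B0 f := by
  obtain ⟨α, β, _, _, _, _, F, k, k', H, K⟩ := hg
  exact ⟨α, β, inferInstance, inferInstance, inferInstance, inferInstance, F, k, k', H,
    h.trans K hf hg'⟩

theorem idem_diag {π : Matrix ι ι ℂ} (h : π * π = π) :
    ∃ (α β : Type) (_ : Fintype α) (_ : DecidableEq α) (_ : Fintype β) (_ : DecidableEq β)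
      (e : ι ≃ α ⊕ β) (γ : GLm (α ⊕ β)),
      π.submatrix e.symm e.symm = γ.val * p0 α β * (γ⁻¹).val := by
  have hc : IsCompl (LinearMap.range (Matrix.toLin' π)) (LinearMap.ker (Matrix.toLin' π)) := by
    have : IsIdempotentElem (Matrix.toLin' π) := by
      rw [IsIdempotentElem, Module.End.mul_eq_comp, ← Matrix.toLin'_mul, h]
    exact LinearMap.IsIdempotentElem.isCompl this
  let b1 := Module.finBasis ℂ (LinearMap.range (Matrix.toLin' π))
  let b2 := Module.finBasis ℂ (LinearMap.ker (Matrix.toLin' π))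
  let b := (b1.prod b2).map (Submodule.prodEquivOfIsCompl _ _ hc)
  have hb1 : ∀ i, π *ᵥ b (Sum.inl i) = b (Sum.inl i) := fun i => by
    obtain ⟨w, hw⟩ := (b1 i).2
    have : b (Sum.inl i) = (b1 i : ι → ℂ) := by simp [b]
    rw [this, ← hw, Matrix.toLin'_apply, Matrix.mulVec_mulVec, h]
  have hb2 : ∀ i, π *ᵥ b (Sum.inr i) = 0 := fun i => by
    have : b (Sum.inr i) = (b2 i : ι → ℂ) := by simp [b]
    rw [this]; exact (b2 i).2
  let e : ι ≃ _ := (Pi.basisFun ℂ ι).indexEquiv b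
  let b' := b.reindex e.symm
  have hi := b'.invertibleToMatrix (Pi.basisFun ℂ ι)
  let S : Matrix ι ι ℂ := (Pi.basisFun ℂ ι).toMatrix b'
  let S' : Matrix ι ι ℂ := b'.toMatrix (Pi.basisFun ℂ ι)
  have h1 : S * S' = 1 := Module.Basis.toMatrix_mul_toMatrix_flip _ _
  have h2 : S' * S = 1 := Module.Basis.toMatrix_mul_toMatrix_flip _ _
  have hS : ∀ i j, S i j = b (e j) i := fun i j => by
    simp [S, Module.Basis.toMatrix_apply, b']
  refine ⟨_, _, inferInstance, inferInstance, inferInstance, inferInstance, e,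
    ⟨S.submatrix e.symm e.symm, S'.submatrix e.symm e.symm, ?_, ?_⟩, ?_⟩
  · rw [Matrix.submatrix_mul_equiv, h1, Matrix.submatrix_one_equiv]
  · rw [Matrix.submatrix_mul_equiv, h2, Matrix.submatrix_one_equiv]
  · have key : (π * S).submatrix e.symm e.symm = S.submatrix e.symm e.symm * p0 _ _ := by
      ext i j
      rw [Matrix.submatrix_apply, Matrix.mul_apply, Matrix.mul_apply]
      simp only [hS, Matrix.submatrix_apply, Equiv.apply_symm_apply]
      rcases j with j | j
      · have := congrFun (hb1 j) (e.symm i)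
        rw [Matrix.mulVec, dotProduct] at this
        rw [this]; simp [p0, Matrix.one_apply]
      · have := congrFun (hb2 j) (e.symm i)
        rw [Matrix.mulVec, dotProduct] at this
        rw [this]; simp [p0]
    simp only [Units.inv_mk]
    rw [← key, Matrix.submatrix_mul_equiv, mul_assoc, h1, mul_one]

variable {α β : Type} [Fintype α] [DecidableEq α] [Fintype β] [DecidableEq β]

theorem bs_of_comm {X : GLm (α ⊕ β)} (h : p0 α β * X.val = X.val * p0 α β) :
    X = bs (toGL X.val.toBlocks₁₁) (toGL X.val.toBlocks₂₂) := by
  have aux : ∀ X : GLm (α ⊕ β), p0 α β * X.val = X.val * p0 α β →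
      X.val = Matrix.fromBlocks X.val.toBlocks₁₁ 0 0 X.val.toBlocks₂₂ := fun X h => by
    have h12 : X.val.toBlocks₁₂ = 0 ∧ X.val.toBlocks₂₁ = 0 := by
      rw [← Matrix.fromBlocks_toBlocks X.val, p0, Matrix.fromBlocks_multiply,
        Matrix.fromBlocks_multiply, Matrix.fromBlocks_inj] at h
      simp at h
      exact ⟨h.1, h.2.symm⟩
    conv_lhs => rw [← Matrix.fromBlocks_toBlocks X.val, h12.1, h12.2]
  have hX := aux X h
  have hX' := aux X⁻¹ (by
    have : (X⁻¹).val * (p0 α β * X.val) * (X⁻¹).val = (X⁻¹).val * (X.val * p0 α β) * (X⁻¹).val := by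
      rw [h]
    simp only [mul_assoc, Units.mul_inv, mul_one] at this
    rw [this]
    simp [← mul_assoc])
  have hm : X.val * (X⁻¹).val = 1 := X.mul_inv
  rw [hX, hX', Matrix.fromBlocks_multiply, ← Matrix.fromBlocks_one, Matrix.fromBlocks_inj] at hm
  simp only [Matrix.mul_zero, add_zero, zero_add] at hm
  ext1
  rw [bs_val, toGL_val (IsUnit.of_mul_eq_one _ hm.1), toGL_val (IsUnit.of_mul_eq_one _ hm.2.2.2)]
  exact hX

theorem isUnit_zeta {p : Matrix ι ι ℂ} (hp : p * p = p) (z : Circle) :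
    IsUnit (1 - p + (z : ℂ) • p) := by
  refine IsUnit.of_mul_eq_one (1 - p + ((z⁻¹ : Circle) : ℂ) • p) ?_
  have hz : (z : ℂ) * ((z⁻¹ : Circle) : ℂ) = 1 := by rw [← Circle.coe_mul]; simp
  have e1 : (1 - p) * (1 - p) = 1 - p := by simp [sub_mul, mul_sub, hp]
  have e2 : (1 - p) * p = 0 := by simp [sub_mul, hp]
  have e3 : p * (1 - p) = 0 := by simp [mul_sub, hp]
  simp only [add_mul, mul_add, Matrix.smul_mul, Matrix.mul_smul, e1, e2, e3, hp, smul_smul, hz]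
  simp

/-- The loop of a family of idempotents which is constant on the boundary is in the image of
the Bott map: trivialize the family along the interval. -/
theorem good_idem [CompactSpace B] {p : B × I → Matrix ι ι ℂ} (hp : Continuous p)
    (hpp : ∀ y, p y * p y = p y) (hb : ∀ y ∈ IBd B0, p y = p y0) :
    Good B0 (Nm y0 fun q => toGL (1 - p q.1 + (q.2 : ℂ) • p q.1)) := by
  set W : (B × I) × Circle → GLm ι := fun q => toGL (1 - p q.1 + (q.2 : ℂ) • p q.1) with hWdef
  have hWv : ∀ q, (W q).val = 1 - p q.1 + (q.2 : ℂ) • p q.1 := fun q =>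
    toGL_val (isUnit_zeta (hpp _) _)
  have hz0 : ∀ b, p (b, 0) = p y0 := fun b => hb _ (Or.inr (Or.inl rfl))
  obtain ⟨g, hg, hg0, hgp, hgb⟩ := lift_idem p hp hpp
  obtain ⟨α, β, _, _, _, _, e, γ, hγ⟩ := idem_diag (hpp y0)
  have hW : Continuous W := by
    refine continuous_toGL ?_ fun q => isUnit_zeta (hpp _) _
    have : Continuous fun q : (B × I) × Circle => (q.2 : ℂ) :=
      continuous_subtype_val.comp continuous_snd
    fun_prop
  have hrel : Rel (LBd (IBd B0)) (Nm y0 W) := Nm_rel hW fun y hy z => by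
    simp only [hWdef, hb y hy]
  have hgW : ∀ y z, W (y, z) = g y * W (y0, z) * (g y)⁻¹ := fun y z => by
    ext1
    simp only [Units.val_mul, hWv]
    have := hgp y.1 y.2
    rw [hz0] at this
    rw [← this]
    simp only [mul_add, add_mul, mul_sub, sub_mul, mul_one, Units.mul_inv, Matrix.mul_smul,
      Matrix.smul_mul]
  have hW1 : ∀ y, W (y, 1) = 1 := fun y => by ext1; rw [hWv]; simp
  have hNm : ∀ q, Nm y0 W q = g q.1 * W (y0, q.2) * (g q.1)⁻¹ * (W (y0, q.2))⁻¹ := fun q => by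
    simp only [Nm, hW1, inv_one, mul_one]
    rw [← hgW]
  have hext : ∀ M : Matrix ι ι ℂ, extM e.toEmbedding M = M.submatrix e.symm e.symm := fun M => by
    ext i j; rw [extM_equiv]; rfl
  have hWz : ∀ z, ext e.toEmbedding (W (y0, z)) = γ * zt z * γ⁻¹ := fun z => by
    ext1
    rw [ext_val, hext, hWv, Units.val_mul, Units.val_mul, zt_p0]
    simp only [mul_add, add_mul, mul_sub, sub_mul, mul_one, Units.mul_inv, Matrix.mul_smul,
      Matrix.smul_mul]
    rw [← hγ]
    simp [Matrix.submatrix_add, Matrix.submatrix_sub, Matrix.submatrix_smul]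
  let F : B × I → GLm (α ⊕ β) := fun y => γ⁻¹ * ext e.toEmbedding (g y) * γ
  have hF : Continuous F := by fun_prop
  have hcomm : ∀ b, p0 α β * (F (b, 1)).val = (F (b, 1)).val * p0 α β := fun b => by
    have h1 := hgp b 1
    rw [hz0, hb (b, 1) (Or.inr (Or.inr rfl))] at h1
    have h2 : (ext e.toEmbedding (g (b, 1))).val * (γ.val * p0 α β * (γ⁻¹).val) =
        (γ.val * p0 α β * (γ⁻¹).val) * (ext e.toEmbedding (g (b, 1))).val := by
      rw [← hγ, ext_val, hext, Matrix.submatrix_mul_equiv, Matrix.submatrix_mul_equiv]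
      congr 1
      conv_rhs => rw [← h1]
      simp [mul_assoc]
    simp only [F, Units.val_mul]
    have h3 := congrArg (fun M => (γ⁻¹).val * M * γ.val) h2
    simp only [mul_assoc, Units.inv_mul, mul_one, Units.inv_mul_cancel_left] at h3 ⊢
    exact h3.symm
  have hEP : EP B0 F (fun b => toGL (F (b, 1)).val.toBlocks₁₁)
      (fun b => toGL (F (b, 1)).val.toBlocks₂₂) := by
    have hFc : Continuous fun b => (F (b, 1)).val := Units.continuous_val.comp (by fun_prop)
    have hun : ∀ b, IsUnit (F (b, 1)).val.toBlocks₁₁ ∧ IsUnit (F (b, 1)).val.toBlocks₂₂ := by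
      intro b
      have := (F (b, 1)).isUnit
      have h2 := bs_of_comm (hcomm b)
      have h3 := congrArg (fun X : GLm (α ⊕ β) => X.val) h2
      simp only [bs_val] at h3
      rw [h3]
      simp
    refine ⟨hF, continuous_toGL ?_ fun b => (hun b).1, continuous_toGL ?_ fun b => (hun b).2, ?_, ?_, ?_⟩
    · exact continuous_matrix fun i j => hFc.matrix_elem _ _
    · exact continuous_matrix fun i j => hFc.matrix_elem _ _
    · intro b hb' t
      simp only [F]
      rw [hgb b (fun t => (hb (b, t) (Or.inl hb')).trans (hz0 b).symm)]
      simp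
    · intro b; simp [F, hg0]
    · intro b; exact bs_of_comm (hcomm b)
  refine ⟨α, β, inferInstance, inferInstance, inferInstance, inferInstance, F, _, _, hEP, ?_⟩
  refine ⟨α ⊕ β, inferInstance, inferInstance, e.toEmbedding, Function.Embedding.refl _, ?_⟩
  simp only [ext_refl]
  refine Htpy.trans (Htpy.of_eq (hrel.ext _).cont ?_)
    (htpy_conj hEP.bet_rel.cont hEP.bet_rel.bd (joined_GL γ)).symm
  ext1 q
  rw [hNm]
  simp only [map_mul, map_inv, hWz, bet, F]
  group

end Surj

end

section

section Surj

variable {ι : Type} [Fintype ι] [DecidableEq ι]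
variable {B : Type*} [TopologicalSpace B] {B0 : Set B} {y0 : B × I}

theorem continuous_coe_snd {X : Type*} [TopologicalSpace X] :
    Continuous fun q : X × Circle => (q.2 : ℂ) := continuous_subtype_val.comp continuous_snd

/-- Normalized pencils `1 - A + z A` are in the image of the Bott map: `lin_deform` moves them
to the loop of their spectral projection. -/
theorem good_pencil [CompactSpace B] {A : B × I → Matrix ι ι ℂ} (hA : Continuous A)
    (hu : ∀ y (z : Circle), IsUnit (1 - A y + (z : ℂ) • A y)) (hb : ∀ y ∈ IBd B0, A y = A y0) :
    Good B0 (Nm y0 fun q => toGL (1 - A q.1 + (q.2 : ℂ) • A q.1)) := by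
  have h : ∀ y, ∀ z : ℂ, ‖z‖ = 1 → IsUnit (1 - A y + z • A y) := fun y z hz =>
    hu y ⟨z, by simpa [Submonoid.unitSphere] using hz⟩
  have hp : Continuous fun y => lp (A y) := continuous_lp hA h
  have hc := continuous_coe_snd (X := B × I)
  let M : I × ((B × I) × Circle) → Matrix ι ι ℂ := fun q =>
    (1 - lp (A q.2.1)) * (1 - A q.2.1 + ((((q.1 : I) : ℝ) : ℂ) * (q.2.2 : ℂ)) • A q.2.1) +
      lp (A q.2.1) * ((((q.1 : I) : ℝ) : ℂ) • (1 - A q.2.1) + (q.2.2 : ℂ) • A q.2.1)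
  have hc2 : Continuous fun q : I × ((B × I) × Circle) => ((q.2.2 : Circle) : ℂ) :=
    hc.comp continuous_snd
  have hc1 : Continuous fun q : I × ((B × I) × Circle) => (((q.1 : I) : ℝ) : ℂ) := by fun_prop
  have hA' : Continuous fun q : I × ((B × I) × Circle) => A q.2.1 := by fun_prop
  have hp' : Continuous fun q : I × ((B × I) × Circle) => lp (A q.2.1) :=
    hp.comp (by fun_prop : Continuous fun q : I × ((B × I) × Circle) => q.2.1)
  have hM : Continuous M := by fun_prop
  have hMu : ∀ q, IsUnit (M q) := fun q =>
    lin_deform (h q.2.1) q.1 q.1.2.1 q.1.2.2 q.2.2 (Circle.norm_coe _)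
  have hMb : ∀ t, ∀ y ∈ IBd B0, ∀ z, M (t, (y, z)) = M (t, (y0, z)) := fun t y hy z => by
    simp only [M, hb y hy]
  have key := Nm_htpyM (y0 := y0) (Y0 := IBd B0) hM hMu hMb
  have hM1 : ∀ q, M (1, q) = 1 - A q.1 + (q.2 : ℂ) • A q.1 := fun q => by
    simp only [M, Set.Icc.coe_one, Complex.ofReal_one, one_mul, one_smul]
    rw [← add_mul]; simp
  let c : B × I → Matrix ι ι ℂ := fun y => (1 - lp (A y)) * (1 - A y) + lp (A y) * A y
  have hM0 : ∀ q, M (0, q) = (1 - lp (A q.1) + (q.2 : ℂ) • lp (A q.1)) * c q.1 := fun q => by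
    have e0 := lp_idem (h q.1)
    have e1 : (1 - lp (A q.1)) * (1 - lp (A q.1)) = 1 - lp (A q.1) := by simp [sub_mul, mul_sub, e0]
    have e2 : (1 - lp (A q.1)) * lp (A q.1) = 0 := by simp [sub_mul, e0]
    have e3 : lp (A q.1) * (1 - lp (A q.1)) = 0 := by simp [mul_sub, e0]
    simp only [M, c, Set.Icc.coe_zero, Complex.ofReal_zero, zero_mul, zero_smul, zero_add, add_zero]
    rw [add_mul, mul_add, mul_add, ← mul_assoc, ← mul_assoc, ← mul_assoc, ← mul_assoc, e1, e2]
    simp only [Matrix.smul_mul, e3, e0]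
    simp
  have hcu : ∀ y, IsUnit (c y) := fun y => by
    have := hMu (0, (y, 1))
    rw [hM0] at this
    simpa using this
  have hN0 : (Nm y0 fun p => toGL (M (0, p))) =
      Nm y0 fun q => toGL (1 - lp (A q.1) + (q.2 : ℂ) • lp (A q.1)) := by
    rw [← Nm_mul (fun q : (B × I) × Circle => toGL (1 - lp (A q.1) + (q.2 : ℂ) • lp (A q.1)))
      (fun y => toGL (c y))]
    congr 1
    ext1 q
    rw [hM0, toGL_mul (isUnit_zeta (lp_idem (h q.1)) _) (hcu _)]
  have hg := good_idem (B0 := B0) (y0 := y0) hp (fun y => lp_idem (h y)) fun y hy => by rw [hb y hy]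
  rw [hN0] at key
  simp only [hM1] at key
  have hr1 : Rel (LBd (IBd B0)) (Nm y0 fun q => toGL (1 - A q.1 + (q.2 : ℂ) • A q.1)) :=
    Nm_rel (continuous_toGL (by fun_prop) fun q => hu _ _) fun y hy z => by rw [hb y hy]
  refine hg.of_seq key.symm.seq hr1 ?_
  have hp1 : Continuous fun q : (B × I) × Circle => lp (A q.1) := hp.comp continuous_fst
  exact Nm_rel (continuous_toGL (by fun_prop) fun q => isUnit_zeta (lp_idem (h q.1)) _)
    fun y hy z => by rw [hb y hy]

theorem qv_succ (a : ℕ → Matrix ι ι ℂ) (D : ℕ) (z : ℂ) :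
    qv a (D + 1) z = a 0 + z • qv (fun l => a (l + 1)) D z := by
  rw [qv, Finset.sum_range_succ', qv, Finset.smul_sum, add_comm]
  simp [pow_succ', smul_smul]

theorem qv_zero (a : ℕ → Matrix ι ι ℂ) (z : ℂ) : qv a 0 z = a 0 := by simp [qv]

theorem good_lin [CompactSpace B] {c : B × I → ℕ → Matrix ι ι ℂ}
    (hc : ∀ l, Continuous fun y => c y l)
    (hu : ∀ y (z : Circle), IsUnit (qv (c y) 1 z)) (hb : ∀ y ∈ IBd B0, c y = c y0) :
    Good B0 (Nm y0 fun q => toGL (qv (c q.1) 1 q.2)) := by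
  have hq : ∀ y z, qv (c y) 1 z = c y 0 + z • c y 1 := fun y z => by
    rw [qv_succ, qv_zero]
  have hS : ∀ y, IsUnit (c y 0 + c y 1) := fun y => by
    have := hu y 1; rw [hq] at this; simpa using this
  have hSc : Continuous fun y => toGL (c y 0 + c y 1) :=
    continuous_toGL ((hc 0).add (hc 1)) hS
  have hSi : Continuous fun y => ((toGL (c y 0 + c y 1))⁻¹).val := Units.continuous_val.comp hSc.inv
  let A : B × I → Matrix ι ι ℂ := fun y => c y 1 * ((toGL (c y 0 + c y 1))⁻¹).val
  have hA : Continuous A := (hc 1).mul hSi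
  have hqA : ∀ y (z : ℂ), qv (c y) 1 z = (1 - A y + z • A y) * (c y 0 + c y 1) := fun y z => by
    have e : A y * (c y 0 + c y 1) = c y 1 := by
      conv_lhs => rw [← toGL_val (hS y)]
      simp only [A, mul_assoc, Units.inv_mul, mul_one]
    rw [hq, add_mul, sub_mul, one_mul, Matrix.smul_mul, e]
    abel
  have hAu : ∀ y (z : Circle), IsUnit (1 - A y + (z : ℂ) • A y) := fun y z => by
    have := hu y z
    rw [hqA] at this
    have h2 := this.mul (toGL (c y 0 + c y 1))⁻¹.isUnit
    have h3 : (c y 0 + c y 1) * ((toGL (c y 0 + c y 1))⁻¹).val = 1 := by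
      conv_lhs => enter [1]; rw [← toGL_val (hS y)]
      exact Units.mul_inv _
    rwa [mul_assoc, h3, mul_one] at h2
  have := good_pencil (B0 := B0) (y0 := y0) hA hAu fun y hy => by simp only [A, hb y hy]
  rw [← Nm_mul _ (fun y => toGL (c y 0 + c y 1))] at this
  simp only [← toGL_mul (hAu _ _) (hS _), ← hqA] at this
  exact this

/-- Normalized loops of matrix polynomials are in the image of the Bott map; the degree is
lowered by the companion trick. -/
theorem good_poly [CompactSpace B] (D : ℕ) : ∀ {ι : Type} [Fintype ι] [DecidableEq ι]
    {c : B × I → ℕ → Matrix ι ι ℂ} (_ : ∀ l, Continuous fun y => c y l)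
    (_ : ∀ y (z : Circle), IsUnit (qv (c y) (D + 1) z)) (_ : ∀ y ∈ IBd B0, c y = c y0),
    Good B0 (Nm y0 fun q => toGL (qv (c q.1) (D + 1) q.2)) := by
  induction D with
  | zero => intro ι _ _ c hc hu hb; exact good_lin hc hu hb
  | succ D ih =>
    intro ι _ _ c hc hu hb
    let c' : B × I → ℕ → Matrix (ι ⊕ ι) (ι ⊕ ι) ℂ := fun y l =>
      Matrix.fromBlocks (if l = 0 then c y 0 else 0) (c y (l + 1)) (if l = 1 then -1 else 0)
        (if l = 0 then 1 else 0)
    have hc' : ∀ l, Continuous fun y => c' y l := fun l => by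
      refine Continuous.matrix_fromBlocks ?_ (hc _) continuous_const continuous_const
      split_ifs
      · exact hc 0
      · exact continuous_const
    have hq' : ∀ y z, qv (c' y) (D + 1) z =
        Matrix.fromBlocks (c y 0) (qv (fun l => c y (l + 1)) (D + 1) z) (-z • 1) 1 := fun y z => by
      have : ∀ N, ∑ l ∈ Finset.range (N + 2), z ^ l • c' y l =
        Matrix.fromBlocks (c y 0) (∑ l ∈ Finset.range (N + 2), z ^ l • c y (l + 1)) (-z • 1) 1 := by
        intro N
        induction N with
        | zero => simp [Finset.sum_range_succ, c', Matrix.fromBlocks_smul, Matrix.fromBlocks_add]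
        | succ N ih =>
          rw [Finset.sum_range_succ, ih, Finset.sum_range_succ _ (N + 2)]
          simp [c', Matrix.fromBlocks_smul, Matrix.fromBlocks_add]
      exact this D
    let Q : (B × I) × Circle → Matrix ι ι ℂ := fun q => qv (c q.1) (D + 1 + 1) q.2
    let R : (B × I) × Circle → Matrix ι ι ℂ := fun q => qv (fun l => c q.1 (l + 1)) (D + 1) q.2
    have hz := continuous_coe_snd (X := B × I)
    have hQ : Continuous Q := continuous_qv (a := fun q : (B × I) × Circle => c q.1)
      (fun l => (hc l).comp continuous_fst) hz
    have hR : Continuous R := continuous_qv (a := fun (q : (B × I) × Circle) l => c q.1 (l + 1))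
      (fun l => (hc (l + 1)).comp continuous_fst) hz
    let M : I × ((B × I) × Circle) → Matrix (ι ⊕ ι) (ι ⊕ ι) ℂ := fun q =>
      Matrix.fromBlocks (Q q.2) (((q.1 : ℝ) : ℂ) • R q.2) 0 1 *
        Matrix.fromBlocks 1 0 ((-((q.1 : ℝ) : ℂ) * (q.2.2 : ℂ)) • 1) 1
    have hM : Continuous M := by
      have h1 : Continuous fun q : I × ((B × I) × Circle) => ((q.2.2 : Circle) : ℂ) :=
        hz.comp continuous_snd
      have h2 : Continuous fun q : I × ((B × I) × Circle) => (((q.1 : I) : ℝ) : ℂ) := by fun_prop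
      refine Continuous.mul ?_ ?_
      · exact Continuous.matrix_fromBlocks (by fun_prop) (by fun_prop) continuous_const continuous_const
      · exact Continuous.matrix_fromBlocks continuous_const continuous_const (by fun_prop) continuous_const
    have hMu : ∀ q, IsUnit (M q) := fun q => by
      refine IsUnit.mul ?_ ?_
      · rw [Matrix.isUnit_fromBlocks_zero₂₁]; exact ⟨hu _ _, isUnit_one⟩
      · rw [Matrix.isUnit_fromBlocks_zero₁₂]; exact ⟨isUnit_one, isUnit_one⟩
    have hMb : ∀ t, ∀ y ∈ IBd B0, ∀ z, M (t, (y, z)) = M (t, (y0, z)) := fun t y hy z => by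
      simp only [M, Q, R, hb y hy]
    have key := Nm_htpyM (y0 := y0) (Y0 := IBd B0) hM hMu hMb
    have hM0 : ∀ q, toGL (M (0, q)) = ext Function.Embedding.inl (toGL (Q q)) := fun q => by
      ext1
      rw [toGL_val (hMu _), ext_val, extM_inl, toGL_val (hu _ _)]
      simp [M, Matrix.fromBlocks_multiply, Q]
    have hM1 : ∀ q : (B × I) × Circle, M (1, q) = qv (c' q.1) (D + 1) q.2 := fun q => by
      rw [hq']
      simp [M, Matrix.fromBlocks_multiply, Q, R, qv_succ _ (D + 1)]
    have hu' : ∀ y (z : Circle), IsUnit (qv (c' y) (D + 1) z) := fun y z => by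
      rw [← hM1 (y, z)]; exact hMu _
    have hb' : ∀ y ∈ IBd B0, c' y = c' y0 := fun y hy => by simp only [c', hb y hy]
    simp only [hM0, hM1] at key
    have g1 := ih hc' hu' hb'
    rw [Nm_map] at key
    have hr1 : Rel (LBd (IBd B0)) (Nm y0 fun q => toGL (Q q)) :=
      Nm_rel (continuous_toGL hQ fun q => hu _ _) fun y hy z => by simp only [Q, hb y hy]
    have hr2 : Rel (LBd (IBd B0)) (Nm y0 fun q => toGL (qv (c' q.1) (D + 1) q.2)) := by
      refine Nm_rel (continuous_toGL ?_ fun q => hu' _ _) fun y hy z => by rw [hb' y hy]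
      simp only [← hM1]; fun_prop
    exact g1.of_seq ((seq_ext hr1 _).trans key.seq hr1 (hr1.ext _)) hr1 hr2

/-- The Bott map is stably surjective. -/
theorem bott_surj [CompactSpace B] [T2Space B] {u : (B × I) × Circle → GLm ι}
    (hu : Rel (LBd (IBd B0)) u) : Good B0 u := by
  rcases isEmpty_or_nonempty B with hB | ⟨⟨b0⟩⟩
  · refine ⟨ι, ι, inferInstance, inferInstance, inferInstance, inferInstance, fun _ => 1,
      fun _ => 1, fun _ => 1, EP.one', ι ⊕ ι, inferInstance, inferInstance, Function.Embedding.inl,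
      Function.Embedding.refl _, Htpy.of_eq (hu.ext _).cont ?_⟩
    ext1 q; exact (hB.false q.1.1).elim
  let y0 : B × I := (b0, 0)
  have hy0 : y0 ∈ IBd B0 := Or.inr (Or.inl rfl)
  obtain ⟨m, D, hD, c, hc, hcs, hun⟩ := approx (fun q => (u q).val)
    (Units.continuous_val.comp hu.cont) (fun q => (u q).isUnit) (fun _ => 0) continuous_const
  obtain ⟨D, rfl⟩ : ∃ D', D = D' + 1 := ⟨D - 1, by omega⟩
  have hcb : ∀ y ∈ IBd B0, c y = c y0 := fun y hy => by
    have aux : ∀ y ∈ IBd B0, c y = stdA m 0 := fun y hy => by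
      funext l
      refine hcs y (fun z => ?_) l
      rw [hu.bd (y, z) (Or.inl hy)]; simp
    rw [aux y hy, aux y0 hy0]
  have hcu : ∀ y (z : Circle), IsUnit (qv (c y) (D + 1) z) := fun y z => by simpa using hun y z 1
  have hz := continuous_coe_snd (X := B × I)
  have hqc : Continuous fun q : (B × I) × Circle => qv (c q.1) (D + 1) q.2 :=
    continuous_qv (a := fun q : (B × I) × Circle => c q.1) (fun l => (hc l).comp continuous_fst) hz
  let M : I × ((B × I) × Circle) → Matrix ι ι ℂ := fun q =>
    (1 - ((q.1 : ℝ) : ℂ)) • ((q.2.2 : ℂ) ^ m • (u q.2).val) + ((q.1 : ℝ) : ℂ) • qv (c q.2.1) (D + 1) q.2.2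
  have hM : Continuous M := by
    have h1 : Continuous fun q : I × ((B × I) × Circle) => ((q.2.2 : Circle) : ℂ) :=
      hz.comp continuous_snd
    have h2 : Continuous fun q : I × ((B × I) × Circle) => (((q.1 : I) : ℝ) : ℂ) := by fun_prop
    have h3 : Continuous fun q : I × ((B × I) × Circle) => (u q.2).val :=
      Units.continuous_val.comp (hu.cont.comp continuous_snd)
    have h4 := hqc.comp (continuous_snd (X := I))
    exact ((continuous_const.sub h2).smul ((h1.pow m).smul h3)).add (h2.smul h4)
  have key := Nm_htpyM (y0 := y0) (Y0 := IBd B0) hM (fun q => hun q.2.1 q.2.2 q.1)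
    fun t y hy z => by simp only [M, hcb y hy, hu.bd (y, z) (Or.inl hy), hu.bd (y0, z) (Or.inl hy0)]
  have e0 : (Nm y0 fun p => toGL (M (0, p))) = u := by
    have hv : ∀ p, toGL (M (0, p)) = u p * zl p.2 ^ m := fun p => by
      ext1
      rw [toGL_val (hun p.1 p.2 0)]
      simp [M, zl, smul_pow]
    ext1 p
    simp only [Nm, hv, hu.bd (p.1, 1) (Or.inr rfl), hu.bd (y0, 1) (Or.inr rfl),
      hu.bd (y0, p.2) (Or.inl hy0), zl_one]
    simp
  have e1 : (Nm y0 fun p => toGL (M (1, p))) = Nm y0 fun q => toGL (qv (c q.1) (D + 1) q.2) := by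
    simp [M]
  rw [e0, e1] at key
  refine (good_poly (B0 := B0) (y0 := y0) D hc hcu hcb).of_seq key.seq hu ?_
  exact Nm_rel (continuous_toGL hqc fun q => hcu _ _) fun y hy z => by simp only [hcb y hy]

end Surj

end

section

/-! ### Periodicity of the stable homotopy of cubes -/

section Transport

variable {Y Y' X : Type*} [TopologicalSpace Y] [TopologicalSpace Y'] [TopologicalSpace X]
variable {ι κ : Type} [Fintype ι] [DecidableEq ι] [Fintype κ] [DecidableEq κ]

/-- A relative quotient map: it is injective outside of the boundaries. -/
structure RQ (Y0' : Set Y') (Y0 : Set Y) (ψ : Y' → Y) : Prop where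
  cont : Continuous ψ
  surj : Function.Surjective ψ
  mem : ∀ y, ψ y ∈ Y0 ↔ y ∈ Y0'
  inj : ∀ a b, ψ a = ψ b → a = b ∨ (a ∈ Y0' ∧ b ∈ Y0')

variable {Y0' : Set Y'} {Y0 : Set Y} {ψ : Y' → Y}

theorem RQ.rel {G : Type*} [TopologicalSpace G] [Group G] (q : RQ Y0' Y0 ψ) {u : Y → G}
    (hu : Rel Y0 u) : Rel Y0' (fun y => u (ψ y)) :=
  ⟨hu.cont.comp q.cont, fun y hy => hu.bd _ ((q.mem y).2 hy)⟩

theorem RQ.desc {G : Type*} [TopologicalSpace G] [Group G] [CompactSpace Y'] [T2Space Y]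
    (q : RQ Y0' Y0 ψ) {v : Y' → G}
    (hv : Rel Y0' v) : ∃ u : Y → G, Rel Y0 u ∧ ∀ y, v y = u (ψ y) := by
  have hq : Topology.IsQuotientMap ψ := q.cont.isClosedMap.isQuotientMap q.cont q.surj
  have hf : Function.FactorsThrough v ψ := fun a b hab => by
    rcases q.inj a b hab with h | h
    · rw [h]
    · rw [hv.bd _ h.1, hv.bd _ h.2]
  let u : Y → G := fun y => v (Function.surjInv q.surj y)
  have hu : ∀ y, v y = u (ψ y) := fun y =>
    hf (Function.surjInv_eq q.surj (ψ y)).symm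
  have hc : Continuous u := by
    rw [hq.continuous_iff]
    exact hv.cont.congr hu
  refine ⟨u, ⟨hc, fun y hy => ?_⟩, hu⟩
  obtain ⟨y', rfl⟩ := q.surj y
  rw [← hu, hv.bd _ ((q.mem y').1 hy)]

theorem RQ.htpy {G : Type*} [TopologicalSpace G] [Group G] [CompactSpace Y'] [T2Space Y]
    (q : RQ Y0' Y0 ψ) {u v : Y → G} (hu : Rel Y0 u)
    (h : Htpy Y0' (fun y => u (ψ y)) (fun y => v (ψ y))) : Htpy Y0 u v := by
  obtain ⟨H, hH, h0, h1, hb⟩ := h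
  have q' : RQ (Prod.snd ⁻¹' Y0' : Set (I × Y')) (Prod.snd ⁻¹' Y0) (Prod.map id ψ) :=
    ⟨continuous_id.prodMap q.cont, Function.surjective_id.prodMap q.surj,
      fun y => q.mem y.2, fun a b hab => by
        have h1 := congrArg Prod.fst hab
        have h2 := congrArg Prod.snd hab
        simp only [Prod.map_fst, Prod.map_snd, id] at h1 h2
        rcases q.inj _ _ h2 with h | h
        · exact Or.inl (Prod.ext h1 h)
        · exact Or.inr h⟩
  obtain ⟨K, hK, hKH⟩ := q'.desc (v := H) ⟨hH, fun y hy => by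
    have := hb y.1 y.2 hy
    rw [show H y = H (y.1, y.2) from rfl, this]
    exact hu.bd _ ((q.mem _).2 hy)⟩
  refine ⟨K, hK.cont, fun y => ?_, fun y => ?_, fun t y hy => ?_⟩
  · obtain ⟨y', rfl⟩ := q.surj y
    exact (hKH (0, y')).symm.trans (h0 y')
  · obtain ⟨y', rfl⟩ := q.surj y
    exact (hKH (1, y')).symm.trans (h1 y')
  · rw [hK.bd (t, y) hy, hu.bd y hy]

theorem RQ.seq (q : RQ Y0' Y0 ψ) {u : Y → GLm ι} {v : Y → GLm κ} (h : SEq Y0 u v) :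
    SEq Y0' (fun y => u (ψ y)) (fun y => v (ψ y)) := by
  obtain ⟨μ, _, _, e, f, h⟩ := h
  exact ⟨μ, inferInstance, inferInstance, e, f, h.comp_right q.cont fun y hy => (q.mem y).2 hy⟩

theorem RQ.sn (q : RQ Y0' Y0 ψ) {u : Y → GLm ι} (h : SN Y0 u) : SN Y0' (fun y => u (ψ y)) := by
  obtain ⟨μ, _, _, e, h⟩ := h
  exact ⟨μ, inferInstance, inferInstance, e, h.comp_right q.cont fun y hy => (q.mem y).2 hy⟩

theorem RQ.sn_desc [CompactSpace Y'] [T2Space Y] (q : RQ Y0' Y0 ψ) {u : Y → GLm ι} (hu : Rel Y0 u)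
    (h : SN Y0' (fun y => u (ψ y))) : SN Y0 u := by
  obtain ⟨μ, _, _, e, h⟩ := h
  exact ⟨μ, inferInstance, inferInstance, e, q.htpy (hu.ext e) h⟩

/-- All relative maps are stably null. -/
def Zs (Y0 : Set Y) : Prop := ∀ (ι : Type) [Fintype ι] [DecidableEq ι] (u : Y → GLm ι),
  Rel Y0 u → SN Y0 u

/-- The stable classes of relative maps form an infinite cyclic group. -/
def Gs (Y0 : Set Y) : Prop := ∃ (ι : Type) (_ : Fintype ι) (_ : DecidableEq ι) (g : Y → GLm ι),
  Rel Y0 g ∧ (∀ (κ : Type) [Fintype κ] [DecidableEq κ] (u : Y → GLm κ), Rel Y0 u →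
    ∃ j : ℤ, SEq Y0 u (fun y => g y ^ j)) ∧ ∀ j : ℤ, SN Y0 (fun y => g y ^ j) → j = 0

theorem RQ.zs [CompactSpace Y'] [T2Space Y] (q : RQ Y0' Y0 ψ) (h : Zs Y0) : Zs Y0' := by
  intro ι _ _ u hu
  obtain ⟨v, hv, hvu⟩ := q.desc hu
  have := q.sn (h ι v hv)
  simpa only [← hvu] using this

theorem RQ.gs [CompactSpace Y'] [T2Space Y] (q : RQ Y0' Y0 ψ) (h : Gs Y0) : Gs Y0' := by
  obtain ⟨ι, _, _, g, hg, h1, h2⟩ := h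
  refine ⟨ι, inferInstance, inferInstance, fun y => g (ψ y), q.rel hg, fun κ _ _ u hu => ?_,
    fun j hj => h2 j (q.sn_desc (hg.zpow j) hj)⟩
  obtain ⟨v, hv, hvu⟩ := q.desc hu
  obtain ⟨j, hj⟩ := h1 κ v hv
  refine ⟨j, ?_⟩
  simpa only [← hvu] using q.seq hj

end Transport

section Period

variable {B : Type*} [TopologicalSpace B] {B0 : Set B} [CompactSpace B] [T2Space B]

/-- Bott periodicity: stable triviality passes from `B` to the double suspension, by surjectivity of
the Bott map. -/
theorem zs_bott (h : Zs B0) : Zs (LBd (IBd B0)) := by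
  intro ι _ _ u hu
  obtain ⟨α, β, _, _, _, _, F, k, k', H, K⟩ := bott_surj hu
  exact (K.sn_iff hu H.bet_rel).2 (sn_bet H (h α k H.rel))

/-- Bott periodicity: the Bott map carries a generator over `B` to one over the double suspension. -/
theorem gs_bott (h : Gs B0) : Gs (LBd (IBd B0)) := by
  obtain ⟨ι, _, _, g, hg, h1, h2⟩ := h
  obtain ⟨F, HF⟩ := exists_EP hg
  refine ⟨ι ⊕ ι, inferInstance, inferInstance, bet F, HF.bet_rel, fun κ _ _ u hu => ?_,
    fun j hj => ?_⟩
  · obtain ⟨α, β, _, _, _, _, F', k, k', H, K⟩ := bott_surj hu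
    obtain ⟨j, hj⟩ := h1 α k H.rel
    refine ⟨j, (K.trans (bet_seq H (HF.zpow j) hj) hu H.bet_rel).trans (bet_zpow HF j).seq hu
      (HF.zpow j).bet_rel⟩
  · refine h2 j (sn_of_sn_bet (HF.zpow j) ?_)
    exact ((bet_zpow HF j).seq.sn_iff (HF.zpow j).bet_rel (HF.bet_rel.zpow j)).2 hj

end Period

section Cubes

/-- The boundary of the cube. -/
abbrev Bd (d : ℕ) : Set (Fin d → I) := Cube.boundary (Fin d)

/-- The exponential parametrization of the circle by the interval. -/
noncomputable def circ (t : I) : Circle := Circle.exp (2 * Real.pi * t)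

theorem continuous_circ : Continuous circ := by unfold circ; fun_prop

theorem circ_eq {a b : I} (h : circ a = circ b) : a = b ∨ ((a = 0 ∨ a = 1) ∧ (b = 0 ∨ b = 1)) := by
  obtain ⟨m, hm⟩ := Circle.exp_eq_exp.1 h
  have hpi := Real.pi_pos
  have h1 : (a : ℝ) = b + m := by
    have : 2 * Real.pi * (a : ℝ) = 2 * Real.pi * (b + m) := by rw [hm]; ring
    exact mul_left_cancel₀ (by positivity) this
  have a0 := a.2.1
  have a1 := a.2.2
  have b0 := b.2.1
  have b1 := b.2.2
  have hm1 : (m : ℝ) ≤ 1 := by linarith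
  have hm2 : (-1 : ℝ) ≤ m := by linarith
  have hm1' : m ≤ 1 := by exact_mod_cast hm1
  have hm2' : -1 ≤ m := by exact_mod_cast hm2
  have : m = -1 ∨ m = 0 ∨ m = 1 := by omega
  rcases this with rfl | rfl | rfl
  · push_cast at h1
    exact Or.inr ⟨Or.inl (Subtype.ext (by show (a : ℝ) = 0; linarith)),
      Or.inr (Subtype.ext (by show (b : ℝ) = 1; linarith))⟩
  · left; exact Subtype.ext (by push_cast at h1; linarith)
  · push_cast at h1
    exact Or.inr ⟨Or.inr (Subtype.ext (by show (a : ℝ) = 1; linarith)),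
      Or.inl (Subtype.ext (by show (b : ℝ) = 0; linarith))⟩

theorem circ_zero : circ 0 = 1 := by simp [circ]
theorem circ_one : circ 1 = 1 := by simp [circ, Circle.exp_two_pi]

theorem circ_surj : Function.Surjective circ := by
  intro z
  have hpi := Real.pi_pos
  let x := toIcoMod (a := (0 : ℝ)) Real.two_pi_pos (Complex.arg z)
  have hx := toIcoMod_mem_Ico (Real.two_pi_pos) (0 : ℝ) (Complex.arg z)
  refine ⟨⟨x / (2 * Real.pi), by have := hx.1; positivity, ?_⟩, ?_⟩
  · rw [div_le_one (by positivity)]; linarith [hx.2]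
  · rw [circ]
    simp only
    rw [mul_div_cancel₀ _ (by positivity : (2 * Real.pi) ≠ 0)]
    refine Eq.trans (Circle.exp_eq_exp.2 ?_) (Circle.exp_arg z)
    refine ⟨-toIcoDiv Real.two_pi_pos 0 (Complex.arg z), ?_⟩
    have := self_sub_toIcoDiv_zsmul Real.two_pi_pos 0 (Complex.arg z)
    rw [← show _ = x from this, zsmul_eq_mul]
    push_cast
    ring

/-- The two last coordinates of a cube are split off, and the very last one is wrapped around
the circle. -/
noncomputable def wrap (d : ℕ) (x : Fin (d + 2) → I) : ((Fin d → I) × I) × Circle :=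
  ((fun i => x i.castSucc.castSucc, x (Fin.last d).castSucc), circ (x (Fin.last (d + 1))))

theorem rq_wrap (d : ℕ) : RQ (Bd (d + 2)) (LBd (IBd (Bd d))) (wrap d) := by
  have hc1 : ∀ t, circ t = 1 ↔ t = 0 ∨ t = 1 := fun t => by
    constructor
    · intro h
      rw [← circ_zero] at h
      rcases circ_eq h with h | h
      · exact Or.inl h
      · exact h.1
    · rintro (rfl | rfl)
      · exact circ_zero
      · exact circ_one
  have hmem : ∀ y, wrap d y ∈ LBd (IBd (Bd d)) ↔ y ∈ Bd (d + 2) := fun y => by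
    simp only [LBd, IBd, wrap, Cube.boundary, Set.mem_setOf_eq, hc1]
    rw [Fin.exists_fin_succ', Fin.exists_fin_succ']
  refine ⟨?_, ?_, hmem, fun a b hab => ?_⟩
  · unfold wrap
    have := continuous_circ
    fun_prop
  · rintro ⟨⟨y, t⟩, z⟩
    obtain ⟨s, rfl⟩ := circ_surj z
    refine ⟨Fin.snoc (α := fun _ => I) (Fin.snoc (α := fun _ => I) y t) s, ?_⟩
    simp [wrap, Fin.snoc_castSucc, Fin.snoc_last]
  · rw [← hmem, ← hmem, ← hab]
    simp only [wrap, Prod.mk.injEq] at hab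
    obtain ⟨⟨h1, h2⟩, h3⟩ := hab
    rcases circ_eq h3 with h | h
    · left
      funext i
      refine Fin.lastCases h (fun i => ?_) i
      refine Fin.lastCases h2 (fun i => ?_) i
      exact congrFun h1 i
    · right
      rw [and_self]
      right
      exact (hc1 _).2 h.1

theorem zs_even (n : ℕ) : Zs (Bd (2 * n)) := by
  induction n with
  | zero =>
    intro ι _ _ u hu
    let x : Fin (2 * 0) → I := fun _ => 0
    obtain ⟨γ⟩ := joined_GL (u x)
    refine ⟨ι, inferInstance, inferInstance, Function.Embedding.refl _,
      fun q => γ (σ q.1), by fun_prop, fun y => ?_, fun y => by simp, fun t y hy => ?_⟩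
    · simp only [symm_zero, γ.target, ext_refl]
      congr 1; funext i; exact i.elim0
    · obtain ⟨i, -⟩ := hy; exact i.elim0
  | succ n ih => exact (rq_wrap (2 * n)).zs (zs_bott ih)

theorem gs_odd (h : Gs (Bd 1)) (n : ℕ) : Gs (Bd (2 * n + 1)) := by
  induction n with
  | zero => exact h
  | succ n ih => exact (rq_wrap (2 * n + 1)).gs (gs_bott ih)

end Cubes

end

section

/-! ### General position and stabilization -/

section Sphere

variable {Y : Type*} [TopologicalSpace Y]

theorem htpy_line {W : Type*} [NormedAddCommGroup W] [NormedSpace ℝ W] {Y0 : Set Y} {a b : Y → W}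
    (ha : Continuous a) (hb : Continuous b) (hab : ∀ y ∈ Y0, a y = b y)
    (hn : ∀ y (t : ℝ), 0 ≤ t → t ≤ 1 → a y + t • (b y - a y) ≠ 0) :
    Htpy (X := {w : W // w ≠ 0}) Y0 (fun y => ⟨a y, by simpa using hn y 0 le_rfl zero_le_one⟩)
      (fun y => ⟨b y, by simpa using hn y 1 zero_le_one le_rfl⟩) := by
  refine ⟨fun p => ⟨a p.2 + (p.1 : ℝ) • (b p.2 - a p.2), hn _ _ p.1.2.1 p.1.2.2⟩,
    Continuous.subtype_mk (by fun_prop) _, fun y => ?_, fun y => ?_, fun t y hy => ?_⟩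
  · ext1; simp
  · ext1; simp
  · ext1; simp [hab y hy]

/-- A nonvanishing map from a compact subset of a low-dimensional space can be deformed to a
constant, by a smooth approximation and a case of Sard's theorem. -/
theorem sphere_null [CompactSpace Y] {V W : Type} [NormedAddCommGroup V] [NormedSpace ℝ V]
    [FiniteDimensional ℝ V] [NormedAddCommGroup W] [NormedSpace ℝ W] [FiniteDimensional ℝ W]
    {j : Y → V} (hj : Continuous j) (hinj : Function.Injective j)
    (hdim : Module.finrank ℝ V + 1 < Module.finrank ℝ W) {Y0 : Set Y} {v : Y → W}
    (hv : Continuous v) (hv0 : ∀ y, v y ≠ 0) {e : W} (he : ‖e‖ = 1) (hb : ∀ y ∈ Y0, v y = e) :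
    Htpy (X := {w : W // w ≠ 0}) Y0 (fun y => ⟨v y, hv0 y⟩)
      (fun _ => ⟨e, by rintro rfl; simp at he⟩) := by
  obtain ⟨δ, hδ, hδv⟩ : ∃ δ > 0, ∀ y, δ ≤ ‖v y‖ := by
    rcases isEmpty_or_nonempty Y with h | h
    · exact ⟨1, one_pos, fun y => (h.false y).elim⟩
    · obtain ⟨y0, -, h0⟩ := isCompact_univ.exists_isMinOn Set.univ_nonempty hv.norm.continuousOn
      exact ⟨‖v y0‖, norm_pos_iff.2 (hv0 _), fun y => h0 (Set.mem_univ y)⟩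
  obtain ⟨F, hF⟩ := ContinuousMap.exists_extension' (hj.isClosedEmbedding hinj) ⟨v, hv⟩
  obtain ⟨g, hg, hgF, -⟩ := F.continuous.exists_contDiff_approx 1
    (continuous_const (y := min δ (1 / 8))) (fun _ => by positivity)
  have hgv : ∀ y, ‖g (j y) - v y‖ < min δ (1 / 8) := fun y => by
    have := hgF (j y)
    rwa [dist_eq_norm, show F (j y) = v y from congrFun hF y] at this
  have hcone : ContDiff ℝ 1 (fun p : V × ℝ => p.2 • g p.1) :=
    contDiff_snd.smul (hg.comp contDiff_fst)
  have hdense := hcone.dense_compl_range_of_finrank_lt_finrank (by simpa using hdim)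
  obtain ⟨w, hw, hwe⟩ := hdense.exists_dist_lt e (show (0 : ℝ) < 1 / 4 by norm_num)
  rw [dist_eq_norm, norm_sub_rev] at hwe
  let χ : Y → ℝ := fun y => min 1 (4 * ‖v y - e‖)
  have hχ : Continuous χ := by fun_prop
  have χ0 : ∀ y, 0 ≤ χ y := fun y => le_min zero_le_one (by positivity)
  have χ1 : ∀ y, χ y ≤ 1 := fun y => min_le_left _ _
  have χb : ∀ y ∈ Y0, χ y = 0 := fun y hy => by simp [χ, hb y hy]
  have χc : ∀ y, χ y = 1 ∨ ‖v y - e‖ < 1 / 4 := fun y => by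
    rcases le_or_gt 1 (4 * ‖v y - e‖) with h | h
    · exact Or.inl (min_eq_left h)
    · right; linarith
  have hgj : Continuous (fun y => g (j y)) := hg.continuous.comp hj
  let v1 : Y → W := fun y => v y + χ y • (g (j y) - v y)
  let v2 : Y → W := fun y => v1 y + χ y • (w - v1 y)
  have hv1 : Continuous v1 := by fun_prop
  have hv2 : Continuous v2 := by fun_prop
  have hball : Convex ℝ (Metric.ball e (1 / 2 : ℝ)) := convex_ball _ _
  have seg : ∀ a b : W, a ∈ Metric.ball e (1 / 2 : ℝ) → b ∈ Metric.ball e (1 / 2 : ℝ) →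
      ∀ t : ℝ, 0 ≤ t → t ≤ 1 → a + t • (b - a) ∈ Metric.ball e (1 / 2 : ℝ) :=
    fun a b ha hb t h0 h1 => hball.add_smul_sub_mem ha hb ⟨h0, h1⟩
  have ball0 : ∀ a ∈ Metric.ball e (1 / 2 : ℝ), a ≠ 0 := by
    rintro _ ha rfl
    simp [he] at ha
    norm_num at ha
  have hwb : w ∈ Metric.ball e (1 / 2 : ℝ) := by
    rw [mem_ball_iff_norm]; linarith
  have heb : e ∈ Metric.ball e (1 / 2 : ℝ) := by simp
  have hv1b : ∀ y, ‖v y - e‖ < 1 / 4 → v1 y ∈ Metric.ball e (1 / 2 : ℝ) := fun y hy => by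
    rw [mem_ball_iff_norm]
    have h1 : ‖χ y • (g (j y) - v y)‖ ≤ 1 / 8 := by
      rw [norm_smul, Real.norm_of_nonneg (χ0 y)]
      have := (hgv y).trans_le (min_le_right _ _)
      nlinarith [χ0 y, χ1 y, norm_nonneg (g (j y) - v y)]
    have : v1 y - e = (v y - e) + χ y • (g (j y) - v y) := by simp only [v1]; abel
    rw [this]
    refine (norm_add_le _ _).trans_lt ?_
    linarith
  have hv1g : ∀ y, χ y = 1 → v1 y = g (j y) := fun y h => by simp [v1, h]
  have hv2b : ∀ y, v2 y ∈ Metric.ball e (1 / 2 : ℝ) := fun y => by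
    rcases χc y with h | h
    · have : v2 y = w := by simp [v2, h]
      rwa [this]
    · exact seg _ _ (hv1b y h) hwb _ (χ0 y) (χ1 y)
  have H1 := htpy_line (Y0 := Y0) hv hv1 (fun y hy => by simp [v1, χb y hy]) (fun y t h0 h1 h => by
    have h2 : v y = -(t * χ y) • (g (j y) - v y) := by
      rw [neg_smul, eq_neg_iff_add_eq_zero, ← h, mul_smul]
      simp [v1]
    have h3 : ‖v y‖ ≤ ‖g (j y) - v y‖ := by
      conv_lhs => rw [h2]
      rw [norm_smul, norm_neg, Real.norm_of_nonneg (mul_nonneg h0 (χ0 y))]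
      exact mul_le_of_le_one_left (norm_nonneg _) (mul_le_one₀ h1 (χ0 y) (χ1 y))
    have := (hgv y).trans_le (min_le_left _ _)
    linarith [hδv y])
  have H2 := htpy_line (Y0 := Y0) hv1 hv2 (fun y hy => by simp [v2, χb y hy])
    (fun y t h0 h1 h => by
    rcases χc y with hc | hc
    · have h2 : g (j y) + t • (w - g (j y)) = 0 := by
        rw [← h]; simp [v2, hc, hv1g y hc]
      rcases h0.eq_or_lt with rfl | h0
      · have := (hgv y).trans_le (min_le_left _ _)
        simp at h2
        rw [h2, zero_sub, norm_neg] at this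
        linarith [hδv y]
      · apply hw
        refine ⟨(j y, -(1 - t) / t), ?_⟩
        have h3 : t • w = -(1 - t) • g (j y) := by
          rw [← sub_eq_zero, ← h2]; module
        have : w = t⁻¹ • (t • w) := by rw [smul_smul, inv_mul_cancel₀ h0.ne', one_smul]
        rw [this, h3, smul_smul]
        congr 1
        field_simp
    · have h3 := seg _ _ (hv1b y hc) hwb (t * χ y) (mul_nonneg h0 (χ0 y))
        (mul_le_one₀ h1 (χ0 y) (χ1 y))
      refine ball0 _ h3 ?_
      rw [← h, mul_smul]
      simp [v2])
  have H3 := htpy_line (Y0 := Y0) hv2 (continuous_const (y := e))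
    (fun y hy => by simp [v2, v1, χb y hy, hb y hy])
    (fun y t h0 h1 => ball0 _ (seg _ _ (hv2b y) heb t h0 h1))
  exact (H1.trans H2).trans H3

end Sphere

end

section

section Stab

variable {Y : Type*} [TopologicalSpace Y] {Y0 : Set Y}
variable {ι κ μ : Type} [Fintype ι] [DecidableEq ι] [Fintype κ] [DecidableEq κ]

/-- The space embeds into the Euclidean space of dimension `d`. -/
def EmbDim (Y : Type*) [TopologicalSpace Y] (d : ℕ) : Prop :=
  ∃ j : Y → (Fin d → ℝ), Continuous j ∧ Function.Injective j

theorem embDim_cube (d : ℕ) : EmbDim (Fin d → I) d :=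
  ⟨fun y i => (y i : ℝ), by fun_prop, fun a b h => by
    funext i; exact Subtype.ext (congrFun h i)⟩

theorem EmbDim.cyl {d : ℕ} (h : EmbDim Y d) : EmbDim (I × Y) (d + 1) := by
  obtain ⟨j, hj, hinj⟩ := h
  refine ⟨fun p => Fin.cons (p.1 : ℝ) (j p.2), ?_, fun a b hab => ?_⟩
  · refine continuous_pi fun i => ?_
    refine Fin.cases ?_ (fun i => ?_) i
    · simp only [Fin.cons_zero]; fun_prop
    · simp only [Fin.cons_succ]; fun_prop
  · have h := Fin.cons_inj.1 hab
    exact Prod.ext (Subtype.ext h.1) (hinj h.2)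

/-- The last basis vector. -/
def lastV : ι ⊕ Unit → ℂ := Pi.single (Sum.inr ()) 1

theorem norm_lastV : ‖(lastV : ι ⊕ Unit → ℂ)‖ = 1 := by
  rw [lastV, Pi.norm_single]; simp

/-- Below a certain dimension, the last column of a matrix function is deformed to the last basis
vector. -/
theorem col_reduce [CompactSpace Y] {d : ℕ} (hY : EmbDim Y d) (hd : d ≤ 2 * Fintype.card ι)
    {U : Y → GLm (ι ⊕ Unit)} (hU : Continuous U)
    (hb : ∀ y ∈ Y0, (U y).val *ᵥ lastV = lastV) :
    ∃ g : Y × I → GLm (ι ⊕ Unit), Continuous g ∧ (∀ y, g (y, 0) = 1) ∧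
      (∀ y, (g (y, 1) * U y).val *ᵥ lastV = lastV) ∧ ∀ y ∈ Y0, ∀ t, g (y, t) = 1 := by
  obtain ⟨j, hj, hinj⟩ := hY
  have hv : Continuous (fun y => (U y).val *ᵥ (lastV : ι ⊕ Unit → ℂ)) :=
    (Units.continuous_val.comp hU).matrix_mulVec continuous_const
  have hl0 : (lastV : ι ⊕ Unit → ℂ) ≠ 0 := by
    intro h; have := norm_lastV (ι := ι); simp [h] at this
  have hv0 : ∀ y, (U y).val *ᵥ (lastV : ι ⊕ Unit → ℂ) ≠ 0 := fun y h =>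
    hl0 (Matrix.mulVec_injective_of_isUnit (U y).isUnit (by rw [h, Matrix.mulVec_zero]))
  have hdim : Module.finrank ℝ (Fin d → ℝ) + 1 < Module.finrank ℝ (ι ⊕ Unit → ℂ) := by
    have : Module.finrank ℝ (ι ⊕ Unit → ℂ) = ∑ _i : ι ⊕ Unit, Module.finrank ℝ ℂ :=
      Module.finrank_pi_fintype ℝ
    rw [this]
    simp only [Complex.finrank_real_complex, Finset.sum_const, Finset.card_univ,
      Fintype.card_sum, Fintype.card_unit, smul_eq_mul, Module.finrank_fintype_fun_eq_card,
      Fintype.card_fin]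
    omega
  obtain ⟨H, hH, h0, h1, hb'⟩ := sphere_null hj hinj hdim (Y0 := Y0) hv hv0 norm_lastV hb
  obtain ⟨g, hg, hg0, hgK, hgb⟩ := lift_vec (fun p : Y × I => (H (p.2, p.1)).1)
    (by fun_prop) (fun p => (H (p.2, p.1)).2)
  refine ⟨g, hg, hg0, fun y => ?_, fun y hy => hgb y fun t => ?_⟩
  · have := hgK y 1
    simp only [h0, h1] at this
    rw [Units.val_mul, ← Matrix.mulVec_mulVec]
    exact this
  · simp only [hb' _ y hy]

theorem block_of_col {M : Matrix (ι ⊕ Unit) (ι ⊕ Unit) ℂ} (h : M *ᵥ lastV = lastV) :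
    M = Matrix.fromBlocks M.toBlocks₁₁ 0 M.toBlocks₂₁ 1 := by
  have hc : ∀ i, M i (Sum.inr ()) = lastV i := fun i => by
    rw [← congrFun h i, lastV, Matrix.mulVec_single_one]; rfl
  conv_lhs => rw [← Matrix.fromBlocks_toBlocks M]
  congr 1
  · ext i j; simp [Matrix.toBlocks₁₂, hc, lastV]
  · ext i j; simp [Matrix.toBlocks₂₂, hc, lastV]

theorem isUnit_block {M : GLm (ι ⊕ Unit)} (h : M.val *ᵥ lastV = lastV) :
    IsUnit (M.val.toBlocks₁₁) := by
  have := M.isUnit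
  rw [block_of_col h, Matrix.isUnit_fromBlocks_zero₁₂] at this
  exact this.1

theorem ext_inl_last (u : GLm ι) :
    (ext (Function.Embedding.inl : ι ↪ ι ⊕ Unit) u).val *ᵥ lastV = lastV := by
  rw [ext_val, extM_inl, lastV, Matrix.mulVec_single_one]
  funext i
  rcases i with i | i <;> simp

theorem toBlocks_ext_inl (u : GLm ι) :
    toGL ((ext (Function.Embedding.inl : ι ↪ ι ⊕ Unit) u).val.toBlocks₁₁) = u := by
  rw [ext_val, extM_inl, Matrix.toBlocks_fromBlocks₁₁, toGL_coe]

theorem continuous_block {Z : Type*} [TopologicalSpace Z] {M : Z → GLm (ι ⊕ Unit)}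
    (hM : Continuous M) (h : ∀ z, (M z).val *ᵥ lastV = lastV) :
    Continuous (fun z => toGL ((M z).val.toBlocks₁₁)) := by
  refine continuous_toGL ?_ fun z => isUnit_block (h z)
  refine continuous_matrix fun i j => ?_
  exact (Units.continuous_val.comp hM).matrix_elem (Sum.inl i) (Sum.inl j)

theorem stab_inj_one [CompactSpace Y] {d : ℕ} (hY : EmbDim Y d) (hd : d < 2 * Fintype.card ι)
    {u : Y → GLm ι} (hu : Rel Y0 u)
    (h : Null Y0 (fun y => ext (Function.Embedding.inl : ι ↪ ι ⊕ Unit) (u y))) : Null Y0 u := by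
  obtain ⟨H, hH, h0, h1, hb⟩ := h
  have hone : (1 : GLm (ι ⊕ Unit)) = ext (Function.Embedding.inl : ι ↪ ι ⊕ Unit) 1 := by simp
  obtain ⟨g, hg, hg0, hgH, hgb⟩ := col_reduce (Y0 := {p : I × Y | p.1 = 0 ∨ p.1 = 1 ∨ p.2 ∈ Y0})
    hY.cyl hd hH (by
      rintro ⟨t, y⟩ (h | h | h)
      · simp only at h; subst h; rw [h0]; exact ext_inl_last _
      · simp only at h; subst h; rw [h1, hone]; exact ext_inl_last _
      · rw [hb t y h]; exact ext_inl_last _)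
  refine ⟨fun p => toGL ((g (p, 1) * H p).val.toBlocks₁₁), ?_, fun y => ?_, fun y => ?_,
    fun t y hy => ?_⟩
  · exact continuous_block (M := fun p => g (p, 1) * H p) (by fun_prop) hgH
  · simp only
    rw [hgb (0, y) (Or.inl rfl), one_mul, h0]; exact toBlocks_ext_inl _
  · simp only
    rw [hgb (1, y) (Or.inr (Or.inl rfl)), one_mul, h1, hone]; exact toBlocks_ext_inl _
  · simp only
    rw [hgb (t, y) (Or.inr (Or.inr hy)), one_mul, hb t y hy]; exact toBlocks_ext_inl _

theorem stab_surj_one [CompactSpace Y] {d : ℕ} (hY : EmbDim Y d) (hd : d ≤ 2 * Fintype.card ι)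
    {u : Y → GLm (ι ⊕ Unit)} (hu : Rel Y0 u) : ∃ a : Y → GLm ι, Rel Y0 a ∧
      Htpy Y0 u (fun y => ext (Function.Embedding.inl : ι ↪ ι ⊕ Unit) (a y)) := by
  have hone : (1 : GLm (ι ⊕ Unit)) = ext (Function.Embedding.inl : ι ↪ ι ⊕ Unit) 1 := by simp
  obtain ⟨g, hg, hg0, hgu, hgb⟩ := col_reduce (Y0 := Y0) hY hd hu.cont (by
      intro y hy; rw [hu.bd y hy, hone]; exact ext_inl_last _)
  let M : Y → GLm (ι ⊕ Unit) := fun y => g (y, 1) * u y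
  have hM : Rel Y0 M := ⟨by have := hu.cont; fun_prop, fun y hy => by
    simp [M, hgb y hy, hu.bd y hy]⟩
  let a : Y → GLm ι := fun y => toGL ((M y).val.toBlocks₁₁)
  have ha : Rel Y0 a := ⟨continuous_block hM.cont hgu, fun y hy => by
    simp only [a]; rw [hM.bd y hy, hone]; exact toBlocks_ext_inl _⟩
  refine ⟨a, ha, Htpy.trans (g := M) ?_ ?_⟩
  · refine ⟨fun p => g (p.2, p.1) * u p.2, by have := hu.cont; fun_prop, fun y => by simp [hg0],
      fun y => rfl, fun t y hy => by simp [hgb y hy]⟩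
  · have hau : ∀ y, (a y).val = (M y).val.toBlocks₁₁ := fun y => toGL_val (isUnit_block (hgu y))
    have hMv : Continuous (fun y => (M y).val) := Units.continuous_val.comp hM.cont
    let N : I × Y → Matrix (ι ⊕ Unit) (ι ⊕ Unit) ℂ := fun p =>
      Matrix.fromBlocks (a p.2).val 0 ((1 - ((p.1 : ℝ) : ℂ)) • (M p.2).val.toBlocks₂₁) 1
    have hN : Continuous N := by
      refine Continuous.matrix_fromBlocks ?_ continuous_const ?_ continuous_const
      · have := ha.cont; fun_prop
      · refine Continuous.smul (f := fun p : I × Y => 1 - ((p.1 : ℝ) : ℂ)) (by fun_prop) ?_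
        refine continuous_matrix fun i j => ?_
        exact (hMv.comp continuous_snd).matrix_elem (Sum.inr i) (Sum.inl j)
    have hNu : ∀ p, IsUnit (N p) := fun p => by
      rw [Matrix.isUnit_fromBlocks_zero₁₂]
      exact ⟨(a p.2).isUnit, isUnit_one⟩
    have hN0 : ∀ y, (M y).val = Matrix.fromBlocks (a y).val 0 (M y).val.toBlocks₂₁ 1 := fun y => by
      rw [hau]; exact block_of_col (hgu y)
    refine ⟨fun p => toGL (N p), continuous_toGL hN hNu, fun y => ?_, fun y => ?_,
      fun t y hy => ?_⟩
    · ext1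
      rw [toGL_val (hNu _), hN0]
      simp [N]
    · ext1
      rw [toGL_val (hNu _), ext_val, extM_inl]
      simp [N]
    · ext1
      rw [toGL_val (hNu _)]
      simp only [N]
      rw [ha.bd y hy, hM.bd y hy]
      rw [show (1 : GLm (ι ⊕ Unit)).val.toBlocks₂₁ = 0 by
        ext i j; simp [Matrix.toBlocks₂₁]]
      simp

theorem stab_inj_fin [CompactSpace Y] {d : ℕ} (hY : EmbDim Y d) (hd : d < 2 * Fintype.card ι)
    {u : Y → GLm ι} (hu : Rel Y0 u) (m : ℕ)
    (h : Null Y0 (fun y => ext (Function.Embedding.inl : ι ↪ ι ⊕ Fin m) (u y))) : Null Y0 u := by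
  induction m with
  | zero =>
    have := h.ext (Equiv.sumEmpty ι (Fin 0)).toEmbedding
    simp only [← ext_trans, map_one] at this
    have h2 := (htpy_ext hu.cont hu.bd (Function.Embedding.refl ι) _).trans this
    simpa only [ext_refl] using h2
  | succ m ih =>
    let f : ι ⊕ Fin (m + 1) ≃ (ι ⊕ Fin m) ⊕ Unit := Fintype.equivOfCardEq (by simp; omega)
    have := h.ext f.toEmbedding
    simp only [← ext_trans, map_one] at this
    have h2 := (htpy_ext hu.cont hu.bd
      ((Function.Embedding.inl : ι ↪ ι ⊕ Fin m).trans Function.Embedding.inl) _).trans this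
    simp only [ext_trans] at h2
    exact ih (stab_inj_one hY (by simp; omega) (hu.ext _) h2)

/-- Below twice the matrix size, a stably null map is null: `stab_inj_one` removes one row and column
at a time. -/
theorem SN.null [CompactSpace Y] {d : ℕ} (hY : EmbDim Y d) (hd : d < 2 * Fintype.card ι)
    {u : Y → GLm ι} (hu : Rel Y0 u) (h : SN Y0 u) : Null Y0 u := by
  obtain ⟨μ, _, _, e, h⟩ := h
  have hc := Fintype.card_le_of_embedding e
  let f : μ ≃ ι ⊕ Fin (Fintype.card μ - Fintype.card ι) :=
    Fintype.equivOfCardEq (by simp; omega)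
  have := h.ext f.toEmbedding
  simp only [← ext_trans, map_one] at this
  exact stab_inj_fin hY hd hu _ ((htpy_ext hu.cont hu.bd Function.Embedding.inl _).trans this)

theorem stab_surj_fin [CompactSpace Y] {d : ℕ} (hY : EmbDim Y d) (hd : d ≤ 2 * Fintype.card ι)
    (m : ℕ) {u : Y → GLm (ι ⊕ Fin m)} (hu : Rel Y0 u) :
    ∃ a : Y → GLm ι, Rel Y0 a ∧ SEq Y0 u a := by
  induction m with
  | zero => exact ⟨_, hu.ext (Equiv.sumEmpty ι (Fin 0)).toEmbedding, seq_ext hu _⟩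
  | succ m ih =>
    let f : ι ⊕ Fin (m + 1) ≃ (ι ⊕ Fin m) ⊕ Unit := Fintype.equivOfCardEq (by simp; omega)
    obtain ⟨a, ha, h⟩ := stab_surj_one (ι := ι ⊕ Fin m) hY (by simp; omega) (hu.ext f.toEmbedding)
    obtain ⟨b, hb, h'⟩ := ih ha
    refine ⟨b, hb, ?_⟩
    refine SEq.trans (seq_ext hu f.toEmbedding) ?_ hu (hu.ext _)
    refine h.seq.trans ?_ (hu.ext _) (ha.ext _)
    exact (seq_ext ha _).symm.trans h' (ha.ext _) ha

/-- Every map into a general linear group is stably equivalent to one into matrices of a given size,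
provided the domain has dimension at most twice that size. -/
theorem stab_surj [CompactSpace Y] {d : ℕ} (hY : EmbDim Y d) (hd : d ≤ 2 * Fintype.card ι)
    {u : Y → GLm κ} (hu : Rel Y0 u) : ∃ a : Y → GLm ι, Rel Y0 a ∧ SEq Y0 u a := by
  let f : κ ↪ ι ⊕ Fin (Fintype.card κ) :=
    (Fintype.equivFin κ).toEmbedding.trans Function.Embedding.inr
  obtain ⟨a, ha, h⟩ := stab_surj_fin hY hd _ (hu.ext f)
  exact ⟨a, ha, (seq_ext hu f).trans h hu (hu.ext f)⟩

/-- Below twice the matrix size, stable equivalence is homotopy. -/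
theorem SEq.htpy [CompactSpace Y] {d : ℕ} (hY : EmbDim Y d) (hd : d < 2 * Fintype.card ι)
    {u v : Y → GLm ι} (hu : Rel Y0 u) (hv : Rel Y0 v) (h : SEq Y0 u v) : Htpy Y0 u v := by
  have := h.sn_mul_inv hu hv (Function.Embedding.refl ι) (Function.Embedding.refl ι)
  simp only [ext_refl] at this
  have h2 := Htpy.mul (this.null hY hd (hu.mul hv.inv)) (Htpy.refl (Y0 := Y0) hv.cont)
  simpa using h2

end Stab

end

section

/-! ### The fundamental group, and the unstable homotopy groups of the general linear groups -/

theorem exp_const {Z : Type*} [TopologicalSpace Z] [PreconnectedSpace Z] {f : Z → ℂ}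
    (hf : Continuous f) (h : ∀ t, Complex.exp (f t) = 1) (a b : Z) : f a = f b := by
  have h' : ∀ t, ∃ n : ℤ, f t = n * (2 * Real.pi * Complex.I) := fun t => Complex.exp_eq_one_iff.1 (h t)
  choose n hn using h'
  have hc : Continuous n := by
    rw [Int.isClosedEmbedding_coe_real.isInducing.continuous_iff]
    have : ((Int.cast : ℤ → ℝ) ∘ n) = fun t => (f t).im / (2 * Real.pi) := by
      funext t
      rw [hn t]
      have := Real.pi_pos
      simp
    rw [this]
    fun_prop
  rw [hn, hn, PreconnectedSpace.constant ‹_› hc]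

/-- The generator of the fundamental group of the general linear groups. -/
noncomputable def genC (y : Fin 1 → I) : GLm Unit := zl (circ (y 0))

theorem genC_zpow_val (j : ℤ) (y : Fin 1 → I) :
    (genC y ^ j).val = Complex.exp (2 * Real.pi * Complex.I * j * (y 0 : ℝ)) • (1 : Matrix Unit Unit ℂ) := by
  let f : Circle →* GLm Unit := ⟨⟨zl, zl_one⟩, fun a b => by
    ext1; simp [zl, smul_smul, mul_comm]⟩
  have : genC y ^ j = zl (circ (y 0) ^ j) := (map_zpow f (circ (y 0)) j).symm
  rw [this]
  simp only [zl, circ]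
  rw [← Circle.exp_intCast_mul]
  rw [Circle.coe_exp]
  congr 2
  push_cast
  ring

theorem bd_one {y : Fin 1 → I} (hy : y ∈ Bd 1) : y 0 = 0 ∨ y 0 = 1 := by
  obtain ⟨i, hi⟩ := hy
  rwa [Fin.fin_one_eq_zero i] at hi

theorem genC_rel : Rel (Bd 1) genC := by
  constructor
  · refine continuous_GL ?_
    simp only [genC, zl]
    have := continuous_circ
    fun_prop
  · intro y hy
    rcases bd_one hy with h | h
    · rw [genC, h, circ_zero, zl_one]
    · rw [genC, h, circ_one, zl_one]

theorem val_unit (a : GLm Unit) : a.val = a.val () () • (1 : Matrix Unit Unit ℂ) := by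
  ext i j; simp

theorem val_unit_ne (a : GLm Unit) : a.val () () ≠ 0 := by
  have h := (Matrix.isUnit_iff_isUnit_det _).1 a.isUnit
  simpa using h

theorem eq_const (y : Fin 1 → I) : y = fun _ => y 0 := by
  funext i; rw [Fin.fin_one_eq_zero i]

/-- The stable fundamental group is infinite cyclic: loops reduce to loops of nonzero complex numbers,
and these are classified by their winding number. -/
theorem gs_one : Gs (Bd 1) := by
  refine ⟨Unit, inferInstance, inferInstance, genC, genC_rel, fun κ _ _ u hu => ?_,
    fun j hj => ?_⟩
  · obtain ⟨a, ha, hua⟩ := stab_surj (ι := Unit) (embDim_cube 1) (by simp) hu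
    suffices h : ∃ j : ℤ, Htpy (Bd 1) a (fun y => genC y ^ j) by
      obtain ⟨j, h⟩ := h
      exact ⟨j, hua.trans h.seq hu ha⟩
    obtain ⟨g, hg, hg0, hgK, -⟩ := lift_log (Y := Unit) (fun p => (a (fun _ => p.2)).val () ())
      (by have := ha.cont; exact (Units.continuous_val.comp (by fun_prop)).matrix_elem _ _)
      (fun p => val_unit_ne _)
    have a0 : a (fun _ => 0) = 1 := ha.bd _ ⟨0, Or.inl rfl⟩
    have a1 : a (fun _ => 1) = 1 := ha.bd _ ⟨0, Or.inr rfl⟩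
    have hga : ∀ y, (a y).val = Complex.exp (g ((), y 0)) • (1 : Matrix Unit Unit ℂ) := fun y => by
      have := hgK () (y 0)
      simp only [a0, Units.val_one, Matrix.one_apply_eq, mul_one] at this
      rw [this, ← eq_const, ← val_unit]
    obtain ⟨j, hj⟩ : ∃ j : ℤ, g ((), 1) = j * (2 * Real.pi * Complex.I) := by
      rw [← Complex.exp_eq_one_iff]
      have := hgK () 1
      simpa only [a0, a1, Units.val_one, Matrix.one_apply_eq, mul_one] using this
    refine ⟨j, ?_⟩
    let E : I × (Fin 1 → I) → Matrix Unit Unit ℂ := fun p =>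
      Complex.exp ((1 - ((p.1 : ℝ) : ℂ)) * g ((), p.2 0) +
        ((p.1 : ℝ) : ℂ) * (2 * Real.pi * Complex.I * j * (p.2 0 : ℝ))) • (1 : Matrix Unit Unit ℂ)
    have hE : ∀ p, IsUnit (E p) := fun p =>
      IsUnit.smul (Units.mk0 _ (Complex.exp_ne_zero _)) isUnit_one
    refine ⟨fun p => toGL (E p), continuous_toGL (by fun_prop) hE, fun y => ?_, fun y => ?_,
      fun t y hy => ?_⟩
    · ext1
      rw [toGL_val (hE _), hga]
      simp [E]
    · ext1
      rw [toGL_val (hE _), genC_zpow_val]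
      simp [E]
    · ext1
      rw [toGL_val (hE _), hga]
      rcases bd_one hy with h | h
      · simp [E, h, hg0]
      · simp only [E, h, hj]
        congr 2
        push_cast
        ring
  · have h := hj.null (embDim_cube 1) (by simp) (genC_rel.zpow j)
    obtain ⟨H, hH, h0, h1, hb⟩ := h
    obtain ⟨g, hg, hg0, hgK, hgc⟩ := lift_log (Y := I) (fun p => (H (p.1, fun _ => p.2)).val () ())
      ((Units.continuous_val.comp (by fun_prop)).matrix_elem _ _) (fun p => val_unit_ne _)
    have b0 : ∀ s, H (s, fun _ => 0) = 1 := fun s => by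
      rw [hb s _ ⟨0, Or.inl rfl⟩]; exact (genC_rel.zpow j).bd _ ⟨0, Or.inl rfl⟩
    have b1 : ∀ s, H (s, fun _ => 1) = 1 := fun s => by
      rw [hb s _ ⟨0, Or.inr rfl⟩]; exact (genC_rel.zpow j).bd _ ⟨0, Or.inr rfl⟩
    have e1 : g (0, 1) = g (1, 1) := exp_const (f := fun s : I => g (s, 1)) (by fun_prop) (fun s => by
      have := hgK s 1
      simpa only [b0, b1, Units.val_one, Matrix.one_apply_eq, mul_one] using this) 0 1
    have e2 : g (1, 1) = 0 := hgc 1 (fun t => by simp only [h1]) 1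
    have e3 := exp_const (f := fun t : I => g (0, t) - 2 * Real.pi * Complex.I * j * (t : ℝ))
      (by fun_prop) (fun t => by
      have := hgK 0 t
      simp only [b0, h0, Units.val_one, Matrix.one_apply_eq, mul_one, genC_zpow_val] at this
      rw [Complex.exp_sub, this]
      simp [Complex.exp_ne_zero]) 0 1
    simp only [hg0, e1, e2] at e3
    have hpi : (Real.pi : ℂ) ≠ 0 := by exact_mod_cast Real.pi_ne_zero
    simpa [hpi] using e3

/-- Even homotopy groups of the general linear group vanish in the stable range. -/
theorem GL_even {n d : ℕ} (hd : d < 2 * n) (he : Even d) {u : (Fin d → I) → GLm (Fin n)}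
    (hu : Rel (Bd d) u) : Null (Bd d) u := by
  obtain ⟨m, rfl⟩ := even_iff_two_dvd.1 he
  exact (zs_even m _ u hu).null (embDim_cube _) (by simpa using hd) hu

/-- Odd homotopy groups of the general linear groups are infinite cyclic in the stable range, and
the generators for all sizes are stably equivalent. -/
theorem GL_odd {d : ℕ} (he : ¬ Even d) : ∃ g : (n : ℕ) → (Fin d → I) → GLm (Fin n),
    ∀ n, d < 2 * n → Rel (Bd d) (g n) ∧ (∀ u : (Fin d → I) → GLm (Fin n), Rel (Bd d) u → ∃ j : ℤ,
      Htpy (Bd d) u (fun y => g n y ^ j)) ∧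
      (∀ j : ℤ, Null (Bd d) (fun y => g n y ^ j) → j = 0) ∧
      ∀ m, d < 2 * m → SEq (Bd d) (g n) (g m) := by
  obtain ⟨m, rfl⟩ := Nat.not_even_iff_odd.1 he
  obtain ⟨ι, _, _, g, hg, h1, h2⟩ := gs_odd gs_one m
  have hex : ∀ n, ∃ a : (Fin (2 * m + 1) → I) → GLm (Fin n), 2 * m + 1 < 2 * n →
      Rel (Bd (2 * m + 1)) a ∧ SEq (Bd (2 * m + 1)) g a := fun n => by
    by_cases hn : 2 * m + 1 < 2 * n
    · obtain ⟨a, ha, hga⟩ := stab_surj (ι := Fin n) (embDim_cube _) (by simp; omega) hg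
      exact ⟨a, fun _ => ⟨ha, hga⟩⟩
    · exact ⟨fun _ => 1, fun h => (hn h).elim⟩
  choose a ha using hex
  refine ⟨a, fun n hn => ?_⟩
  obtain ⟨han, hgan⟩ := ha n hn
  have hz : ∀ j : ℤ, SEq (Bd (2 * m + 1)) (fun y => g y ^ j) (fun y => a n y ^ j) := fun j => by
    obtain ⟨μ, _, _, e, f, h⟩ := hgan
    refine ⟨μ, inferInstance, inferInstance, e, f, ?_⟩
    simpa only [map_zpow] using h.zpow j
  refine ⟨han, fun u hu => ?_, fun j hj => h2 j ?_, fun m' hm' => ?_⟩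
  · obtain ⟨j, hj⟩ := h1 _ u hu
    refine ⟨j, SEq.htpy (embDim_cube _) (by simpa using hn) hu (han.zpow j) ?_⟩
    exact hj.trans (hz j) hu (hg.zpow j)
  · exact ((hz j).sn_iff (hg.zpow j) (han.zpow j)).2
      ⟨Fin n, inferInstance, inferInstance, Function.Embedding.refl _,
        by simpa only [ext_refl] using hj⟩
  · exact hgan.symm.trans (ha m' hm').2 han hg

theorem det_extM {ι κ : Type} [Fintype ι] [DecidableEq ι] [Fintype κ] [DecidableEq κ] (e : ι ↪ κ)
    (M : Matrix ι ι ℂ) : (extM e M).det = M.det := by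
  have h : extM e M = 1 + embM e * ((M - 1) * (embM e).transpose) := by
    simp only [extM, Matrix.sub_mul, Matrix.mul_sub, Matrix.mul_assoc, Matrix.one_mul]
    abel
  rw [h, Matrix.det_one_add_mul_comm, Matrix.mul_assoc, embM_tr]
  simp

/-- A loop of matrices of determinant one is contractible in the general linear group. -/
theorem GL_one {n : ℕ} (hn : 1 ≤ n) {u : (Fin 1 → I) → GLm (Fin n)}
    (hu : Rel (Bd 1) u) (hdet : ∀ y, (u y).val.det = 1) : Null (Bd 1) u := by
  refine SN.null (embDim_cube _) (by simp; omega) hu ?_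
  obtain ⟨a, ha, hua⟩ := stab_surj (ι := Unit) (embDim_cube 1) (by simp) hu
  have hua' := hua
  obtain ⟨μ, _, _, e, f, h⟩ := hua
  have hd : Continuous (fun M : GLm μ => (Units.map Matrix.detMonoidHom M : ℂˣ)) :=
    Continuous.units_map _ (by
      show Continuous fun M : Matrix μ μ ℂ => M.det
      fun_prop)
  let ψ : ℂˣ → GLm Unit := fun z => toGL ((z : ℂ) • 1)
  have hψu : ∀ z : ℂˣ, IsUnit ((z : ℂ) • (1 : Matrix Unit Unit ℂ)) :=
    fun z => IsUnit.smul z isUnit_one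
  have hψv : ∀ z, (ψ z).val = (z : ℂ) • 1 := fun z => toGL_val (hψu z)
  have hψ : Continuous ψ := continuous_toGL (by fun_prop) hψu
  have h2 := (h.comp_left hd).comp_left hψ
  have h3 : Null (Bd 1) a := by
    refine Htpy.symm ?_
    convert h2 using 2 with y y
    · ext1
      rw [hψv]
      simp [ext_val, det_extM, hdet]
    · ext1
      rw [hψv]
      simp only [Units.coe_map, Matrix.coe_detMonoidHom, ext_val, det_extM]
      rw [val_unit]
      simp
  exact (hua'.sn_iff hu ha).2
    ⟨Unit, inferInstance, inferInstance, Function.Embedding.refl _,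
      by simpa only [ext_refl] using h3⟩

end

section

/-! ### Polar decomposition -/

section Polar

variable {A : Type*} [CStarAlgebra A]

/-- The inverse of the absolute value of an invertible element. -/
noncomputable def invAbs (a : A) : A := cfc (fun x : ℝ => (Real.sqrt x)⁻¹) (star a * a)

theorem spec_pos (a : Aˣ) : ∀ x ∈ spectrum ℝ (star a.val * a.val), 0 < x := fun x hx => by
  have h0 := spectrum_star_mul_self_nonneg x hx
  refine lt_of_le_of_ne h0 ?_
  rintro rfl
  exact spectrum.zero_notMem ℝ (a.isUnit.star.mul a.isUnit) hx

theorem contOn_invSqrt : ContinuousOn (fun x : ℝ => (Real.sqrt x)⁻¹) (Set.Ioi 0) :=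
  Real.continuous_sqrt.continuousOn.inv₀ fun x hx => (Real.sqrt_pos.2 hx).ne'

theorem continuous_invAbs : Continuous (fun a : Aˣ => invAbs a.val) := by
  unfold invAbs
  refine Continuous.cfc_of_mem_nhdsSet (s := Set.Ioi 0) _ ?_ ?_ (fun a => IsSelfAdjoint.star_mul_self _)
    contOn_invSqrt
  · refine isOpen_Ioi.mem_nhdsSet.2 ?_
    intro x hx
    obtain ⟨a, ha⟩ := Set.mem_iUnion.1 hx
    exact spec_pos a x ha
  · have : Continuous (fun a : Aˣ => a.val) := Units.continuous_val
    fun_prop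

theorem invAbs_sa (a : A) : IsSelfAdjoint (invAbs a) := cfc_predicate _ _

theorem invAbs_mul (a : Aˣ) : invAbs a.val * (star a.val * a.val) * invAbs a.val = 1 := by
  have hc : ContinuousOn (fun x : ℝ => (Real.sqrt x)⁻¹) (spectrum ℝ (star a.val * a.val)) :=
    contOn_invSqrt.mono (spec_pos a)
  have hsa : IsSelfAdjoint (star a.val * a.val) := IsSelfAdjoint.star_mul_self _
  have h : star a.val * a.val = cfc (fun x : ℝ => x) (star a.val * a.val) := (cfc_id' ℝ _ hsa).symm
  have hi : ContinuousOn (fun x : ℝ => x) (spectrum ℝ (star a.val * a.val)) := continuousOn_id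
  have hm : ContinuousOn (fun x : ℝ => (Real.sqrt x)⁻¹ * x) (spectrum ℝ (star a.val * a.val)) :=
    hc.mul hi
  unfold invAbs
  conv_lhs => enter [1, 2]; rw [h]
  rw [← cfc_mul _ _ _ hc hi, ← cfc_mul _ _ _ hm hc,
    ← cfc_one ℝ (star a.val * a.val) hsa]
  refine cfc_congr fun x hx => ?_
  have hx := spec_pos a x hx
  have h1 := Real.sqrt_pos.2 hx
  have h2 := Real.mul_self_sqrt hx.le
  simp only [Pi.one_apply]
  field_simp
  nlinarith

theorem isUnit_path (a : Aˣ) {s : ℝ} (h0 : 0 ≤ s) (h1 : s ≤ 1) :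
    IsUnit (((1 - s : ℝ) : ℂ) • (1 : A) + (s : ℂ) • invAbs a.val) := by
  have hc : ContinuousOn (fun x : ℝ => (Real.sqrt x)⁻¹) (spectrum ℝ (star a.val * a.val)) :=
    contOn_invSqrt.mono (spec_pos a)
  have hsa : IsSelfAdjoint (star a.val * a.val) := IsSelfAdjoint.star_mul_self _
  have hs : ContinuousOn (fun x : ℝ => s * (Real.sqrt x)⁻¹) (spectrum ℝ (star a.val * a.val)) :=
    continuousOn_const.mul hc
  have ha : ContinuousOn (fun x : ℝ => (1 - s) + s * (Real.sqrt x)⁻¹)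
      (spectrum ℝ (star a.val * a.val)) := continuousOn_const.add hs
  have : ((1 - s : ℝ) : ℂ) • (1 : A) + (s : ℂ) • invAbs a.val
      = cfc (fun x : ℝ => (1 - s) + s * (Real.sqrt x)⁻¹) (star a.val * a.val) := by
    rw [cfc_add _ _ _ continuousOn_const hs, cfc_const_mul _ _ _ hc,
      cfc_const _ _ hsa, Algebra.algebraMap_eq_smul_one]
    rfl
  rw [this]
  refine (isUnit_cfc_iff _ _ ha).2 ?_
  intro x hx
  have := inv_pos.2 (Real.sqrt_pos.2 (spec_pos a x hx))
  rcases h0.eq_or_lt with rfl | h0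
  · simp
  · have := mul_pos h0 this
    show (1 - s) + s * (Real.sqrt x)⁻¹ ≠ 0
    intro h
    linarith

theorem invAbs_one {a : A} (h : star a * a = 1) : invAbs a = 1 := by
  rw [invAbs, h, cfc_apply_one]
  simp

end Polar

end

section

/-! ### Splitting off the last coordinate of a cube -/

/-- Adjoining a last coordinate. -/
def sn (m : ℕ) (p : (Fin m → I) × I) : Fin (m + 1) → I := Fin.snoc (α := fun _ => I) p.1 p.2

/-- Splitting off the last coordinate. -/
def spl (m : ℕ) (x : Fin (m + 1) → I) : (Fin m → I) × I := (fun i => x i.castSucc, x (Fin.last m))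

theorem sn_spl (m : ℕ) (x : Fin (m + 1) → I) : sn m (spl m x) = x := Fin.snoc_init_self x

theorem spl_sn (m : ℕ) (p : (Fin m → I) × I) : spl m (sn m p) = p := by
  simp [spl, sn]

theorem continuous_spl (m : ℕ) : Continuous (spl m) := by unfold spl; fun_prop

theorem continuous_sn (m : ℕ) : Continuous (sn m) := by
  refine continuous_pi fun i => ?_
  refine Fin.lastCases ?_ (fun j => ?_) i
  · simp only [sn, Fin.snoc_last]; fun_prop
  · simp only [sn, Fin.snoc_castSucc]; fun_prop

theorem spl_bd (m : ℕ) (x : Fin (m + 1) → I) : spl m x ∈ IBd (Bd m) ↔ x ∈ Bd (m + 1) := by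
  simp only [IBd, spl, Bd, Cube.boundary, Set.mem_setOf_eq, Set.mem_ofPred_eq]
  rw [Fin.exists_fin_succ']

theorem sn_bd (m : ℕ) (p : (Fin m → I) × I) : sn m p ∈ Bd (m + 1) ↔ p ∈ IBd (Bd m) := by
  rw [← spl_bd, spl_sn]

/-- On a cube of dimension at least two, relative logarithms exist. -/
theorem log_cube {d : ℕ} (hd : 2 ≤ d) {δ : (Fin d → I) → ℂ} (hc : Continuous δ)
    (h0 : ∀ y, δ y ≠ 0) (h1 : ∀ y ∈ Bd d, δ y = 1) :
    ∃ ℓ : (Fin d → I) → ℂ, Continuous ℓ ∧ (∀ y, Complex.exp (ℓ y) = δ y) ∧ ∀ y ∈ Bd d, ℓ y = 0 := by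
  obtain ⟨m, rfl⟩ : ∃ m, d = m + 1 + 1 := ⟨d - 2, by omega⟩
  obtain ⟨g, hg, g0, g1, g2⟩ := lift_log (Y := Fin (m + 1) → I)
    (fun p => δ (sn _ p)) (hc.comp (continuous_sn _)) fun p => h0 _
  have hz : ∀ y, δ (sn (m + 1) (y, 0)) = 1 := fun y => h1 _ ((sn_bd _ _).2 (Or.inr (Or.inl rfl)))
  simp only [hz, mul_one] at g1 g2
  have hb : ∀ y ∈ Bd (m + 1), ∀ t, g (y, t) = 0 := fun y hy =>
    g2 y fun t => h1 _ ((sn_bd _ _).2 (Or.inl hy))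
  have ht : ∀ y, g (y, 1) = 0 := fun y => by
    have hy : (fun _ : Fin (m + 1) => (0 : I)) ∈ Bd (m + 1) := ⟨0, Or.inl rfl⟩
    rw [← hb _ hy 1]
    refine exp_const (f := fun y => g (y, 1)) (by fun_prop) (fun y => ?_) _ _
    rw [g1]
    exact h1 _ ((sn_bd _ _).2 (Or.inr (Or.inr rfl)))
  refine ⟨fun x => g (spl _ x), hg.comp (continuous_spl _), fun y => ?_, fun y hy => ?_⟩
  · have := g1 (spl _ y).1 (spl _ y).2
    rw [Prod.mk.eta, sn_spl] at this
    exact this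
  · rw [← spl_bd] at hy
    show g (spl (m + 1) y) = 0
    revert hy
    generalize spl (m + 1) y = q
    obtain ⟨a, t⟩ := q
    intro hy
    rcases hy with hy | hy | hy
    · exact hb _ hy _
    · rw [show t = _ from hy]; exact g0 _
    · rw [show t = _ from hy]; exact ht _

/-! ### The special unitary group inside the general linear group -/

section polarMatrix

open scoped Matrix.Norms.L2Operator

/-- The factor `P a = |a|⁻¹` of the polar decomposition, for which `a * P a` is unitary and the segment
from `1` to `P a` consists of invertible matrices. -/
theorem polar_matrix (n : ℕ) : ∃ P : GLm (Fin n) → Matrix (Fin n) (Fin n) ℂ, Continuous P ∧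
    (∀ a, star (a.val * P a) * (a.val * P a) = 1) ∧
    (∀ (a) (s : ℝ), 0 ≤ s → s ≤ 1 → IsUnit (((1 - s : ℝ) : ℂ) • (1 : Matrix (Fin n) (Fin n) ℂ)
      + (s : ℂ) • P a)) ∧
    (∀ a, star a.val * a.val = 1 → P a = 1) ∧ (∀ a, star (P a) = P a) ∧
    ∀ (a) (b : Matrix (Fin n) (Fin n) ℂ), Commute (star a.val * a.val) b → Commute (P a) b := by
  letI : CStarAlgebra (Matrix (Fin n) (Fin n) ℂ) := { }
  refine ⟨fun a => invAbs a.val, continuous_invAbs, fun a => ?_, fun a s h0 h1 => isUnit_path a h0 h1,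
    fun a h => invAbs_one h, fun a => invAbs_sa a.val, fun a b h => h.cfc_real _⟩
  have := invAbs_mul a
  rw [star_mul, (invAbs_sa a.val).star_eq]
  simpa only [mul_assoc] using this

end polarMatrix

variable {n : ℕ}

theorem SU.det (x : SU n) : (SU.toMat x).det = 1 := x.2

theorem SU.star_mul (x : SU n) : star (SU.toMat x) * SU.toMat x = 1 :=
  Matrix.mem_unitaryGroup_iff'.1 x.1.2

theorem SU.mul_star (x : SU n) : SU.toMat x * star (SU.toMat x) = 1 :=
  Matrix.mem_unitaryGroup_iff.1 x.1.2

theorem SU.ext' {x y : SU n} (h : SU.toMat x = SU.toMat y) : x = y := Subtype.ext (Subtype.ext h)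

@[fun_prop] theorem SU.continuous_toMat : Continuous (SU.toMat (n := n)) :=
  continuous_subtype_val.comp continuous_subtype_val

theorem SU.toMat_mul (x y : SU n) : SU.toMat (x * y) = SU.toMat x * SU.toMat y := rfl
theorem SU.toMat_one : SU.toMat (1 : SU n) = 1 := rfl

theorem SU.toMat_inv (x : SU n) : SU.toMat x⁻¹ = star (SU.toMat x) := rfl

/-- Bundling a unitary matrix of determinant one. -/
def mkSU (M : Matrix (Fin n) (Fin n) ℂ) (h : star M * M = 1) (hd : M.det = 1) : SU n :=
  ⟨⟨M, Matrix.mem_unitaryGroup_iff'.2 h⟩, hd⟩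

theorem mkSU_toMat (M : Matrix (Fin n) (Fin n) ℂ) (h : star M * M = 1) (hd : M.det = 1) :
    SU.toMat (mkSU M h hd) = M := rfl

theorem continuous_SU {Z : Type*} [TopologicalSpace Z] {f : Z → SU n}
    (h : Continuous fun z => SU.toMat (f z)) : Continuous f :=
  Continuous.subtype_mk (Continuous.subtype_mk h fun z => (f z).1.2) fun z => (f z).2

/-- The inclusion of the special unitary group into the general linear group. -/
noncomputable def iSU (n : ℕ) : SU n →* GLm (Fin n) := Unitary.toUnits.comp (SU n).subtype

@[simp] theorem iSU_val (x : SU n) : (iSU n x).val = SU.toMat x := rfl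

@[fun_prop] theorem continuous_iSU : Continuous (iSU n) := continuous_GL (by simp; fun_prop)

end

section

/-! ### Retraction of the general linear group onto the special unitary group -/

variable {n : ℕ}

/-- The diagonal matrix with one entry `c`, all others being one. -/
def dg (i : Fin n) (c : ℂ) : Matrix (Fin n) (Fin n) ℂ := Matrix.diagonal (Function.update 1 i c)

theorem dg_det (i : Fin n) (c : ℂ) : (dg i c).det = c := by
  rw [dg, Matrix.det_diagonal, Finset.prod_update_of_mem (Finset.mem_univ i)]
  simp

theorem dg_one (i : Fin n) : dg i 1 = 1 := by
  rw [dg, show Function.update (1 : Fin n → ℂ) i 1 = 1 from Function.update_eq_self i 1]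
  exact Matrix.diagonal_one

theorem dg_star (i : Fin n) {c : ℂ} (h : star c * c = 1) : star (dg i c) * dg i c = 1 := by
  rw [dg, Matrix.star_eq_conjTranspose, Matrix.diagonal_conjTranspose, Matrix.diagonal_mul_diagonal,
    ← Matrix.diagonal_one]
  congr 1
  funext j
  by_cases hj : j = i
  · subst hj; simpa using h
  · simp [hj]

theorem continuous_dg (i : Fin n) : Continuous (dg i) := by
  unfold dg
  exact Continuous.matrix_diagonal (continuous_const.update i continuous_id)

/-- The general linear group retracts onto `SU(n)`, by the polar decomposition followed by the
correction of one coordinate by the determinant.  In degrees at least two the retraction does not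
change homotopy classes, because the determinant then has a logarithm. -/
theorem su_retract (hn : 1 ≤ n) : ∃ R : GLm (Fin n) → SU n, Continuous R ∧
    (∀ x, R (iSU n x) = x) ∧
    ∀ d, 2 ≤ d → ∀ u : (Fin d → I) → GLm (Fin n), Rel (Bd d) u →
      Htpy (Bd d) u (fun y => iSU n (R (u y))) := by
  obtain ⟨P, hP, hP1, hP2, hP3, -, -⟩ := polar_matrix n
  let i : Fin n := ⟨0, hn⟩
  let W : GLm (Fin n) → Matrix (Fin n) (Fin n) ℂ := fun a => a.val * P a
  have hW : Continuous W := Units.continuous_val.mul hP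
  have hWd : ∀ a, star (W a).det * (W a).det = 1 := fun a => by
    have := congrArg Matrix.det (hP1 a)
    rwa [Matrix.det_mul, Matrix.star_eq_conjTranspose, Matrix.det_conjTranspose, Matrix.det_one]
      at this
  have hWu : ∀ a, IsUnit (W a) := fun a => IsUnit.of_mul_eq_one_right _ (hP1 a)
  have hd0 : ∀ a, (W a).det ≠ 0 := fun a => right_ne_zero_of_mul_eq_one (hWd a)
  let M : GLm (Fin n) → Matrix (Fin n) (Fin n) ℂ := fun a => dg i (W a).det⁻¹ * W a
  have hM : Continuous M :=
    ((continuous_dg i).comp (hW.matrix_det.inv₀ hd0)).mul hW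
  have hM1 : ∀ a, star (M a) * M a = 1 := fun a => by
    have h := dg_star i (c := (W a).det⁻¹) (by
      rw [star_inv₀, ← mul_inv, hWd, inv_one])
    show star (dg i (W a).det⁻¹ * W a) * (dg i (W a).det⁻¹ * W a) = 1
    rw [StarMul.star_mul]
    calc _ = star (W a) * (star (dg i (W a).det⁻¹) * dg i (W a).det⁻¹) * W a := by
          simp only [mul_assoc]
      _ = 1 := by rw [h, mul_one]; exact hP1 a
  have hMd : ∀ a, (M a).det = 1 := fun a => by
    simp only [M]
    rw [Matrix.det_mul, dg_det, inv_mul_cancel₀ (hd0 a)]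
  have hW1 : ∀ a, star a.val * a.val = 1 → W a = a.val := fun a ha => by simp [W, hP3 a ha]
  refine ⟨fun a => mkSU (M a) (hM1 a) (hMd a), continuous_SU hM, fun x => SU.ext' ?_,
    fun d hd u hu => ?_⟩
  · rw [mkSU_toMat]
    simp only [M]
    rw [hW1 _ (by rw [iSU_val]; exact SU.star_mul x), iSU_val, SU.det, inv_one, dg_one, one_mul]
  have hu1 : ∀ y ∈ Bd d, W (u y) = 1 := fun y hy => by
    rw [hu.bd y hy, hW1 _ (by simp)]; rfl
  have hPu1 : ∀ y ∈ Bd d, P (u y) = 1 := fun y hy => by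
    rw [hu.bd y hy, hP3 _ (by simp)]
  have s1 : Htpy (Bd d) u (fun y => toGL (W (u y))) := by
    refine ⟨fun p => toGL ((u p.2).val * (((1 - p.1 : ℝ) : ℂ) • (1 : Matrix (Fin n) (Fin n) ℂ)
      + ((p.1 : ℝ) : ℂ) • P (u p.2))), continuous_toGL ?_ ?_, fun y => ?_, fun y => ?_, ?_⟩
    · have h1 : Continuous fun p : I × (Fin d → I) => (u p.2).val :=
        Units.continuous_val.comp (hu.cont.comp continuous_snd)
      have h2 : Continuous fun p : I × (Fin d → I) => P (u p.2) :=
        hP.comp (hu.cont.comp continuous_snd)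
      have h3 : Continuous fun p : I × (Fin d → I) => ((p.1 : ℝ) : ℂ) := by fun_prop
      have h4 : Continuous fun p : I × (Fin d → I) => ((1 - p.1 : ℝ) : ℂ) := by fun_prop
      exact h1.mul ((h4.smul continuous_const).add (h3.smul h2))
    · exact fun p => (u p.2).isUnit.mul (hP2 _ _ p.1.2.1 p.1.2.2)
    · simp [toGL_coe]
    · simp [W]
    · intro t y hy
      have : (((1 - t : ℝ) : ℂ) • (1 : Matrix (Fin n) (Fin n) ℂ) + ((t : ℝ) : ℂ) • 1) = 1 := by
        rw [← add_smul]; simp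
      simp only [hPu1 y hy, this, mul_one, toGL_coe]
  obtain ⟨ℓ, hℓ, hℓ1, hℓ2⟩ := log_cube hd (δ := fun y => (W (u y)).det)
    ((hW.comp hu.cont).matrix_det) (fun y => hd0 _) (fun y hy => by rw [hu1 y hy, Matrix.det_one])
  refine s1.trans ⟨fun p => toGL (dg i (Complex.exp (-((p.1 : ℝ) : ℂ) * ℓ p.2)) * W (u p.2)),
    continuous_toGL ?_ fun p => ?_, fun y => ?_, fun y => ?_, ?_⟩
  · have h1 : Continuous fun p : I × (Fin d → I) => W (u p.2) :=
      hW.comp (hu.cont.comp continuous_snd)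
    exact ((continuous_dg i).comp (by fun_prop)).mul h1
  · refine IsUnit.mul ?_ (hWu _)
    rw [Matrix.isUnit_iff_isUnit_det, dg_det]
    exact (Complex.exp_ne_zero _).isUnit
  · simp [dg_one]
  · have : toGL (dg i (W (u y)).det⁻¹ * W (u y)) = iSU n (mkSU (M (u y)) (hM1 _) (hMd _)) := by
      rw [← toGL_coe (iSU n _), iSU_val, mkSU_toMat]
    have hh : Complex.exp (-(((1 : I) : ℝ) : ℂ) * ℓ y) = (W (u y)).det⁻¹ := by
      rw [← hℓ1 y, ← Complex.exp_neg]
      simp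
    refine Eq.trans ?_ this
    simp only [hh]
  · intro t y hy
    simp [hℓ2 y hy, dg_one]

end

section

/-! ### Homotopy groups of the special unitary groups -/

variable {n : ℕ}

/-- Homotopies in the general linear group between maps into `SU(n)` retract into `SU(n)`. -/
theorem su_inj (hn : 1 ≤ n) {Y : Type*} [TopologicalSpace Y] {Y0 : Set Y} {u v : Y → SU n}
    (h : Htpy Y0 (fun y => iSU n (u y)) (fun y => iSU n (v y))) : Htpy Y0 u v := by
  obtain ⟨R, hR, hR1, -⟩ := su_retract hn
  simpa only [hR1] using h.comp_left hR

theorem Rel.iSU {Y : Type*} [TopologicalSpace Y] {Y0 : Set Y} {u : Y → SU n} (hu : Rel Y0 u) :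
    Rel Y0 (fun y => iSU n (u y)) :=
  ⟨continuous_iSU.comp hu.cont, fun y hy => by rw [hu.bd y hy, map_one]⟩

/-- Homotopy groups of `SU(n)` vanish in even degrees and in degree one, in the stable range. -/
theorem su_even {d : ℕ} (hd : d < 2 * n) (he : Even d ∨ d = 1) {u : (Fin d → I) → SU n}
    (hu : Rel (Bd d) u) : Null (Bd d) u := by
  refine su_inj (by omega) ?_
  simp only [map_one]
  rcases he with he | rfl
  · exact GL_even hd he hu.iSU
  · exact GL_one (by omega) hu.iSU fun y => by rw [iSU_val, SU.det]

/-- Homotopy groups of `SU(n)` in odd degrees at least three are infinite cyclic in the stable range,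
with generators compatible under stabilization. -/
theorem su_odd {d : ℕ} (he : ¬ Even d) (h3 : 3 ≤ d) :
    ∃ g : (n : ℕ) → (Fin d → I) → SU n, ∀ n, d < 2 * n → Rel (Bd d) (g n) ∧
      (∀ u, Rel (Bd d) u → ∃ j : ℤ, Htpy (Bd d) u (fun y => g n y ^ j)) ∧
      (∀ j : ℤ, Null (Bd d) (fun y => g n y ^ j) → j = 0) ∧
      ∀ m, d < 2 * m → SEq (Bd d) (fun y => iSU n (g n y)) (fun y => iSU m (g m y)) := by
  obtain ⟨g, hg⟩ := GL_odd he
  have : ∀ n, ∃ a : (Fin d → I) → SU n, d < 2 * n →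
      Rel (Bd d) a ∧ Htpy (Bd d) (g n) (fun y => iSU n (a y)) := fun n => by
    by_cases hn : d < 2 * n
    · obtain ⟨R, hR, hR1, hR2⟩ := su_retract (n := n) (by omega)
      have h1 := hR1 1
      rw [map_one] at h1
      refine ⟨fun y => R (g n y), fun _ => ⟨⟨hR.comp (hg n hn).1.cont, fun y hy => ?_⟩,
        hR2 d (by omega) _ (hg n hn).1⟩⟩
      rw [(hg n hn).1.bd y hy, h1]
    · exact ⟨fun _ => 1, fun h => (hn h).elim⟩
  choose a ha using this
  refine ⟨a, fun n hn => ⟨(ha n hn).1, fun u hu => ?_, fun j hj => ?_, fun m hm => ?_⟩⟩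
  · obtain ⟨j, hj⟩ := (hg n hn).2.1 _ hu.iSU
    refine ⟨j, su_inj (by omega) (hj.trans ?_)⟩
    simpa only [map_zpow] using (ha n hn).2.zpow j
  · refine (hg n hn).2.2.1 j (((ha n hn).2.zpow j).trans ?_)
    simpa only [map_zpow, map_one] using hj.comp_left (continuous_iSU (n := n))
  · refine ((ha n hn).2.symm.seq.trans ((hg n hn).2.2.2 m hm) (ha n hn).1.iSU (hg n hn).1).trans
      (ha m hm).2.seq (ha n hn).1.iSU (hg m hm).1

/-! ### The Kronecker product and stabilization -/

section Block

variable {ι o : Type} [Fintype ι] [DecidableEq ι] [Fintype o] [DecidableEq o]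

/-- Block diagonal matrices. -/
def bD (A : o → GLm ι) : GLm (ι × o) where
  val := Matrix.blockDiagonal fun i => (A i).val
  inv := Matrix.blockDiagonal fun i => (A i)⁻¹.val
  val_inv := by rw [← Matrix.blockDiagonal_mul]; simp [← Matrix.blockDiagonal_one]; rfl
  inv_val := by rw [← Matrix.blockDiagonal_mul]; simp [← Matrix.blockDiagonal_one]; rfl

theorem bD_mul (A B : o → GLm ι) : bD (fun i => A i * B i) = bD A * bD B := by
  ext1
  simp [bD, Matrix.blockDiagonal_mul]

theorem bD_one : bD (fun _ : o => (1 : GLm ι)) = 1 := by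
  ext1
  simp only [bD, Units.val_one]
  exact Matrix.blockDiagonal_one

/-- The embedding as a block. -/
def blkE (ι : Type) {o : Type} (j : o) : ι ↪ ι × o := ⟨fun a => (a, j), fun a b h => by simpa using h⟩

theorem blkE_apply (j : o) (a : ι) : blkE ι j a = (a, j) := rfl

theorem bD_single (A : GLm ι) (j : o) : bD (fun i => if i = j then A else 1) = ext (blkE ι j) A := by
  ext1
  ext ⟨a, i⟩ ⟨b, i'⟩
  rw [ext_val]
  simp only [bD, Matrix.blockDiagonal_apply, extM, embM, Matrix.add_apply, Matrix.sub_apply,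
    Matrix.mul_apply, Matrix.of_apply, Matrix.transpose_apply, blkE_apply,
    Prod.mk.injEq, Matrix.one_apply]
  by_cases h1 : i = j <;> by_cases h2 : i' = j
  · subst h1; subst h2; simp [Finset.sum_ite_eq, Finset.sum_ite_eq']
  · subst h1; simp [h2, Ne.symm h2]
  · subst h2; simp [h1, Ne.symm h1]
  · simp [h1, h2, Matrix.one_apply]
    by_cases h3 : i = i' <;> by_cases h4 : a = b <;> simp [h3, h4]

theorem htpy_bD {Y : Type*} [TopologicalSpace Y] {Y0 : Set Y} {u : Y → GLm ι} (hu : Rel Y0 u)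
    (e : ι ↪ ι × o) (S : Finset o) :
    Htpy Y0 (fun y => bD fun i => if i ∈ S then u y else 1) (fun y => ext e (u y) ^ S.card) := by
  induction S using Finset.induction_on with
  | empty =>
    simp only [Finset.notMem_empty, if_false, bD_one, Finset.card_empty, pow_zero]
    exact Htpy.refl continuous_const
  | insert j S hj ih =>
    have h : (fun y => bD fun i => if i ∈ insert j S then u y else 1) =
        fun y => (bD fun i => if i ∈ S then u y else 1) * ext (blkE ι j) (u y) := by
      funext y
      rw [← bD_single, ← bD_mul]
      congr 1
      funext i
      by_cases hi : i = j
      · subst hi; simp [hj]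
      · simp [hi]
    rw [h]
    simp only [Finset.card_insert_of_notMem hj, pow_succ]
    exact ih.mul (htpy_ext hu.cont hu.bd _ _)

end Block

variable {k l : ℕ} {d : ℕ}

theorem seq_bD {ι o : Type} [Fintype ι] [DecidableEq ι] [Fintype o] [DecidableEq o] [Nonempty o]
    (hN : d < 2 * n) (f : ι × o ↪ Fin n)
    {u : (Fin d → I) → GLm ι} {v : (Fin d → I) → GLm (Fin n)} (hu : Rel (Bd d) u)
    (hv : Rel (Bd d) v) (h : SEq (Bd d) u v) :
    Htpy (Bd d) (fun y => ext f (bD fun _ : o => u y)) (fun y => v y ^ Fintype.card o) := by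
  obtain ⟨j⟩ := ‹Nonempty o›
  have h1 := (htpy_bD hu (blkE ι j) (Finset.univ : Finset o)).ext f
  simp only [Finset.mem_univ, if_true, Finset.card_univ, map_pow] at h1
  refine h1.trans (Htpy.pow ?_ _)
  refine SEq.htpy (embDim_cube d) (by simpa using hN) ((hu.ext _).ext _) hv ?_
  exact ((seq_ext (hu.ext _) f).symm.trans (seq_ext hu _).symm ((hu.ext _).ext _) (hu.ext _)).trans h
    ((hu.ext _).ext _) hu

theorem kron_left (φ : (SU k × SU l) →* SU (k * l))
    (hφ : ∀ (A : SU k) (B : SU l), SU.toMat (φ (A, B)) = kron (SU.toMat A) (SU.toMat B))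
    (A : SU k) : iSU (k * l) (φ (A, 1)) =
      ext finProdFinEquiv.toEmbedding (bD fun _ : Fin l => iSU k A) := by
  ext1
  ext i j
  rw [iSU_val, hφ, ext_val, extM_equiv, kron, SU.toMat_one, Matrix.kronecker_one]
  rfl

theorem kron_right (φ : (SU k × SU l) →* SU (k * l))
    (hφ : ∀ (A : SU k) (B : SU l), SU.toMat (φ (A, B)) = kron (SU.toMat A) (SU.toMat B))
    (B : SU l) : iSU (k * l) (φ (1, B)) =
      ext ((Equiv.prodComm _ _).trans finProdFinEquiv).toEmbedding (bD fun _ : Fin k => iSU l B) := by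
  ext1
  ext i j
  rw [iSU_val, hφ, ext_val, extM_equiv, kron, SU.toMat_one, Matrix.one_kronecker]
  rfl

/-- The Kronecker product on homotopy groups is `(x, y) ↦ l x + k y`, because `A ⊗ 1` and `1 ⊗ B` are
stably sums of `l` copies of `A` and of `k` copies of `B`. -/
theorem kron_pow (hk : d < 2 * k) (hl : d < 2 * l) (φ : (SU k × SU l) →* SU (k * l))
    (hφ : ∀ (A : SU k) (B : SU l), SU.toMat (φ (A, B)) = kron (SU.toMat A) (SU.toMat B))
    {a : (Fin d → I) → SU k} {b : (Fin d → I) → SU l} {c : (Fin d → I) → SU (k * l)}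
    (ha : Rel (Bd d) a) (hb : Rel (Bd d) b) (hc : Rel (Bd d) c)
    (hac : SEq (Bd d) (fun y => iSU k (a y)) (fun y => iSU _ (c y)))
    (hbc : SEq (Bd d) (fun y => iSU l (b y)) (fun y => iSU _ (c y))) (x y : ℤ) :
    Htpy (Bd d) (fun p => φ (a p ^ x, b p ^ y)) (fun p => c p ^ (l * x + k * y : ℤ)) := by
  have hk0 : 0 < k := by omega
  have hl0 : 0 < l := by omega
  have hkl : k ≤ k * l := Nat.le_mul_of_pos_right k hl0
  haveI : Nonempty (Fin k) := ⟨⟨0, hk0⟩⟩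
  haveI : Nonempty (Fin l) := ⟨⟨0, hl0⟩⟩
  refine su_inj (by omega) ?_
  have h1 := (seq_bD (o := Fin l) (by omega) finProdFinEquiv.toEmbedding ha.iSU hc.iSU hac).zpow x
  have h2 := (seq_bD (o := Fin k) (by omega)
    ((Equiv.prodComm _ _).trans finProdFinEquiv).toEmbedding hb.iSU hc.iSU hbc).zpow y
  simp only [← kron_left φ hφ, ← kron_right φ hφ] at h1 h2
  have e1 : ∀ p, iSU (k * l) (φ (a p ^ x, b p ^ y)) =
      iSU (k * l) (φ (a p, 1)) ^ x * iSU (k * l) (φ (1, b p)) ^ y := fun p => by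
    have : (a p ^ x, b p ^ y) = (a p, (1 : SU l)) ^ x * ((1 : SU k), b p) ^ y :=
      Prod.ext (by simp) (by simp)
    rw [this, map_mul, map_mul, map_zpow, map_zpow, map_zpow, map_zpow]
  have e2 : ∀ p, iSU (k * l) (c p ^ (l * x + k * y : ℤ)) =
      (iSU (k * l) (c p) ^ l) ^ x * (iSU (k * l) (c p) ^ k) ^ y := fun p => by
    rw [zpow_add, map_mul, zpow_mul, zpow_mul, zpow_natCast, zpow_natCast, map_zpow, map_zpow,
      map_pow, map_pow]
  have h3 := h1.mul h2
  simp only [Fintype.card_fin, ← e1, ← e2] at h3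
  exact h3

end

section

/-! ### Special unitary groups: compactness, square roots, the trace -/

variable {n : ℕ}

theorem SU.inducing : Topology.IsInducing (SU.toMat (n := n)) :=
  Topology.IsInducing.subtypeVal.comp Topology.IsInducing.subtypeVal

instance SU.compact : CompactSpace (SU n) := by
  rw [← isCompact_univ_iff, SU.inducing.isCompact_iff]
  have hr : SU.toMat (n := n) '' Set.univ = {M | star M * M = 1} ∩ {M | M.det = 1} := by
    ext M
    constructor
    · rintro ⟨x, -, rfl⟩
      exact ⟨SU.star_mul x, SU.det x⟩
    · rintro ⟨h1, h2⟩
      exact ⟨mkSU M h1 h2, trivial, rfl⟩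
  have hc : IsClosed (SU.toMat (n := n) '' Set.univ) := by
    rw [hr]
    refine (isClosed_eq ?_ continuous_const).inter (isClosed_eq ?_ continuous_const) <;> fun_prop
  have hk : IsCompact (Set.univ.pi fun _ : Fin n => Set.univ.pi fun _ : Fin n =>
      Metric.closedBall (0 : ℂ) 1) :=
    isCompact_univ_pi fun _ => isCompact_univ_pi fun _ => isCompact_closedBall _ _
  refine hk.of_isClosed_subset hc ?_
  rintro M ⟨x, -, rfl⟩ i - j -
  simpa using entry_norm_bound_of_unitary (U := SU.toMat x) x.1.2 i j

/-- Small elements of the special unitary group have small square roots: the polar part of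
`(1 + w) / 2` is a square root of the unitary matrix `w`. -/
theorem su_sqrt {V : Set (SU n)} (hV : V ∈ 𝓝 (1 : SU n)) :
    ∀ᶠ w in 𝓝 (1 : SU n), ∃ v ∈ V, v * v = w := by
  obtain ⟨P, hP, hP1, -, hP3, hP4, hP5⟩ := polar_matrix n
  rw [SU.inducing.nhds_eq_comap] at hV
  obtain ⟨V', hV', hVV⟩ := hV
  let A : SU n → Matrix (Fin n) (Fin n) ℂ := fun w => (1 / 2 : ℂ) • (1 + SU.toMat w)
  have hA : Continuous A := by
    have := SU.continuous_toMat (n := n)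
    fun_prop
  have hA1 : A 1 = 1 := by
    simp only [A, SU.toMat_one, ← two_smul ℂ (1 : Matrix (Fin n) (Fin n) ℂ), smul_smul]
    norm_num
  have hU : A ⁻¹' {M | IsUnit M} ∈ 𝓝 (1 : SU n) :=
    (isOpen_isUnit.preimage hA).mem_nhds (by simp [hA1])
  have hc : ContinuousAt (fun w => toGL (A w)) 1 :=
    (continuousOn_toGL hA.continuousOn fun y hy => hy).continuousAt hU
  let Q : SU n → Matrix (Fin n) (Fin n) ℂ := fun w => (toGL (A w)).val * P (toGL (A w))
  have hQ : ContinuousAt Q 1 := by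
    have h : Continuous fun a : GLm (Fin n) => a.val * P a := Units.continuous_val.mul hP
    exact ContinuousAt.comp (f := fun w => toGL (A w)) (g := fun a : GLm (Fin n) => a.val * P a)
      h.continuousAt hc
  have hQ1 : Q 1 = 1 := by
    have : toGL (A 1) = 1 := by rw [hA1]; exact toGL_coe 1
    simp only [Q, this, Units.val_one, one_mul]
    exact hP3 _ (by simp)
  have hV2 : ∀ᶠ w in 𝓝 (1 : SU n), Q w ∈ V' := hQ (by rw [hQ1]; exact hV')
  have hdet : ∀ᶠ w in 𝓝 (1 : SU n), 0 < (Q w).det.re := by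
    have hd : Continuous fun M : Matrix (Fin n) (Fin n) ℂ => M.det.re :=
      Complex.continuous_re.comp (by fun_prop)
    have hd2 : ContinuousAt (fun w => (Q w).det.re) 1 :=
      ContinuousAt.comp (f := Q) hd.continuousAt hQ
    exact hd2.eventually (lt_mem_nhds (by simp [hQ1]))
  filter_upwards [hV2, hdet, hU] with w h1 h2 h3
  have hv : (toGL (A w)).val = A w := toGL_val h3
  have hs : star (Q w) * Q w = 1 := hP1 _
  have hsw := SU.star_mul w
  have hAA : A w * A w = SU.toMat w * (star (A w) * A w) := by
    simp only [A, star_smul, star_add, star_one, smul_mul_smul_comm]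
    have h4 : SU.toMat w * (1 + star (SU.toMat w)) = 1 + SU.toMat w := by
      rw [mul_add, mul_one, SU.mul_star, add_comm]
    rw [mul_smul_comm, ← mul_assoc, h4]
    simp
  have hcom : Commute (P (toGL (A w))) (A w) := by
    refine hP5 _ _ ?_
    rw [hv]
    show star (A w) * A w * A w = A w * (star (A w) * A w)
    have h5 : star (A w) * A w = A w * star (A w) := by
      simp only [A, star_smul, star_add, star_one, smul_mul_smul_comm, mul_comm]
      congr 1
      simp only [mul_add, add_mul, one_mul, mul_one, hsw, SU.mul_star]
      abel
    rw [h5, mul_assoc, ← h5, h5]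
  have hQQ : Q w * Q w = SU.toMat w := by
    have h6 := hs
    simp only [Q, hv] at h6 ⊢
    rw [StarMul.star_mul, hP4] at h6
    calc A w * P (toGL (A w)) * (A w * P (toGL (A w)))
        = (A w * A w) * (P (toGL (A w)) * P (toGL (A w))) := by
          rw [mul_assoc, ← mul_assoc (P _) (A w), hcom.eq]; simp only [mul_assoc]
      _ = SU.toMat w * (star (A w) * A w * (P (toGL (A w)) * P (toGL (A w)))) := by
          rw [hAA, mul_assoc]
      _ = SU.toMat w := by
          have h7 : Commute (P (toGL (A w))) (star (A w) * A w) := by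
            have := hP5 (toGL (A w)) (star (A w) * A w) (by rw [hv])
            exact this
          rw [← mul_assoc (star (A w) * A w), ← h7.eq]
          have : P (toGL (A w)) * (star (A w) * A w) * P (toGL (A w)) = 1 := by
            simpa only [mul_assoc] using h6
          rw [this, mul_one]
  have hd1 : (Q w).det = 1 := by
    have h8 : (Q w).det * (Q w).det = 1 := by rw [← Matrix.det_mul, hQQ, SU.det]
    rcases mul_self_eq_one_iff.1 h8 with h | h
    · exact h
    · rw [h] at h2; norm_num at h2
  exact ⟨mkSU (Q w) hs hd1, hVV h1, SU.ext' hQQ⟩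

/-- The real part of the trace. -/
noncomputable def rtr (M : Matrix (Fin n) (Fin n) ℂ) : ℝ := M.trace.re

@[fun_prop] theorem continuous_rtr : Continuous (rtr (n := n)) :=
  Complex.continuous_re.comp (by fun_prop)

theorem rtr_add (A B : Matrix (Fin n) (Fin n) ℂ) : rtr (A + B) = rtr A + rtr B := by simp [rtr]
theorem rtr_sub (A B : Matrix (Fin n) (Fin n) ℂ) : rtr (A - B) = rtr A - rtr B := by simp [rtr]
theorem rtr_comm (A B : Matrix (Fin n) (Fin n) ℂ) : rtr (A * B) = rtr (B * A) := by
  rw [rtr, Matrix.trace_mul_comm]; rfl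
theorem rtr_star (A : Matrix (Fin n) (Fin n) ℂ) : rtr (star A) = rtr A := by
  rw [rtr, Matrix.star_eq_conjTranspose, Matrix.trace_conjTranspose]; simp [rtr]

theorem rtr_pos {Z : Matrix (Fin n) (Fin n) ℂ} (h : Z ≠ 0) : 0 < rtr (star Z * Z) := by
  have h1 : rtr (star Z * Z) = ∑ i, ∑ j, ‖Z j i‖ ^ 2 := by
    simp only [rtr, Matrix.trace, Matrix.diag_apply, Matrix.mul_apply, Matrix.star_apply,
      Complex.re_sum]
    refine Finset.sum_congr rfl fun i _ => Finset.sum_congr rfl fun j _ => ?_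
    rw [mul_comm, ← Complex.ofReal_re (‖Z j i‖ ^ 2)]
    congr 1
    rw [Complex.star_def, Complex.mul_conj, Complex.normSq_eq_norm_sq]
  rw [h1]
  obtain ⟨j, i, hij⟩ : ∃ j i, Z j i ≠ 0 := by
    by_contra hc
    push Not at hc
    exact h (by ext a b; exact hc a b)
  refine Finset.sum_pos' (fun i _ => Finset.sum_nonneg fun j _ => by positivity)
    ⟨i, Finset.mem_univ _, Finset.sum_pos' (fun j _ => by positivity) ⟨j, Finset.mem_univ _, ?_⟩⟩
  have := norm_pos_iff.2 hij
  positivity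

theorem rtr_lt (x : SU n) (hx : x ≠ 1) : rtr (SU.toMat x) < rtr (SU.toMat (1 : SU n)) := by
  have h := rtr_pos (Z := 1 - SU.toMat x) fun h => hx (SU.ext' (sub_eq_zero.1 h).symm)
  have h2 : star (1 - SU.toMat x) * (1 - SU.toMat x) =
      1 + 1 - (SU.toMat x + star (SU.toMat x)) := by
    rw [star_sub, star_one, sub_mul, mul_sub, mul_sub, SU.star_mul]
    simp only [one_mul, mul_one]
    abel
  rw [h2, rtr_sub, rtr_add, rtr_add, rtr_star] at h
  rw [SU.toMat_one]
  linarith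

section near

open scoped Matrix.Norms.Elementwise

/-- Elements close to the identity have positive definite real part. -/
theorem rtr_pos_near : ∀ᶠ X in 𝓝 (1 : SU n), ∀ Z : Matrix (Fin n) (Fin n) ℂ, Z ≠ 0 →
    0 < rtr (Z * SU.toMat X * star Z) := by
  have hc : IsCompact (Metric.sphere (0 : Matrix (Fin n) (Fin n) ℂ) 1) := isCompact_sphere _ _
  have h := hc.eventually_forall_of_forall_eventually (x₀ := (1 : SU n))
    (P := fun X Z => 0 < rtr (Z * SU.toMat X * star Z)) fun Z hZ => by
      have hcont : Continuous fun z : SU n × Matrix (Fin n) (Fin n) ℂ =>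
          rtr (z.2 * SU.toMat z.1 * star z.2) := by
        refine continuous_rtr.comp ?_
        have : Continuous fun z : SU n × Matrix (Fin n) (Fin n) ℂ => SU.toMat z.1 :=
          SU.continuous_toMat.comp continuous_fst
        exact (continuous_snd.mul this).mul continuous_snd.star
      refine hcont.continuousAt.eventually (lt_mem_nhds ?_)
      show 0 < rtr (Z * SU.toMat (1 : SU n) * star Z)
      rw [SU.toMat_one, mul_one, rtr_comm]
      exact rtr_pos (by rintro rfl; simp at hZ)
  filter_upwards [h] with X hX Z hZ
  have hr := norm_pos_iff.2 hZ
  have h1 := hX ((‖Z‖⁻¹ : ℂ) • Z) (by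
    simp [norm_smul, hr.ne'])
  have h2 : Z = (‖Z‖ : ℂ) • ((‖Z‖⁻¹ : ℂ) • Z) := by
    rw [smul_smul, mul_inv_cancel₀ (by exact_mod_cast hr.ne'), one_smul]
  set W := (‖Z‖⁻¹ : ℂ) • Z
  have h3 : Z * SU.toMat X * star Z = ((‖Z‖ ^ 2 : ℝ) : ℂ) • (W * SU.toMat X * star W) := by
    conv_lhs => rw [h2]
    rw [star_smul, smul_mul_assoc, smul_mul_assoc, mul_smul_comm, smul_smul]
    congr 1
    simp [pow_two]
  rw [h3, rtr, Matrix.trace_smul, smul_eq_mul, Complex.re_ofReal_mul]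
  exact mul_pos (by positivity) h1

end near

theorem toMat_injective : Function.Injective (SU.toMat (n := n)) := fun _ _ => SU.ext'

instance SU.t2 : T2Space (SU n) := inferInstance

/-! ### The Kronecker homomorphism -/

variable {k l : ℕ} (φ : (SU k × SU l) →* SU (k * l))

theorem kron_apply (A : Matrix (Fin k) (Fin k) ℂ) (B : Matrix (Fin l) (Fin l) ℂ)
    (a a' : Fin k) (b b' : Fin l) :
    kron A B (finProdFinEquiv (a, b)) (finProdFinEquiv (a', b')) = A a a' * B b b' := by
  simp [kron]


theorem phi_cont
    (hφ : ∀ (A : SU k) (B : SU l), SU.toMat (φ (A, B)) = kron (SU.toMat A) (SU.toMat B)) :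
    Continuous φ := by
  refine continuous_SU (continuous_matrix fun i j => ?_)
  obtain ⟨⟨a, b⟩, rfl⟩ := finProdFinEquiv.surjective i
  obtain ⟨⟨a', b'⟩, rfl⟩ := finProdFinEquiv.surjective j
  have : ∀ x : SU k × SU l, SU.toMat (φ x) (finProdFinEquiv (a, b)) (finProdFinEquiv (a', b')) =
      SU.toMat x.1 a a' * SU.toMat x.2 b b' := fun x => by rw [← kron_apply, ← hφ]
  simp only [this]
  exact ((SU.continuous_toMat.comp continuous_fst).matrix_elem _ _).mul
    ((SU.continuous_toMat.comp continuous_snd).matrix_elem _ _)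

/-- If `A ⊗ B = 1`, then `A` and `B` are inverse scalars; the scalar is both a `k`-th and an `l`-th root
of unity, hence `1`. -/
theorem phi_inj
    (hφ : ∀ (A : SU k) (B : SU l), SU.toMat (φ (A, B)) = kron (SU.toMat A) (SU.toMat B))
    (hk : 2 ≤ k) (hl : 2 ≤ l) (hgcd : Nat.gcd k l = 1) : Function.Injective φ := by
  rw [injective_iff_map_eq_one]
  rintro ⟨A, B⟩ h
  have hm : ∀ a a' b b', SU.toMat A a a' * SU.toMat B b b' =
      if a = a' ∧ b = b' then 1 else 0 := fun a a' b b' => by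
    rw [← kron_apply, ← hφ, h, SU.toMat_one, Matrix.one_apply]
    simp
  let a0 : Fin k := ⟨0, by omega⟩
  let b0 : Fin l := ⟨0, by omega⟩
  set α := SU.toMat A a0 a0 with hα
  set β := SU.toMat B b0 b0 with hβ
  have hαβ : α * β = 1 := by simpa using hm a0 a0 b0 b0
  have hα0 : α ≠ 0 := left_ne_zero_of_mul_eq_one hαβ
  have hβ0 : β ≠ 0 := right_ne_zero_of_mul_eq_one hαβ
  have hA : SU.toMat A = α • 1 := by
    ext a a'
    refine mul_right_cancel₀ hβ0 ?_
    rw [hm a a' b0 b0]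
    simp only [Matrix.smul_apply, Matrix.one_apply, smul_eq_mul]
    by_cases h : a = a' <;> simp [h, hαβ]
  have hB : SU.toMat B = β • 1 := by
    ext b b'
    refine mul_left_cancel₀ hα0 ?_
    rw [hm a0 a0 b b']
    simp only [Matrix.smul_apply, Matrix.one_apply, smul_eq_mul]
    by_cases h : b = b' <;> simp [h, hαβ]
  have h1 : α ^ k = 1 := by
    have := SU.det A
    rwa [hA, Matrix.det_smul, Matrix.det_one, mul_one, Fintype.card_fin] at this
  have h2 : β ^ l = 1 := by
    have := SU.det B
    rwa [hB, Matrix.det_smul, Matrix.det_one, mul_one, Fintype.card_fin] at this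
  have h3 : α ^ l = 1 := by
    have : (α * β) ^ l = 1 := by rw [hαβ, one_pow]
    rwa [mul_pow, h2, mul_one] at this
  have h4 : α = 1 := by
    have := Nat.dvd_gcd (orderOf_dvd_of_pow_eq_one h1) (orderOf_dvd_of_pow_eq_one h3)
    rw [hgcd, Nat.dvd_one] at this
    exact orderOf_eq_one_iff.1 this
  have h5 : β = 1 := by rwa [h4, one_mul] at hαβ
  refine Prod.ext (SU.ext' ?_) (SU.ext' ?_)
  · show SU.toMat A = _
    rw [hA, h4, one_smul]; rfl
  · show SU.toMat B = _
    rw [hB, h5, one_smul]; rfl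

end

section

/-! ### Local transport on coset spaces -/

section transport

variable {G : Type*} [Group G] [TopologicalSpace G] [IsTopologicalGroup G] [CompactSpace G]

/-- Homotopy lifting for the coset space `G ⧸ H` of a compact group.  The function `f` plays the
role of the real part of the trace: it is a class function with a strict maximum at `1`, and the
concavity condition `hO` makes the maximizer of `h ↦ f (g⁻¹ * h)` on `H` unique for `g` close to
`H`.  That maximizer is an equivariant local retraction `s` onto `H`, and
`(g, g') ↦ g' * (s (g⁻¹ * g'))⁻¹ * g⁻¹` moves `gH` to `g'H`, depending only on these cosets. -/
theorem coset_lift (H : Subgroup G) (hH : IsClosed (H : Set G)) (f : G → ℝ) (hf : Continuous f)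
    (hcl : ∀ a b, f (a * b) = f (b * a)) (hmax : ∀ x, x ≠ 1 → f x < f 1)
    (hO : ∃ O ∈ 𝓝 (1 : G), ∀ x ∈ O, ∀ y ∈ O, x⁻¹ * y ∈ H → x ≠ y →
      ∃ v ∈ H, f x + f y < 2 * f (x * v))
    {Y : Type*} [TopologicalSpace Y] [CompactSpace Y] (K : Y × I → G ⧸ H) (hK : Continuous K) :
    ∃ g : Y × I → G, Continuous g ∧ (∀ y, g (y, 0) = 1) ∧
      (∀ y t x, K (y, 0) = QuotientGroup.mk x → K (y, t) = QuotientGroup.mk (g (y, t) * x)) ∧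
      ∀ y, (∀ t, K (y, t) = K (y, 0)) → ∀ t, g (y, t) = 1 := by
  obtain ⟨O, hO1, hO⟩ := hO
  obtain ⟨c, hc1, hc⟩ : ∃ c < f 1, ∀ x, c < f x → x ∈ O := by
    have hcO : IsCompact (interior O)ᶜ := isOpen_interior.isClosed_compl.isCompact
    by_cases hne : ((interior O)ᶜ).Nonempty
    · obtain ⟨p, hp, hm⟩ := hcO.exists_isMaxOn hne hf.continuousOn
      refine ⟨f p, hmax p ?_, fun x hx => ?_⟩
      · rintro rfl
        exact hp (mem_interior_iff_mem_nhds.2 hO1)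
      · by_contra hxO
        exact absurd (hm (show x ∈ (interior O)ᶜ from fun h => hxO (interior_subset h)))
          (not_le.2 hx)
    · refine ⟨f 1 - 1, by linarith, fun x _ => ?_⟩
      by_contra hxO
      exact hne ⟨x, fun h => hxO (interior_subset h)⟩
  have hHc : IsCompact (H : Set G) := hH.isCompact
  have hex : ∀ g : G, ∃ h ∈ H, ∀ h' ∈ H, f (g⁻¹ * h') ≤ f (g⁻¹ * h) := fun g => by
    obtain ⟨h, hh, hm⟩ := hHc.exists_isMaxOn ⟨1, H.one_mem⟩
      (f := fun h => f (g⁻¹ * h)) (by fun_prop)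
    exact ⟨h, hh, fun h' hh' => hm hh'⟩
  choose s hsH hs using hex
  let U : Set G := {g | ∃ h ∈ H, c < f (g⁻¹ * h)}
  have huniq : ∀ g ∈ U, ∀ h ∈ H, (∀ h' ∈ H, f (g⁻¹ * h') ≤ f (g⁻¹ * h)) → h = s g := by
    rintro g ⟨h0, hh0, hg⟩ h hh hm
    by_contra hne
    have e : f (g⁻¹ * h) = f (g⁻¹ * s g) := le_antisymm (hs g h hh) (hm _ (hsH g))
    obtain ⟨v, hv, hlt⟩ := hO (g⁻¹ * h) (hc _ (hg.trans_le (hm _ hh0))) (g⁻¹ * s g)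
      (hc _ (hg.trans_le (hs g _ hh0)))
      (by
        have : (g⁻¹ * h)⁻¹ * (g⁻¹ * s g) = h⁻¹ * s g := by group
        rw [this]; exact H.mul_mem (H.inv_mem hh) (hsH g))
      (fun h => hne (mul_left_cancel h))
    have := hm (h * v) (H.mul_mem hh hv)
    rw [← mul_assoc] at this
    linarith
  have hUo : IsOpen U := by
    have : U = ⋃ h ∈ H, {g | c < f (g⁻¹ * h)} := by ext g; simp [U]
    rw [this]
    exact isOpen_biUnion fun h _ => isOpen_lt continuous_const (by fun_prop)
  have hUab : ∀ g, ∀ a ∈ H, ∀ b ∈ H, g ∈ U → a * g * b ∈ U := by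
    rintro g a ha b hb ⟨h, hh, hg⟩
    refine ⟨a * h * b, H.mul_mem (H.mul_mem ha hh) hb, ?_⟩
    have : (a * g * b)⁻¹ * (a * h * b) = b⁻¹ * (g⁻¹ * h * b) := by group
    rw [this, hcl, mul_assoc, mul_inv_cancel, mul_one]
    exact hg
  have hsab : ∀ g ∈ U, ∀ a ∈ H, ∀ b ∈ H, s (a * g * b) = a * s g * b := by
    intro g hg a ha b hb
    refine (huniq _ (hUab g a ha b hb hg) _ (H.mul_mem (H.mul_mem ha (hsH g)) hb)
      fun h' hh' => ?_).symm
    have e1 : (a * g * b)⁻¹ * h' = b⁻¹ * (g⁻¹ * a⁻¹ * h') := by group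
    have e2 : (a * g * b)⁻¹ * (a * s g * b) = b⁻¹ * (g⁻¹ * s g * b) := by group
    rw [e1, e2, hcl, hcl b⁻¹]
    have := hs g (a⁻¹ * h' * b⁻¹) (H.mul_mem (H.mul_mem (H.inv_mem ha) hh') (H.inv_mem hb))
    simpa only [mul_assoc, mul_inv_cancel, mul_one] using this
  have h1U : (1 : G) ∈ U := ⟨1, H.one_mem, by simpa using hc1⟩
  have hs1 : s 1 = 1 := by
    refine (huniq 1 h1U 1 H.one_mem fun h' _ => ?_).symm
    rcases eq_or_ne h' 1 with rfl | hne
    · exact le_rfl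
    · simpa using (hmax h' hne).le
  have hsc : ∀ g ∈ U, ContinuousAt s g := by
    intro g hg
    rw [ContinuousAt, Filter.tendsto_def]
    intro W hW
    have hcW : IsCompact ((H : Set G) ∩ (interior W)ᶜ) :=
      hHc.inter_right isOpen_interior.isClosed_compl
    have := hcW.eventually_forall_of_forall_eventually (x₀ := g)
      (P := fun g' h => f (g'⁻¹ * h) < f (g'⁻¹ * s g)) fun h hh => by
        have h1 : Continuous fun z : G × G => f (z.1⁻¹ * z.2) := by fun_prop
        have h2 : Continuous fun z : G × G => f (z.1⁻¹ * s g) := by fun_prop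
        refine (isOpen_lt h1 h2).mem_nhds ?_
        refine lt_of_le_of_ne (hs g h hh.1) fun e => ?_
        have : h = s g := huniq g hg h hh.1 fun h' hh' => (hs g h' hh').trans e.ge
        exact hh.2 (this ▸ mem_interior_iff_mem_nhds.2 hW)
    filter_upwards [this] with g' hg'
    by_contra hn
    have := hg' (s g') ⟨hsH g', fun h => hn (show s g' ∈ W from interior_subset h)⟩
    exact absurd (hs g' (s g) (hsH g)) (not_le.2 this)
  -- The transport, first on representatives and then on cosets.
  let T' : G × G → G := fun p => p.2 * (s (p.1⁻¹ * p.2))⁻¹ * p.1⁻¹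
  have hrep : ∀ g : G, ∃ a ∈ H, (QuotientGroup.mk g : G ⧸ H).out = g * a := fun g => by
    obtain ⟨a, ha⟩ := QuotientGroup.mk_out_eq_mul H g
    exact ⟨a, a.2, ha⟩
  let N : Set ((G ⧸ H) × (G ⧸ H)) := {p | p.1.out⁻¹ * p.2.out ∈ U}
  let T : (G ⧸ H) × (G ⧸ H) → G := fun p => T' (p.1.out, p.2.out)
  have hNmk : ∀ g g' : G, ((QuotientGroup.mk g : G ⧸ H), (QuotientGroup.mk g' : G ⧸ H)) ∈ N ↔
      g⁻¹ * g' ∈ U := by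
    intro g g'
    obtain ⟨a, ha, ea⟩ := hrep g
    obtain ⟨b, hb, eb⟩ := hrep g'
    show (QuotientGroup.mk g : G ⧸ H).out⁻¹ * (QuotientGroup.mk g' : G ⧸ H).out ∈ U ↔ _
    rw [ea, eb]
    constructor
    · intro h
      have := hUab _ a ha b⁻¹ (H.inv_mem hb) h
      have e : a * ((g * a)⁻¹ * (g' * b)) * b⁻¹ = g⁻¹ * g' := by group
      rwa [e] at this
    · intro h
      have := hUab _ a⁻¹ (H.inv_mem ha) b hb h
      have e : a⁻¹ * (g⁻¹ * g') * b = (g * a)⁻¹ * (g' * b) := by group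
      rwa [e] at this
  have hTmk : ∀ g g' : G, g⁻¹ * g' ∈ U →
      T ((QuotientGroup.mk g : G ⧸ H), (QuotientGroup.mk g' : G ⧸ H)) = T' (g, g') := by
    intro g g' h
    obtain ⟨a, ha, ea⟩ := hrep g
    obtain ⟨b, hb, eb⟩ := hrep g'
    show T' ((QuotientGroup.mk g : G ⧸ H).out, (QuotientGroup.mk g' : G ⧸ H).out) = _
    rw [ea, eb]
    show g' * b * (s ((g * a)⁻¹ * (g' * b)))⁻¹ * (g * a)⁻¹ = g' * (s (g⁻¹ * g'))⁻¹ * g⁻¹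
    have e : (g * a)⁻¹ * (g' * b) = a⁻¹ * (g⁻¹ * g') * b := by group
    rw [e, hsab _ h _ (H.inv_mem ha) _ hb]
    group
  have hq : IsOpenQuotientMap (Prod.map (QuotientGroup.mk : G → G ⧸ H)
      (QuotientGroup.mk : G → G ⧸ H)) :=
    QuotientGroup.isOpenQuotientMap_mk.prodMap QuotientGroup.isOpenQuotientMap_mk
  have hNo : IsOpen N := by
    rw [← hq.isQuotientMap.isOpen_preimage]
    have : Prod.map (QuotientGroup.mk : G → G ⧸ H) (QuotientGroup.mk : G → G ⧸ H) ⁻¹' N =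
        {p : G × G | p.1⁻¹ * p.2 ∈ U} := by
      ext ⟨g, g'⟩
      exact hNmk g g'
    rw [this]
    exact hUo.preimage (f := fun p : G × G => p.1⁻¹ * p.2) (by fun_prop)
  have hTc : ContinuousOn T N := by
    rintro ⟨q, q'⟩ hqN
    refine ContinuousAt.continuousWithinAt ?_
    induction q using QuotientGroup.induction_on with | H g => ?_
    induction q' using QuotientGroup.induction_on with | H g' => ?_
    have hgU := (hNmk g g').1 hqN
    have : ContinuousAt (T ∘ Prod.map (QuotientGroup.mk : G → G ⧸ H)
        (QuotientGroup.mk : G → G ⧸ H)) (g, g') := by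
      have hev : ∀ᶠ p in 𝓝 ((g, g') : G × G), p.1⁻¹ * p.2 ∈ U :=
        (hUo.preimage (f := fun p : G × G => p.1⁻¹ * p.2) (by fun_prop)).mem_nhds hgU
      refine ContinuousAt.congr (f := T') ?_ (hev.mono fun p hp => (hTmk p.1 p.2 hp).symm)
      have h1 : ContinuousAt (fun p : G × G => s (p.1⁻¹ * p.2)) (g, g') :=
        ContinuousAt.comp (f := fun p : G × G => p.1⁻¹ * p.2) (g := s) (hsc _ hgU) (by fun_prop)
      exact (continuousAt_snd.mul h1.inv).mul continuousAt_fst.inv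
    exact hq.continuousAt_comp_iff.1 this
  suffices key : ∃ g : Y × I → G, Continuous g ∧ (∀ y, g (y, 0) = 1) ∧
      (∀ y t, g (y, t) • K (y, 0) = K (y, t)) ∧
      ∀ y, (∀ t, K (y, t) = K (y, 0)) → ∀ t, g (y, t) = 1 by
    obtain ⟨g, g1, g2, g3, g4⟩ := key
    refine ⟨g, g1, g2, fun y t x hx => ?_, g4⟩
    rw [← g3, hx]
    rfl
  refine lift_htpy (G := G) (B := G ⧸ H) (fun g b => g • b)
    (fun b => one_smul _ b) (fun g h b => mul_smul g h b) Set.univ N hNo T hTc ?_ ?_ ?_ K hK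
    fun _ => trivial
  · intro q _
    induction q using QuotientGroup.induction_on with | H g => ?_
    rw [hNmk, inv_mul_cancel]; exact h1U
  · intro q _
    induction q using QuotientGroup.induction_on with | H g => ?_
    rw [hTmk _ _ (by rw [inv_mul_cancel]; exact h1U)]
    simp [T', hs1]
  · intro q _ q' _ h
    induction q using QuotientGroup.induction_on with | H g => ?_
    induction q' using QuotientGroup.induction_on with | H g' => ?_
    rw [hTmk _ _ ((hNmk _ _).1 h)]
    show (QuotientGroup.mk (g' * (s (g⁻¹ * g'))⁻¹ * g⁻¹ * g) : G ⧸ H) = _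
    rw [inv_mul_cancel_right]
    exact QuotientGroup.mk_mul_of_mem _ (H.inv_mem (hsH _))

end transport

section kr

variable {k l : ℕ} (φ : (SU k × SU l) →* SU (k * l))

theorem phi_emb (hφ : ∀ (A : SU k) (B : SU l),
      SU.toMat (φ (A, B)) = kron (SU.toMat A) (SU.toMat B))
    (hk : 2 ≤ k) (hl : 2 ≤ l) (hgcd : Nat.gcd k l = 1) : Topology.IsClosedEmbedding φ :=
  (phi_cont φ hφ).isClosedEmbedding (phi_inj φ hφ hk hl hgcd)

/-- The concavity condition of `coset_lift` for the real part of the trace: the point `x * v` lies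
halfway from `x` to `y`, by a square root taken in `SU(k) × SU(l)`. -/
theorem phi_concave (hφ : ∀ (A : SU k) (B : SU l),
      SU.toMat (φ (A, B)) = kron (SU.toMat A) (SU.toMat B))
    (hk : 2 ≤ k) (hl : 2 ≤ l) (hgcd : Nat.gcd k l = 1) :
    ∃ O ∈ 𝓝 (1 : SU (k * l)), ∀ x ∈ O, ∀ y ∈ O, x⁻¹ * y ∈ φ.range → x ≠ y →
      ∃ v ∈ φ.range, rtr (SU.toMat x) + rtr (SU.toMat y) < 2 * rtr (SU.toMat (x * v)) := by
  have hemb := phi_emb φ hφ hk hl hgcd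
  obtain ⟨A, hA, hAp⟩ := (rtr_pos_near (n := k * l)).exists_mem
  obtain ⟨O1, hO1, V, hV, hOV⟩ : ∃ O1 ∈ 𝓝 (1 : SU (k * l)), ∃ V ∈ 𝓝 (1 : SU (k * l)),
      ∀ x ∈ O1, ∀ v ∈ V, x * v ∈ A := by
    have : (fun p : SU (k * l) × SU (k * l) => p.1 * p.2) ⁻¹' A ∈ 𝓝 ((1, 1) : _ × _) := by
      refine ContinuousAt.preimage_mem_nhds (by fun_prop) ?_
      simpa using hA
    obtain ⟨O1, hO1, V, hV, h⟩ := mem_nhds_prod_iff.1 this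
    exact ⟨O1, hO1, V, hV, fun x hx v hv => h (show (x, v) ∈ O1 ×ˢ V from ⟨hx, hv⟩)⟩
  have hsq : ∀ᶠ w in 𝓝 (1 : SU k × SU l), ∃ v, φ v ∈ V ∧ v * v = w := by
    have : φ ⁻¹' V ∈ 𝓝 (1 : SU k × SU l) :=
      hemb.continuous.continuousAt.preimage_mem_nhds (by simpa using hV)
    rw [show (1 : SU k × SU l) = (1, 1) from rfl] at this ⊢
    obtain ⟨V1, hV1, V2, hV2, h⟩ := mem_nhds_prod_iff.1 this
    filter_upwards [prod_mem_nhds (su_sqrt hV1) (su_sqrt hV2)]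
    rintro ⟨w1, w2⟩ ⟨⟨v1, hv1, rfl⟩, ⟨v2, hv2, rfl⟩⟩
    exact ⟨(v1, v2), h ⟨hv1, hv2⟩, rfl⟩
  rw [hemb.isInducing.nhds_eq_comap, map_one, Filter.eventually_comap] at hsq
  have hO2 : ∀ᶠ p in 𝓝 ((1, 1) : SU (k * l) × SU (k * l)), ∀ b, φ b = p.1⁻¹ * p.2 →
      ∃ v, φ v ∈ V ∧ v * v = b := by
    have hc : Filter.Tendsto (fun p : SU (k * l) × SU (k * l) => p.1⁻¹ * p.2) (𝓝 (1, 1)) (𝓝 1) := by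
      have : Continuous fun p : SU (k * l) × SU (k * l) => p.1⁻¹ * p.2 := by fun_prop
      simpa using this.tendsto (1, 1)
    exact hc.eventually hsq
  obtain ⟨O2, hO2, O3, hO3, hO⟩ := mem_nhds_prod_iff.1 hO2
  refine ⟨O1 ∩ (O2 ∩ O3), Filter.inter_mem hO1 (Filter.inter_mem hO2 hO3), ?_⟩
  rintro x ⟨hx1, hx2, -⟩ y ⟨-, -, hy3⟩ ⟨b, hb⟩ hne
  obtain ⟨v, hvV, rfl⟩ := hO (show (x, y) ∈ O2 ×ˢ O3 from ⟨hx2, hy3⟩) b hb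
  refine ⟨φ v, ⟨v, rfl⟩, ?_⟩
  set w := φ v with hw
  have hy : y = x * w * w := by
    rw [map_mul] at hb
    rw [mul_assoc, hb, mul_inv_cancel_left]
  have hw1 : (1 : Matrix (Fin (k * l)) (Fin (k * l)) ℂ) - SU.toMat w ≠ 0 := by
    intro h
    have : w = 1 := SU.ext' (by rw [SU.toMat_one]; exact (sub_eq_zero.1 h).symm)
    rw [this, mul_one, mul_one] at hy
    exact hne hy.symm
  -- With `X = x * w`, the defect of concavity is `Re tr ((1 - w) X (1 - w)*)`.
  have hp := hAp _ (hOV x hx1 w hvV) _ hw1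
  have hx : x = x * w * w⁻¹ := by rw [mul_inv_cancel_right]
  have e1 : rtr (SU.toMat x) = rtr (SU.toMat (x * w) * star (SU.toMat w)) := by
    conv_lhs => rw [hx, SU.toMat_mul, SU.toMat_inv]
  have e2 : rtr (SU.toMat y) = rtr (SU.toMat (x * w) * SU.toMat w) := by rw [hy, SU.toMat_mul]
  have e3 : SU.toMat (x * w) * (star (1 - SU.toMat w) * (1 - SU.toMat w)) =
      SU.toMat (x * w) + SU.toMat (x * w) -
        (SU.toMat (x * w) * SU.toMat w + SU.toMat (x * w) * star (SU.toMat w)) := by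
    have : star (1 - SU.toMat w) * (1 - SU.toMat w) =
        1 + 1 - (SU.toMat w + star (SU.toMat w)) := by
      rw [star_sub, star_one, sub_mul, mul_sub, mul_sub, SU.star_mul]
      simp only [one_mul, mul_one]
      abel
    rw [this, mul_sub, mul_add, mul_add, mul_one]
  rw [mul_assoc, rtr_comm, mul_assoc, e3, rtr_sub, rtr_add, rtr_add] at hp
  rw [e1, e2]
  linarith

/-- The homotopy lifting property of `SU(kl) → SU(kl) ⧸ φ.range`. -/
theorem gr_lift (hφ : ∀ (A : SU k) (B : SU l),
      SU.toMat (φ (A, B)) = kron (SU.toMat A) (SU.toMat B))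
    (hk : 2 ≤ k) (hl : 2 ≤ l) (hgcd : Nat.gcd k l = 1)
    {Y : Type*} [TopologicalSpace Y] [CompactSpace Y] (K : Y × I → SU (k * l) ⧸ φ.range)
    (hK : Continuous K) :
    ∃ g : Y × I → SU (k * l), Continuous g ∧ (∀ y, g (y, 0) = 1) ∧
      (∀ y t x, K (y, 0) = QuotientGroup.mk x → K (y, t) = QuotientGroup.mk (g (y, t) * x)) ∧
      ∀ y, (∀ t, K (y, t) = K (y, 0)) → ∀ t, g (y, t) = 1 := by
  refine coset_lift φ.range ?_ (fun x => rtr (SU.toMat x))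
    (continuous_rtr.comp SU.continuous_toMat) (fun a b => ?_) rtr_lt
    (phi_concave φ hφ hk hl hgcd) K hK
  · rw [MonoidHom.coe_range]
    exact (phi_emb φ hφ hk hl hgcd).isClosed_range
  · simp only [SU.toMat_mul]
    exact rtr_comm _ _

end kr

end

section

/-! ### The exact sequence of `K → G → G ⧸ φ.range` -/

section fib

variable {G K : Type} [Group G] [TopologicalSpace G] [IsTopologicalGroup G]
  [Group K] [TopologicalSpace K] [IsTopologicalGroup K]

/-- The homotopy lifting property of `G → G ⧸ φ.range`, for homotopies which start at the base
point, in a form which also controls the lift along stationary paths. -/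
def HLP (φ : K →* G) : Prop :=
  ∀ (Y : Type) [TopologicalSpace Y] [CompactSpace Y] (f : Y × I → G ⧸ φ.range), Continuous f →
    (∀ y, f (y, 0) = QuotientGroup.mk 1) →
    ∃ g : Y × I → G, Continuous g ∧ (∀ y, g (y, 0) = 1) ∧
      (∀ p, f p = QuotientGroup.mk (g p)) ∧
      ∀ y, (∀ t, f (y, t) = QuotientGroup.mk 1) → ∀ t, g (y, t) = 1

/-- Maps from the cube to `G` which are `1` on all faces, except that the face where the last
coordinate is `1` is only required to be sent to the subgroup `φ.range`.  They represent the
relative homotopy group `π_{m+1}(G, φ.range)`. -/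
structure Lf (φ : K →* G) (m : ℕ) (F : (Fin (m + 1) → I) → G) : Prop where
  cont : Continuous F
  zero : ∀ x, x (Fin.last m) = 0 → F x = 1
  side : ∀ x, (∃ i : Fin m, x i.castSucc = 0 ∨ x i.castSucc = 1) → F x = 1
  one : ∀ x, x (Fin.last m) = 1 → F x ∈ φ.range

variable {φ : K →* G} {m : ℕ}

theorem Lf.bd {F : (Fin (m + 1) → I) → G} (h : Lf φ m F) {x : Fin (m + 1) → I}
    (hx : x ∈ Bd (m + 1)) : F x ∈ φ.range := by
  obtain ⟨i, hi⟩ := hx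
  revert hi
  refine Fin.lastCases (fun hi => ?_) (fun j hi => ?_) i
  · rcases hi with h0 | h1
    · rw [h.zero x h0]; exact φ.range.one_mem
    · exact h.one x h1
  · rw [h.side x ⟨j, hi⟩]; exact φ.range.one_mem

theorem Lf.mk_bd {F : (Fin (m + 1) → I) → G} (h : Lf φ m F) {x : Fin (m + 1) → I}
    (hx : x ∈ Bd (m + 1)) : (QuotientGroup.mk (F x) : G ⧸ φ.range) = QuotientGroup.mk 1 := by
  rw [QuotientGroup.eq, mul_one]
  exact φ.range.inv_mem (h.bd hx)

variable (φ m) in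
/-- The group of all maps satisfying `Lf`, under pointwise multiplication. -/
def LfG : Subgroup ((Fin (m + 1) → I) → G) where
  carrier := {F | Lf φ m F}
  mul_mem' {F F'} h h' := ⟨h.cont.mul h'.cont,
    fun x hx => by simp [h.zero x hx, h'.zero x hx], fun x hx => by simp [h.side x hx, h'.side x hx],
    fun x hx => φ.range.mul_mem (h.one x hx) (h'.one x hx)⟩
  one_mem' := ⟨continuous_const, fun _ _ => rfl, fun _ _ => rfl, fun _ _ => φ.range.one_mem⟩
  inv_mem' {F} h := ⟨h.cont.inv, fun x hx => by simp [h.zero x hx],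
    fun x hx => by simp [h.side x hx], fun x hx => φ.range.inv_mem (h.one x hx)⟩

theorem continuous_qmk : Continuous (QuotientGroup.mk : G → G ⧸ φ.range) :=
  QuotientGroup.isOpenQuotientMap_mk.continuous

/-- The generalized loop in `G ⧸ φ.range` underlying an element of `LfG`. -/
def loop (F : LfG φ m) : GenLoop (Fin (m + 1)) (G ⧸ φ.range) (QuotientGroup.mk 1) :=
  ⟨⟨fun x => QuotientGroup.mk (F.1 x), continuous_qmk.comp F.2.cont⟩, fun x hx => F.2.mk_bd hx⟩

theorem loop_htpy {N : Type*} {X : Type*} [TopologicalSpace X] {x : X} {p q : GenLoop N X x} :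
    (⟦p⟧ : HomotopyGroup N X x) = ⟦q⟧ ↔ Htpy (Cube.boundary N) p q := by
  refine Quotient.eq.trans ?_
  exact (htpy_iff p.1 q.1).symm

/-- Every generalized loop in the coset space lifts. -/
theorem exists_lift (HL : HLP φ)
    (f : GenLoop (Fin (m + 1)) (G ⧸ φ.range) (QuotientGroup.mk 1)) :
    ∃ F : LfG φ m, loop F = f := by
  obtain ⟨g, g1, g2, g3, g4⟩ := HL (Fin m → I) (fun p => f (sn m p))
    (f.1.continuous.comp (continuous_sn m)) fun y => f.2 _ ((sn_bd _ _).2 (Or.inr (Or.inl rfl)))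
  have h1 : ∀ x : Fin (m + 1) → I, x ∈ Bd (m + 1) → g (spl m x) ∈ φ.range := by
    intro x hx
    have h2 := g3 (spl m x)
    simp only [sn_spl] at h2
    have h3 : f x = QuotientGroup.mk 1 := f.2 x hx
    rw [h3, QuotientGroup.eq] at h2
    simpa using h2
  refine ⟨⟨fun x => g (spl m x), g1.comp (continuous_spl m), fun x hx => ?_, fun x hx => ?_,
    fun x hx => h1 x ⟨Fin.last m, Or.inr hx⟩⟩, ?_⟩
  · simp only [spl, hx]; exact g2 _
  · exact g4 (spl m x).1 (fun t => f.2 _ ((sn_bd _ _).2 (Or.inl hx))) _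
  · refine DFunLike.ext _ _ fun x => ?_
    have h2 := g3 (spl m x)
    simp only [sn_spl] at h2
    exact h2.symm

/-- Maps with values in the image of an embedding come from maps to its source. -/
theorem range_lift (hφ : Topology.IsEmbedding φ) {Z : Type*} [TopologicalSpace Z] {g : Z → G}
    (hg : Continuous g) (hr : ∀ z, g z ∈ φ.range) :
    ∃ h : Z → K, Continuous h ∧ (∀ z, φ (h z) = g z) ∧ ∀ z, g z = 1 → h z = 1 := by
  choose h hh using hr
  refine ⟨h, hφ.isInducing.continuous_iff.2 ?_, hh, fun z hz => hφ.injective ?_⟩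
  · exact hg.congr fun z => (hh z).symm
  · rw [hh, hz, map_one]

/-- The boundary map: the restriction of `F` to the free face. -/
def IsBdry (φ : K →* G) (F : (Fin (m + 1) → I) → G) (h : (Fin m → I) → K) : Prop :=
  Rel (Bd m) h ∧ ∀ y, φ (h y) = F (sn m (y, 1))

theorem exists_bdry (hφ : Topology.IsEmbedding φ) {F : (Fin (m + 1) → I) → G} (hF : Lf φ m F) :
    ∃ h, IsBdry φ F h := by
  obtain ⟨h, h1, h2, h3⟩ := range_lift hφ (g := fun y => F (sn m (y, 1)))
    (hF.cont.comp ((continuous_sn m).comp (by fun_prop)))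
    fun y => hF.one _ (by simp [sn])
  refine ⟨h, ⟨h1, fun y hy => h3 y (hF.side _ ?_)⟩, h2⟩
  obtain ⟨i, hi⟩ := hy
  exact ⟨i, by simpa [sn] using hi⟩

/-- Null-homotopies of a map to `K` after applying `φ` are the same as lifts with the given
boundary. -/
theorem bdry_null {F : (Fin (m + 1) → I) → G} (hF : Lf φ m F) {h : (Fin m → I) → K}
    (hh : IsBdry φ F h) : Null (Bd m) fun y => φ (h y) := by
  refine ⟨fun p => F (sn m (p.2, σ p.1)), hF.cont.comp ((continuous_sn m).comp (by fun_prop)),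
    fun y => ?_, fun y => hF.zero _ ?_, fun t y hy => ?_⟩
  · simp [hh.2]
  · simp [sn]
  · obtain ⟨i, hi⟩ := hy
    show F (sn m (y, σ t)) = φ (h y)
    rw [hh.2, hF.side _ ⟨i, by simpa [sn] using hi⟩, hF.side _ ⟨i, by simpa [sn] using hi⟩]

theorem null_bdry {h : (Fin m → I) → K} (hr : Rel (Bd m) h) (hn : Null (Bd m) fun y => φ (h y)) :
    ∃ F, Lf φ m F ∧ IsBdry φ F h := by
  obtain ⟨N, hN, h0, h1, h2⟩ := hn
  refine ⟨fun x => N (σ (spl m x).2, (spl m x).1), ⟨?_, fun x hx => ?_, fun x hx => ?_,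
    fun x hx => ?_⟩, hr, fun y => ?_⟩
  · have := continuous_spl m
    fun_prop
  · simp [spl, hx, h1]
  · have : (spl m x).1 ∈ Bd m := hx
    rw [h2 _ _ this]
    show φ (h _) = 1
    rw [hr.bd _ this, map_one]
  · simp [spl, hx, h0]
  · simp [spl_sn, h0]

/-- If the boundary of `F` is null-homotopic, then `F` can be changed, without changing the loop
in the coset space, so as to become `1` on the whole boundary of the cube. -/
theorem adjust (hc : Continuous φ) {F : (Fin (m + 1) → I) → G} (hF : Lf φ m F)
    {h : (Fin m → I) → K} (hh : IsBdry φ F h) (hn : Null (Bd m) h) :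
    ∃ F' : (Fin (m + 1) → I) → G, Rel (Bd (m + 1)) F' ∧
      ∀ x, (QuotientGroup.mk (F' x) : G ⧸ φ.range) = QuotientGroup.mk (F x) := by
  obtain ⟨N, hN, h0, h1, h2⟩ := hn
  refine ⟨fun x => F x * (φ (N (σ (spl m x).2, (spl m x).1)))⁻¹, ⟨?_, fun x hx => ?_⟩,
    fun x => ?_⟩
  · have := continuous_spl m
    have := hF.cont
    fun_prop
  · have hx' := hx
    rw [← spl_bd] at hx
    rcases hx with hx | hx | hx
    · rw [h2 _ _ hx, hh.1.bd _ hx, hF.side x hx]; simp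
    · rw [hF.zero x hx, hx]; simp [h1]
    · have e : sn m ((spl m x).1, 1) = x := by rw [← hx]; exact sn_spl m x
      rw [hx]; simp [h0, hh.2, e]
  · rw [QuotientGroup.eq]
    simp only [mul_inv_rev, inv_inv, inv_mul_cancel_right]
    exact ⟨_, rfl⟩

/-- The long exact sequence, in degrees where `K` has trivial homotopy one degree lower and `φ` is
surjective on homotopy. -/
theorem gr_trivial (HL : HLP φ) (hφ : Topology.IsEmbedding φ)
    (hK : ∀ h : (Fin m → I) → K, Rel (Bd m) h → Null (Bd m) h)
    (hG : ∀ F : (Fin (m + 1) → I) → G, Rel (Bd (m + 1)) F →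
      ∃ u : (Fin (m + 1) → I) → K, Htpy (Bd (m + 1)) F fun x => φ (u x)) :
    Subsingleton (HomotopyGroup (Fin (m + 1)) (G ⧸ φ.range) (QuotientGroup.mk 1)) := by
  suffices h : ∀ f : GenLoop (Fin (m + 1)) (G ⧸ φ.range) (QuotientGroup.mk 1),
      (⟦f⟧ : HomotopyGroup (Fin (m + 1)) (G ⧸ φ.range) (QuotientGroup.mk 1)) =
        ⟦GenLoop.const⟧ by
    refine ⟨fun a b => ?_⟩
    induction a using Quotient.inductionOn with | h a => ?_
    induction b using Quotient.inductionOn with | h b => ?_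
    exact (h a).trans (h b).symm
  intro f
  obtain ⟨F, rfl⟩ := exists_lift HL f
  obtain ⟨h, hh⟩ := exists_bdry hφ F.2
  obtain ⟨F', hF', e⟩ := adjust hφ.continuous F.2 hh (hK h hh.1)
  obtain ⟨u, hu⟩ := hG F' hF'
  rw [loop_htpy]
  have := hu.comp_left (φ := (QuotientGroup.mk : G → G ⧸ φ.range)) continuous_qmk
  simp only [e] at this
  have e2 : (fun y => QuotientGroup.mk (φ (u y)) : (Fin (m + 1) → I) → G ⧸ φ.range) =
      fun _ => QuotientGroup.mk 1 := by
    ext y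
    rw [QuotientGroup.eq]
    simp
  rw [e2] at this
  exact this

end fib

end

section

section fib

variable {G K : Type} [Group G] [TopologicalSpace G] [IsTopologicalGroup G]
  [Group K] [TopologicalSpace K] [IsTopologicalGroup K] {φ : K →* G} {m : ℕ}

/-- If the loop of `F` is null-homotopic in the coset space, then its boundary is null-homotopic
in `K`. -/
theorem bdry_null_of_loop (HL : HLP φ) (hφ : Topology.IsEmbedding φ) (F : LfG φ m)
    {h : (Fin m → I) → K} (hh : IsBdry φ F.1 h)
    (hn : Htpy (Bd (m + 1)) (fun x => (QuotientGroup.mk (F.1 x) : G ⧸ φ.range))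
      fun _ => QuotientGroup.mk 1) : Null (Bd m) h := by
  obtain ⟨L, hL, L0, L1, L2⟩ := hn
  have L3 : ∀ s, ∀ x ∈ Bd (m + 1), L (s, x) = QuotientGroup.mk 1 := fun s x hx => by
    rw [L2 s x hx]; exact F.2.mk_bd hx
  obtain ⟨g, g1, g2, g3, g4⟩ := HL (I × (Fin m → I)) (fun p => L (p.1.1, sn m (p.1.2, p.2)))
    (hL.comp (by have := continuous_sn m; fun_prop))
    fun y => L3 _ _ ((sn_bd _ _).2 (Or.inr (Or.inl rfl)))
  obtain ⟨z, z1, z2, z3⟩ := range_lift hφ (g := fun q : I × (Fin m → I) => g (q, 1))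
    (by fun_prop) fun q => by
      have := g3 (q, 1)
      simp only at this
      rw [L3 _ _ ((sn_bd _ _).2 (Or.inr (Or.inr rfl))), QuotientGroup.eq] at this
      simpa using this
  have hgb : ∀ s, ∀ y ∈ Bd m, ∀ t, g ((s, y), t) = 1 := fun s y hy =>
    g4 (s, y) fun t => L3 _ _ ((sn_bd _ _).2 (Or.inl hy))
  have hz : Null (Bd m) fun y => z (0, y) := by
    refine ⟨z, z1, fun y => rfl, fun y => z3 _ (g4 _ (fun t => L1 _) _), fun t y hy => ?_⟩
    show z (t, y) = z (0, y)
    rw [z3 _ (hgb t y hy 1), z3 _ (hgb 0 y hy 1)]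
  have hFc := F.2.cont
  have hsc := continuous_sn m
  obtain ⟨e, e1, e2, e3⟩ := range_lift hφ
    (g := fun p : (Fin m → I) × I => (F.1 (sn m p))⁻¹ * g ((0, p.1), p.2)) (by fun_prop)
    fun p => by
      have := g3 ((0, p.1), p.2)
      simp only at this
      rw [L0, QuotientGroup.eq] at this
      exact this
  have he : Null (Bd m) fun y => (h y)⁻¹ * z (0, y) := by
    refine ⟨fun q => e (q.2, σ q.1), by fun_prop, fun y => hφ.injective ?_, fun y => e3 _ ?_,
      fun t y hy => ?_⟩
    · simp [e2, z2, hh.2]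
    · rw [F.2.zero _ (by simp [sn]), symm_one, g2]; simp
    · have hy' := hy
      obtain ⟨i, hi⟩ := hy
      show e (y, σ t) = (h y)⁻¹ * z (0, y)
      rw [hh.1.bd y hy', z3 _ (hgb 0 y hy' 1)]
      rw [e3 _ (by rw [F.2.side _ ⟨i, by simpa [sn] using hi⟩, hgb 0 y hy']; simp)]
      simp
  exact (htpy_of_null hh.1.cont he).trans hz

/-- The reparametrization `t ↦ min 1 (2t)` of the interval. -/
noncomputable def repA (t : I) : I := Set.projIcc 0 1 zero_le_one (2 * (t : ℝ))
/-- The reparametrization `t ↦ max 0 (2t - 1)` of the interval. -/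
noncomputable def repB (t : I) : I := Set.projIcc 0 1 zero_le_one (2 * (t : ℝ) - 1)

/-- The linear homotopy between a reparametrization and the identity. -/
noncomputable def lin (r : I → I) (s t : I) : I :=
  Set.projIcc 0 1 zero_le_one ((1 - (s : ℝ)) * t + s * r t)

theorem continuous_lin {r : I → I} (hr : Continuous r) : Continuous fun p : I × I => lin r p.1 p.2 :=
  continuous_projIcc.comp (by fun_prop)

theorem lin_zero (r : I → I) (t : I) : lin r 0 t = t := by simp [lin]
theorem lin_one (r : I → I) (t : I) : lin r 1 t = r t := by simp [lin]
theorem lin_fix {r : I → I} {t : I} (h : r t = t) (s : I) : lin r s t = t := by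
  have : (1 - (s : ℝ)) * t + s * r t = t := by rw [h]; ring
  rw [lin, this, Set.projIcc_val]

theorem continuous_repA : Continuous repA := continuous_projIcc.comp (by fun_prop)
theorem continuous_repB : Continuous repB := continuous_projIcc.comp (by fun_prop)

theorem repA_fix {t : I} (h : t = 0 ∨ t = 1) : repA t = t := by
  rcases h with rfl | rfl
  · simp [repA]
  · simp [repA, Set.projIcc_of_right_le]

theorem repB_fix {t : I} (h : t = 0 ∨ t = 1) : repB t = t := by
  rcases h with rfl | rfl
  · simp [repB, Set.projIcc_of_le_left]
  · simp only [repB, Set.Icc.coe_one]; norm_num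

theorem Lf.reparam {F : (Fin (m + 1) → I) → G} (h : Lf φ m F) {r : I → I} (hr : Continuous r)
    (h01 : ∀ t : I, t = 0 ∨ t = 1 → r t = t) (i : Fin m) :
    Lf φ m fun x => F (Function.update x i.castSucc (r (x i.castSucc))) := by
  have hne : Fin.last m ≠ i.castSucc := (Fin.castSucc_lt_last i).ne'
  refine ⟨h.cont.comp (continuous_id.update _ (hr.comp (continuous_apply _))),
    fun x hx => h.zero _ ?_, fun x hx => h.side _ ?_, fun x hx => h.one _ ?_⟩
  · rwa [Function.update_of_ne hne]
  · obtain ⟨j, hj⟩ := hx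
    refine ⟨j, ?_⟩
    by_cases hji : j = i
    · subst hji
      rw [Function.update_self, h01 _ hj]; exact hj
    · rwa [Function.update_of_ne (fun e => hji (Fin.castSucc_injective _ e))]
  · rwa [Function.update_of_ne hne]

/-- The class in `π_{m+1}(G ⧸ φ.range)` of an element of `LfG`. -/
def cls (F : LfG φ m) : HomotopyGroup (Fin (m + 1)) (G ⧸ φ.range) (QuotientGroup.mk 1) :=
  ⟦loop F⟧

/-- The pointwise product of lifts represents the product in the homotopy group. -/
theorem loop_mul [Nonempty (Fin (m + 1))] (i : Fin m) (F F' : LfG φ m) :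
    cls (F * F') = cls F * cls F' := by
  refine Eq.trans ?_ (HomotopyGroup.mul_spec (i := i.castSucc) (p := loop F) (q := loop F')).symm
  refine loop_htpy.2 ?_
  have hlin : ∀ {r : I → I}, (∀ t : I, t = 0 ∨ t = 1 → r t = t) → ∀ s (t : I), t = 0 ∨ t = 1 →
      lin r s t = t := fun h s t ht => lin_fix (h t ht) s
  have hup : ∀ {r : I → I}, Continuous r → Continuous fun p : I × (Fin (m + 1) → I) =>
      Function.update p.2 i.castSucc (lin r p.1 (p.2 i.castSucc)) := fun hr =>
    continuous_snd.update _ ((continuous_lin hr).comp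
      (by fun_prop : Continuous fun p : I × (Fin (m + 1) → I) => (p.1, p.2 i.castSucc)))
  have hs : ∀ {r : I → I}, Continuous r → ∀ s, Continuous (lin r s) := fun hr s =>
    (continuous_lin hr).comp (by fun_prop : Continuous fun t : I => (s, t))
  refine ⟨fun p => QuotientGroup.mk
    (F.1 (Function.update p.2 i.castSucc (lin repB p.1 (p.2 i.castSucc))) *
      F'.1 (Function.update p.2 i.castSucc (lin repA p.1 (p.2 i.castSucc)))),
    continuous_qmk.comp ((F.2.cont.comp (hup continuous_repB)).mul
      (F'.2.cont.comp (hup continuous_repA))), fun x => ?_, fun x => ?_, fun s x hx => ?_⟩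
  · simp only [lin_zero, Function.update_eq_self]
    rfl
  · simp only [lin_one]
    show _ = if (x i.castSucc : ℝ) ≤ 1 / 2
      then loop F' (Function.update x i.castSucc (repA (x i.castSucc)))
      else loop F (Function.update x i.castSucc (repB (x i.castSucc)))
    split_ifs with hx
    · have : repB (x i.castSucc) = 0 := Set.projIcc_of_le_left _ (by linarith)
      rw [F.2.side _ ⟨i, Or.inl (by rw [Function.update_self, this])⟩, one_mul]
      rfl
    · have : repA (x i.castSucc) = 1 := Set.projIcc_of_right_le _ (by linarith)
      rw [F'.2.side _ ⟨i, Or.inr (by rw [Function.update_self, this])⟩, mul_one]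
      rfl
  · have h1 := F.2.reparam (hs continuous_repB s) (hlin (fun t => repB_fix) s) i
    have h2 := F'.2.reparam (hs continuous_repA s) (hlin (fun t => repA_fix) s) i
    refine ((LfG φ m).mul_mem h1 h2 : Lf φ m _).mk_bd hx |>.trans ?_
    exact ((F * F').2.mk_bd hx).symm

/-- The long exact sequence, in degrees where `G` has trivial homotopy and the kernel of `φ` on
homotopy one degree lower is infinite cyclic, generated by `b`. -/
theorem gr_cyclic [Nonempty (Fin (m + 1))] (i : Fin m) (HL : HLP φ) (hφ : Topology.IsEmbedding φ)
    (hG : ∀ F : (Fin (m + 1) → I) → G, Rel (Bd (m + 1)) F → Null (Bd (m + 1)) F)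
    {b : (Fin m → I) → K} (hb : Rel (Bd m) b) (hbn : Null (Bd m) fun y => φ (b y))
    (hgen : ∀ h : (Fin m → I) → K, Rel (Bd m) h → (Null (Bd m) fun y => φ (h y)) →
      ∃ j : ℤ, Htpy (Bd m) h fun y => b y ^ j)
    (hfree : ∀ j : ℤ, (Null (Bd m) fun y => b y ^ j) → j = 0) :
    Nonempty (HomotopyGroup (Fin (m + 1)) (G ⧸ φ.range) (QuotientGroup.mk 1) ≃*
      Multiplicative ℤ) := by
  let Θ : LfG φ m →* HomotopyGroup (Fin (m + 1)) (G ⧸ φ.range) (QuotientGroup.mk 1) :=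
    MonoidHom.mk' cls (loop_mul i)
  have hΘ1 : ∀ F h, IsBdry φ F.1 h → (Θ F = 1 ↔ Null (Bd m) h) := by
    intro F h hh
    have e1 : Θ F = 1 ↔ Htpy (Bd (m + 1)) (loop F)
        (GenLoop.const : GenLoop (Fin (m + 1)) (G ⧸ φ.range) (QuotientGroup.mk 1)) := by
      rw [← loop_htpy]; rfl
    rw [e1]
    refine ⟨bdry_null_of_loop HL hφ F hh, fun hn => ?_⟩
    obtain ⟨F', hF', e⟩ := adjust hφ.continuous F.2 hh hn
    have := (hG F' hF').comp_left (φ := (QuotientGroup.mk : G → G ⧸ φ.range)) continuous_qmk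
    simp only [e] at this
    exact this
  obtain ⟨F0, hF0, hb0⟩ := null_bdry hb hbn
  let F1 : LfG φ m := ⟨F0, hF0⟩
  have hpow : ∀ j : ℤ, IsBdry φ (F1 ^ j).1 fun y => b y ^ j := fun j =>
    ⟨hb.zpow j, fun y => by rw [map_zpow, hb0.2 y]; rfl⟩
  refine ⟨(MulEquiv.ofBijective (zpowersHom _ (Θ F1)) ⟨?_, fun x => ?_⟩).symm⟩
  · rw [injective_iff_map_eq_one]
    intro j hj
    rw [zpowersHom_apply, ← map_zpow, hΘ1 _ _ (hpow _)] at hj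
    exact Multiplicative.toAdd.injective (hfree _ hj)
  · obtain ⟨F, hF⟩ : ∃ F, Θ F = x := by
      induction x using Quotient.inductionOn with | h f => ?_
      obtain ⟨F, rfl⟩ := exists_lift HL f
      exact ⟨F, rfl⟩
    obtain ⟨h, hh⟩ := exists_bdry hφ F.2
    obtain ⟨j, hj⟩ := hgen h hh.1 (bdry_null F.2 hh)
    refine ⟨Multiplicative.ofAdd j, ?_⟩
    rw [zpowersHom_apply, toAdd_ofAdd, ← map_zpow, ← hF, eq_comm, ← inv_mul_eq_one, ← map_inv,
      ← map_mul]
    refine (hΘ1 _ (fun y => (h y)⁻¹ * b y ^ j) ⟨hh.1.inv.mul (hb.zpow j), fun y => ?_⟩).2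
      (null_of_htpy hj)
    rw [map_mul, map_inv, hh.2, (hpow j).2]
    rfl

end fib

end

section

/-! ### The homotopy groups of the matrix Grassmannian -/

theorem Htpy.pair {Y A B : Type*} [TopologicalSpace Y] [TopologicalSpace A] [TopologicalSpace B]
    {Y0 : Set Y} {f f' : Y → A} {g g' : Y → B} (h : Htpy Y0 f f') (h' : Htpy Y0 g g') :
    Htpy Y0 (fun y => (f y, g y)) fun y => (f' y, g' y) := by
  obtain ⟨H, hH, h0, h1, h2⟩ := h
  obtain ⟨H', hH', h0', h1', h2'⟩ := h'
  exact ⟨fun p => (H p, H' p), by fun_prop, by simp [h0, h0'], by simp [h1, h1'],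
    fun t y hy => by simp [h2 t y hy, h2' t y hy]⟩

section main

variable {k l : ℕ} {φ : (SU k × SU l) →* SU (k * l)}

theorem gr_hlp (hφ : ∀ (A : SU k) (B : SU l),
      SU.toMat (φ (A, B)) = kron (SU.toMat A) (SU.toMat B))
    (hk : 2 ≤ k) (hl : 2 ≤ l) (hgcd : Nat.gcd k l = 1) : HLP φ := by
  intro Y _ _ f hf h0
  obtain ⟨g, g1, g2, g3, g4⟩ := gr_lift φ hφ hk hl hgcd f hf
  refine ⟨g, g1, g2, fun p => ?_, fun y hy => g4 y fun t => by rw [hy, hy]⟩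
  have := g3 p.1 p.2 1 (h0 _)
  rwa [mul_one] at this

theorem Rel.fst {Y : Type*} [TopologicalSpace Y] {Y0 : Set Y} {h : Y → SU k × SU l}
    (hh : Rel Y0 h) : Rel Y0 fun y => (h y).1 :=
  ⟨continuous_fst.comp hh.cont, fun y hy => by rw [hh.bd y hy]; rfl⟩

theorem Rel.snd {Y : Type*} [TopologicalSpace Y] {Y0 : Set Y} {h : Y → SU k × SU l}
    (hh : Rel Y0 h) : Rel Y0 fun y => (h y).2 :=
  ⟨continuous_snd.comp hh.cont, fun y hy => by rw [hh.bd y hy]; rfl⟩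

/-- In these degrees the long exact sequence gives the trivial group.  In odd degrees at least three,
surjectivity of `(x, y) ↦ l x + k y` is the Bézout identity. -/
theorem gr_odd (hφ : ∀ (A : SU k) (B : SU l),
      SU.toMat (φ (A, B)) = kron (SU.toMat A) (SU.toMat B))
    (hk : 2 ≤ k) (hl : 2 ≤ l) (hgcd : Nat.gcd k l = 1) {m : ℕ} (hmk : m + 1 < 2 * k)
    (hml : m + 1 < 2 * l) (hm : ¬ Even (m + 1) ∨ m + 1 = 2) :
    Subsingleton (HomotopyGroup (Fin (m + 1)) (SU (k * l) ⧸ φ.range) (QuotientGroup.mk 1)) := by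
  have hkl : k ≤ k * l := Nat.le_mul_of_pos_right k (by omega)
  have hev : Even m ∨ m = 1 := by
    rcases hm with h | h
    · rw [Nat.even_add_one, not_not] at h; exact Or.inl h
    · exact Or.inr (by omega)
  refine gr_trivial (gr_hlp hφ hk hl hgcd) (phi_emb φ hφ hk hl hgcd).isEmbedding
    (fun h hh => ?_) fun F hF => ?_
  · exact (su_even (by omega) hev hh.fst).pair (su_even (by omega) hev hh.snd)
  · by_cases hs : Even (m + 1) ∨ m + 1 = 1
    · refine ⟨fun _ => 1, ?_⟩
      simpa using su_even (by omega) hs hF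
    · rw [not_or] at hs
      have h3 : 3 ≤ m + 1 := by
        by_contra h
        have : m + 1 = 2 := by omega
        exact hs.1 (this ▸ even_two)
      obtain ⟨g, hg⟩ := su_odd hs.1 h3
      have gk := hg k hmk
      have gl := hg l hml
      have gkl := hg (k * l) (by omega)
      obtain ⟨j, hj⟩ := gkl.2.1 F hF
      have hbez : (1 : ℤ) = k * Nat.gcdA k l + l * Nat.gcdB k l := by
        rw [← Nat.gcd_eq_gcd_ab, hgcd]; rfl
      have hp := kron_pow hmk hml φ hφ gk.1 gl.1 gkl.1 (gk.2.2.2 _ (by omega))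
        (gl.2.2.2 _ (by omega)) (j * Nat.gcdB k l) (j * Nat.gcdA k l)
      have e : (l * (j * Nat.gcdB k l) + k * (j * Nat.gcdA k l) : ℤ) = j := by
        linear_combination (-j) * hbez
      rw [e] at hp
      exact ⟨_, hj.trans hp.symm⟩

/-- In even degrees at least four, the homotopy group is the kernel of `(x, y) ↦ l x + k y`, which is
infinite cyclic with generator `(k, -l)`. -/
theorem gr_even (hφ : ∀ (A : SU k) (B : SU l),
      SU.toMat (φ (A, B)) = kron (SU.toMat A) (SU.toMat B))
    (hk : 2 ≤ k) (hl : 2 ≤ l) (hgcd : Nat.gcd k l = 1) {m : ℕ} [Nonempty (Fin (m + 1))]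
    (hmk : m + 1 < 2 * k)
    (hml : m + 1 < 2 * l) (hm : Even (m + 1)) (h4 : 4 ≤ m + 1) :
    Nonempty (HomotopyGroup (Fin (m + 1)) (SU (k * l) ⧸ φ.range) (QuotientGroup.mk 1) ≃*
      Multiplicative ℤ) := by
  have hkl : k ≤ k * l := Nat.le_mul_of_pos_right k (by omega)
  have hemb := (phi_emb φ hφ hk hl hgcd).isEmbedding
  have hodd : ¬ Even m := by rwa [Nat.even_add_one] at hm
  obtain ⟨g, hg⟩ := su_odd hodd (by omega)
  have gk := hg k (by omega)
  have gl := hg l (by omega)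
  have gkl := hg (k * l) (by omega)
  have hp := kron_pow (by omega) (by omega) φ hφ gk.1 gl.1 gkl.1 (gk.2.2.2 _ (by omega))
    (gl.2.2.2 _ (by omega))
  refine gr_cyclic ⟨0, by omega⟩ (gr_hlp hφ hk hl hgcd) hemb
    (fun F hF => su_even (by omega) (Or.inl hm) hF)
    (b := fun y => (g k y ^ (k : ℤ), g l y ^ (-l : ℤ))) ⟨?_, fun y hy => ?_⟩ ?_
    (fun h hh hn => ?_) fun j hj => ?_
  · exact (gk.1.zpow _).cont.prodMk (gl.1.zpow _).cont
  · rw [gk.1.bd y hy, gl.1.bd y hy]; simp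
  · have := hp k (-l)
    have e : (l * k + k * (-l) : ℤ) = 0 := by ring
    simpa only [e, zpow_zero] using this
  · obtain ⟨x, hx⟩ := gk.2.1 _ hh.fst
    obtain ⟨y, hy⟩ := gl.2.1 _ hh.snd
    have h1 := hx.pair hy
    have h2 := (h1.comp_left hemb.continuous).trans (hp x y)
    have h3 := gkl.2.2.1 _ (h2.symm.trans hn)
    obtain ⟨j, rfl⟩ : (k : ℤ) ∣ x := by
      have hc : IsCoprime (k : ℤ) (l : ℤ) := Nat.isCoprime_iff_coprime.2 hgcd
      exact hc.dvd_of_dvd_mul_left ⟨-y, by linear_combination h3⟩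
    have hy2 : y = -l * j := by
      have hk0 : (k : ℤ) ≠ 0 := by exact_mod_cast (by omega : k ≠ 0)
      exact mul_left_cancel₀ hk0 (by linear_combination h3)
    refine ⟨j, ?_⟩
    rw [hy2] at h1
    simp only [zpow_mul] at h1
    exact h1
  · have h1 := hj.comp_left (φ := (Prod.fst : SU k × SU l → SU k)) continuous_fst
    have h2 : Null (Bd m) fun y => g k y ^ (k * j : ℤ) := by
      simp only [zpow_mul]
      exact h1
    have h3 := gk.2.2.1 _ h2
    rcases mul_eq_zero.1 h3 with h | h
    · have : k = 0 := by exact_mod_cast h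
      omega
    · exact h

end main

end

end MG

/-- Let `k, l ≥ 2` with `gcd(k,l) = 1`, let `φ` be the Kronecker homomorphism
`SU(k) × SU(l) → SU(kl)`, `H = im φ`, and let `Gr_{k,l} = SU(kl) ⧸ H` be the matrix
Grassmannian, with the quotient topology.  Then for `1 ≤ d < 2·min(k,l)`, the homotopy
group `π_d` of `Gr_{k,l}` at the identity coset is infinite cyclic if `d` is even and
`d ≥ 4`, and trivial if `d` is odd or `d = 2`. -/
theorem homotopyGroups_matrixGrassmannian (k l : ℕ) (hk : 2 ≤ k) (hl : 2 ≤ l)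
    (hgcd : Nat.gcd k l = 1)
    (φ : (SU k × SU l) →* SU (k * l))
    (hφ : ∀ (A : SU k) (B : SU l), SU.toMat (φ (A, B)) = kron (SU.toMat A) (SU.toMat B)) :
    ∀ d : ℕ, (hd : 1 ≤ d) → d < 2 * min k l →
      letI : Nonempty (Fin d) := ⟨⟨0, hd⟩⟩
      ((Even d ∧ 4 ≤ d) →
        Nonempty (HomotopyGroup (Fin d) (SU (k * l) ⧸ φ.range)
          (QuotientGroup.mk 1) ≃* Multiplicative ℤ)) ∧
      ((¬ Even d ∨ d = 2) →
        Subsingleton (HomotopyGroup (Fin d) (SU (k * l) ⧸ φ.range)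
          (QuotientGroup.mk 1))) := by
  intro d hd hdm
  obtain ⟨m, rfl⟩ : ∃ m, d = m + 1 := ⟨d - 1, by omega⟩
  exact ⟨fun h => MG.gr_even hφ hk hl hgcd (by omega) (by omega) h.1 h.2,
    fun h => MG.gr_odd hφ hk hl hgcd (by omega) (by omega) h⟩
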